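/- arXiv:1001.0432 — 2 statements merged into one kernel-verified Lean document; each statement's English description precedes it below -/
import Mathlib

section
/- (G. Wilson: connectedness of the Calogero–Moser space.) For every n ≥ 1, the set {(X, Y) ∈ Mat_n(ℂ) × Mat_n(ℂ) : rank(XY − YX + I) = 1} is a nonempty connected subset of Mat_n(ℂ) × Mat_n(ℂ) (with its standard topology). Equivalently, the Calogero–Moser space C_n — the quotient of this set by simultaneous conjugation by GL_n(ℂ) — is connected. -/
/-!
Factor the rank-one matrix as `[X, Y] + 1 = v * w` and call `(X, Y, v, w)` regular if `X` has
distinct eigenvalues. In an eigenbasis of `X`, rescaled so that `v = w = 1`, the off-diagonal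
entries of `Y` are `(xᵢ - xⱼ)⁻¹` (Moser's matrix) and the diagonal ones are free. Hence the regular
locus is the continuous image of the set of triples of an invertible matrix, a vector with distinct
entries and an arbitrary vector. That set is connected, because over `ℂ` any two points of
the complement of the zero set of a polynomial lie on a complex line that meets the zero set in
finitely many points.

It remains to see that regular data are dense, by induction on the size. If `X` has two distinct
eigenvalues, then after a scalar shift the Fitting decomposition makes `X` block diagonal with
blocks without common eigenvalue. The off-diagonal blocks of `Y` then solve Sylvester equations, so
they depend continuously on two smaller data, which are limits of regular data by induction.
Otherwise normalize `tr X = tr Y = 0`. If `(X, Y, v, w)` is not in the closure of the regular locus,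
then `X + t Z` is nilpotent for all small `t` and all traceless `Z` commuting with `Y`, since
`X + t Z` still solves the equation with the same `Y`, `v`, `w`. Comparing coefficients in
`tr (X + t Z) ^ k = 0` for `Z = Y` and `Z = Y² - c` yields `tr [X, Y]² = 0`, whereas the equation
forces `tr [X, Y]² = n² - n`, which is nonzero for `n ≥ 2`.
-/

open Matrix Polynomial Topology
open scoped Kronecker

section Sylvester

variable {ι κ R K : Type*} [Fintype ι] [DecidableEq ι] [Fintype κ] [DecidableEq κ]
  [CommRing R] [Field K]

/-- The matrix of the Sylvester operator `C ↦ A * C - C * D` in the coordinates `Matrix.vec`. -/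
def sylvesterMatrix {ι κ R : Type*} [DecidableEq ι] [DecidableEq κ] [CommRing R]
    (A : Matrix ι ι R) (D : Matrix κ κ R) : Matrix (κ × ι) (κ × ι) R :=
  1 ⊗ₖ A - Dᵀ ⊗ₖ 1

theorem sylvesterMatrix_mulVec_vec (A : Matrix ι ι R) (D : Matrix κ κ R) (C : Matrix ι κ R) :
    sylvesterMatrix A D *ᵥ vec C = vec (A * C - C * D) := by
  simp [sylvesterMatrix, Matrix.sub_mulVec, kronecker_mulVec_vec]

theorem det_sylvesterMatrix_ne_zero_iff {A : Matrix ι ι K} {D : Matrix κ κ K} :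
    (sylvesterMatrix A D).det ≠ 0 ↔ ∀ C : Matrix ι κ K, A * C = C * D → C = 0 := by
  rw [Ne, ← exists_mulVec_eq_zero_iff, vec_bijective.surjective.exists]
  simp only [sylvesterMatrix_mulVec_vec, ne_eq, vec_eq_zero_iff, sub_eq_zero]
  grind

theorem sylvesterMatrix_swap {ι κ R : Type*} [DecidableEq ι] [DecidableEq κ] [CommRing R]
    (A : Matrix ι ι R) (D : Matrix κ κ R) :
    sylvesterMatrix D A =
      -(reindex (Equiv.prodComm κ ι) (Equiv.prodComm κ ι) (sylvesterMatrix A D)ᵀ) := by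
  ext ⟨i, j⟩ ⟨i', j'⟩
  simp [sylvesterMatrix, one_apply, eq_comm, mul_comm]

theorem det_sylvesterMatrix_ne_zero_comm {A : Matrix ι ι K} {D : Matrix κ κ K} :
    (sylvesterMatrix D A).det ≠ 0 ↔ (sylvesterMatrix A D).det ≠ 0 := by
  rw [sylvesterMatrix_swap A D, det_neg, det_reindex_self, det_transpose]
  simp

theorem det_sylvesterMatrix_ne_zero_of_isNilpotent_of_isUnit {A : Matrix ι ι K}
    {D : Matrix κ κ K} (hA : IsNilpotent A) (hD : IsUnit D) : (sylvesterMatrix A D).det ≠ 0 := by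
  rw [det_sylvesterMatrix_ne_zero_iff]
  intro C hC
  have pow_intertwine (k : ℕ) : A ^ k * C = C * D ^ k := by
    induction k with
    | zero => simp
    | succ k ih => rw [pow_succ, Matrix.mul_assoc, hC, ← Matrix.mul_assoc, ih, Matrix.mul_assoc,
        ← pow_succ]
  obtain ⟨k, hk⟩ := hA
  obtain ⟨E, hE⟩ := (hD.pow k).exists_right_inv
  calc C = C * D ^ k * E := by rw [Matrix.mul_assoc, hE, Matrix.mul_one]
    _ = 0 := by rw [← pow_intertwine, hk, Matrix.zero_mul, Matrix.zero_mul]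

/-- The solution `C` of the Sylvester equation `A * C - C * D = R`; a junk value when
`sylvesterMatrix A D` is singular. -/
noncomputable def sylvesterSolution (A : Matrix ι ι K) (D : Matrix κ κ K) (R : Matrix ι κ K) :
    Matrix ι κ K :=
  Matrix.of fun i j => ((sylvesterMatrix A D)⁻¹ *ᵥ vec R) (j, i)

theorem eq_sylvesterSolution_iff {A : Matrix ι ι K} {D : Matrix κ κ K} {C R : Matrix ι κ K}
    (h : (sylvesterMatrix A D).det ≠ 0) :
    C = sylvesterSolution A D R ↔ A * C - C * D = R := by
  have vec_solution : vec (sylvesterSolution A D R) = (sylvesterMatrix A D)⁻¹ *ᵥ vec R := rfl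
  have hunit := h.isUnit
  rw [← vec_inj, vec_solution, ← vec_inj, ← sylvesterMatrix_mulVec_vec]
  constructor
  · intro hC
    rw [hC, mulVec_mulVec, mul_nonsing_inv _ hunit, one_mulVec]
  · intro hR
    rw [← hR, mulVec_mulVec, nonsing_inv_mul _ hunit, one_mulVec]

section Topology

variable [TopologicalSpace K] [IsTopologicalDivisionRing K]

theorem continuous_sylvesterMatrix {ι κ R : Type*} [DecidableEq ι] [DecidableEq κ] [CommRing R]
    [TopologicalSpace R] [IsTopologicalRing R] :
    Continuous fun q : Matrix ι ι R × Matrix κ κ R => sylvesterMatrix q.1 q.2 := by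
  refine continuous_matrix fun i j => ?_
  simp only [sylvesterMatrix, Matrix.sub_apply, kroneckerMap_apply, transpose_apply]
  fun_prop

theorem continuousAt_matrix_inv_of_det_ne_zero {A : Matrix ι ι K} (h : A.det ≠ 0) :
    ContinuousAt Inv.inv A :=
  continuousAt_matrix_inv A <| by
    simpa only [Ring.inverse_eq_inv'] using continuousAt_inv₀ h

theorem continuousAt_sylvesterSolution {T : Type*} [TopologicalSpace T] {A : T → Matrix ι ι K}
    {D : T → Matrix κ κ K} {R : T → Matrix ι κ K} {t : T} (hA : ContinuousAt A t)
    (hD : ContinuousAt D t) (hR : ContinuousAt R t) (h : (sylvesterMatrix (A t) (D t)).det ≠ 0) :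
    ContinuousAt (fun t => sylvesterSolution (A t) (D t) (R t)) t := by
  have hmatrix : ContinuousAt (fun t => sylvesterMatrix (A t) (D t)) t :=
    continuous_sylvesterMatrix.continuousAt.comp' (hA.prodMk hD)
  have hinv : ContinuousAt (fun t => (sylvesterMatrix (A t) (D t))⁻¹) t :=
    ContinuousAt.comp (continuousAt_matrix_inv_of_det_ne_zero h) hmatrix
  have hmul : Continuous fun p : Matrix (κ × ι) (κ × ι) K × Matrix ι κ K => p.1 *ᵥ vec p.2 :=
    continuous_fst.matrix_mulVec (by unfold vec; fun_prop)
  have hsol := hmul.continuousAt.comp' (hinv.prodMk hR)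
  exact continuousAt_pi.2 fun i => continuousAt_pi.2 fun j => continuousAt_pi.1 hsol (j, i)

end Topology

end Sylvester

section SimpleSpectrum

variable {ι κ K : Type*} [Fintype ι] [Fintype κ] [Field K]

/-- `X` has `card ι` distinct eigenvalues in `K`, listed by an injective family `x`. -/
def HasSimpleSpectrum (X : Matrix ι ι K) : Prop :=
  ∃ x : ι → K, Function.Injective x ∧ ∀ i, ∃ u ≠ 0, X *ᵥ u = x i • u

theorem hasSimpleSpectrum_of_subsingleton [Subsingleton ι] (X : Matrix ι ι K) :
    HasSimpleSpectrum X := by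
  refine ⟨fun i => X i i, Function.injective_of_subsingleton _, fun i => ⟨1, ?_, ?_⟩⟩
  · exact fun h => one_ne_zero (congrFun h i)
  · ext j
    simp [mulVec, dotProduct, Subsingleton.elim j i, Fintype.sum_subsingleton _ i]

variable [DecidableEq ι] [DecidableEq κ]

theorem hasSimpleSpectrum_diagonal {x : ι → K} (hx : Function.Injective x) :
    HasSimpleSpectrum (diagonal x) :=
  ⟨x, hx, fun i => ⟨Pi.single i 1, by simp, by simp [← Pi.single_smul]⟩⟩

theorem HasSimpleSpectrum.conj {X : Matrix κ κ K} (hX : HasSimpleSpectrum X) {P : Matrix ι κ K}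
    {Q : Matrix κ ι K} (hPQ : P * Q = 1) (hQP : Q * P = 1) : HasSimpleSpectrum (P * X * Q) := by
  obtain ⟨x, hx, hu⟩ := hX
  have hcard : Fintype.card ι = Fintype.card κ :=
    card_eq_of_linearEquiv K (toLin'OfInv hPQ hQP)
  let e := Fintype.equivOfCardEq hcard
  refine ⟨x ∘ e, hx.comp e.injective, fun i => ?_⟩
  obtain ⟨u, hu0, hXu⟩ := hu (e i)
  have hQPu : Q *ᵥ (P *ᵥ u) = u := by rw [mulVec_mulVec, hQP, one_mulVec]
  refine ⟨P *ᵥ u, fun h => hu0 ?_, ?_⟩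
  · rw [← hQPu, h, mulVec_zero]
  · rw [← mulVec_mulVec, hQPu, ← mulVec_mulVec, hXu, mulVec_smul, Function.comp_apply]

theorem HasSimpleSpectrum.add_smul_one {X : Matrix ι ι K} (hX : HasSimpleSpectrum X) (c : K) :
    HasSimpleSpectrum (X + c • 1) := by
  obtain ⟨x, hx, hu⟩ := hX
  refine ⟨fun i => x i + c, fun i j h => hx (add_right_cancel h), fun i => ?_⟩
  obtain ⟨u, hu0, hXu⟩ := hu i
  exact ⟨u, hu0, by rw [add_mulVec, hXu, smul_mulVec, one_mulVec, add_smul]⟩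

theorem exists_eigenvector_iff_det_sub_eq_zero {X : Matrix ι ι K} {μ : K} :
    (∃ u ≠ 0, X *ᵥ u = μ • u) ↔ (X - μ • 1).det = 0 := by
  simp [← exists_mulVec_eq_zero_iff, sub_mulVec, smul_mulVec, sub_eq_zero]

theorem eigenvalue_ne_of_det_sylvesterMatrix_ne_zero {A : Matrix ι ι K} {D : Matrix κ κ K}
    (h : (sylvesterMatrix A D).det ≠ 0) {μ ν : K} (hμ : ∃ u ≠ 0, A *ᵥ u = μ • u)
    (hν : ∃ u ≠ 0, D *ᵥ u = ν • u) : μ ≠ ν := by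
  rintro rfl
  obtain ⟨u, hu0, hu⟩ := hμ
  obtain ⟨w, hw0, hw⟩ := exists_vecMul_eq_zero_iff.2 (exists_eigenvector_iff_det_sub_eq_zero.1 hν)
  rw [vecMul_sub, vecMul_smul, vecMul_one, sub_eq_zero] at hw
  have hC : A * vecMulVec u w = vecMulVec u w * D := by
    rw [mul_vecMulVec, vecMulVec_mul, hu, hw, smul_vecMulVec, vecMulVec_smul]
  obtain ⟨i, hi⟩ := Function.ne_iff.1 hu0
  obtain ⟨j, hj⟩ := Function.ne_iff.1 hw0
  exact mul_ne_zero hi hj (congrFun (congrFun (det_sylvesterMatrix_ne_zero_iff.1 h _ hC) i) j)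

theorem HasSimpleSpectrum.fromBlocks {A : Matrix ι ι K} {D : Matrix κ κ K}
    (hA : HasSimpleSpectrum A) (hD : HasSimpleSpectrum D) (h : (sylvesterMatrix A D).det ≠ 0) :
    HasSimpleSpectrum (fromBlocks A 0 0 D) := by
  obtain ⟨x, hx, hxu⟩ := hA
  obtain ⟨y, hy, hyu⟩ := hD
  refine ⟨Sum.elim x y, hx.sumElim hy fun i j =>
    eigenvalue_ne_of_det_sylvesterMatrix_ne_zero h (hxu i) (hyu j), ?_⟩
  rintro (i | j)
  · obtain ⟨u, hu0, hu⟩ := hxu i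
    refine ⟨Sum.elim u 0, fun h => hu0 (congrArg (· ∘ Sum.inl) h), ?_⟩
    ext (k | k) <;> simp [fromBlocks_mulVec, hu]
  · obtain ⟨u, hu0, hu⟩ := hyu j
    refine ⟨Sum.elim 0 u, fun h => hu0 (congrArg (· ∘ Sum.inr) h), ?_⟩
    ext (k | k) <;> simp [fromBlocks_mulVec, hu]

theorem HasSimpleSpectrum.exists_conj_diagonal {X : Matrix ι ι K} (hX : HasSimpleSpectrum X) :
    ∃ (g : Matrix ι ι K) (x : ι → K), g.det ≠ 0 ∧ Function.Injective x ∧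
      X = g * diagonal x * g⁻¹ := by
  obtain ⟨x, hx, hu⟩ := hX
  choose u hu0 hXu using hu
  have hlin : LinearIndependent K u :=
    Module.End.eigenvectors_linearIndependent' (toLin' X) x hx u fun i =>
      Module.End.hasEigenvector_iff.2 ⟨Module.End.mem_eigenspace_iff.2 (hXu i), hu0 i⟩
  have hunit : IsUnit (of u)ᵀ.det := by
    rw [det_transpose, ← isUnit_iff_isUnit_det]
    exact linearIndependent_rows_iff_isUnit.1 hlin
  refine ⟨(of u)ᵀ, x, hunit.ne_zero, hx, ?_⟩
  have hXg : X * (of u)ᵀ = (of u)ᵀ * diagonal x := by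
    ext i j
    rw [mul_diagonal, mul_comm]
    exact congrFun (hXu j) i
  rw [← hXg, Matrix.mul_assoc, mul_nonsing_inv _ hunit, Matrix.mul_one]

end SimpleSpectrum

section Fitting

variable {ι α β K : Type*} [Fintype ι] [DecidableEq ι] [Fintype α] [DecidableEq α]
  [Fintype β] [DecidableEq β] [Field K]

theorem exists_conj_fromBlocks_of_isCompl (X : Matrix ι ι K) {U W : Submodule K (ι → K)}
    (hUW : IsCompl U W) (hU : ∀ u ∈ U, toLin' X u ∈ U) (hW : ∀ w ∈ W, toLin' X w ∈ W)
    (bU : Module.Basis α K U) (bW : Module.Basis β K W) :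
    ∃ (P : Matrix ι (α ⊕ β) K) (Q : Matrix (α ⊕ β) ι K), P * Q = 1 ∧ Q * P = 1 ∧
      X = P * fromBlocks (LinearMap.toMatrix bU bU ((toLin' X).restrict hU)) 0 0
        (LinearMap.toMatrix bW bW ((toLin' X).restrict hW)) * Q := by
  let e := U.prodEquivOfIsCompl W hUW
  let std := Pi.basisFun K ι
  let b := bU.prod bW
  refine ⟨LinearMap.toMatrix b std e, LinearMap.toMatrix std b e.symm, ?_, ?_, ?_⟩
  · rw [← LinearMap.toMatrix_comp, LinearEquiv.comp_symm, LinearMap.toMatrix_id]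
  · rw [← LinearMap.toMatrix_comp, LinearEquiv.symm_comp, LinearMap.toMatrix_id]
  · have hX : toLin' X = e.toLinearMap ∘ₗ
        (((toLin' X).restrict hU).prodMap ((toLin' X).restrict hW)) ∘ₗ e.symm.toLinearMap := by
      rw [← LinearMap.comp_assoc, LinearEquiv.eq_comp_toLinearMap_symm]
      ext <;> simp [e]
    rw [← LinearMap.toMatrix_prodMap, Matrix.mul_assoc, ← LinearMap.toMatrix_comp,
      ← LinearMap.toMatrix_comp, ← hX]
    exact (LinearMap.toMatrix'_toLin' X).symm

theorem exists_fitting_fromBlocks {N : Matrix ι ι K} (hnil : ¬ IsNilpotent N)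
    (hunit : ¬ IsUnit N) :
    ∃ (a b : ℕ) (P : Matrix ι (Fin a ⊕ Fin b) K) (Q : Matrix (Fin a ⊕ Fin b) ι K)
      (A : Matrix (Fin a) (Fin a) K) (D : Matrix (Fin b) (Fin b) K),
      a < Fintype.card ι ∧ b < Fintype.card ι ∧ P * Q = 1 ∧ Q * P = 1 ∧
      N = P * fromBlocks A 0 0 D * Q ∧ IsNilpotent A ∧ IsUnit D := by
  let f : Module.End K (ι → K) := toLin' N
  have hfnil : ¬ IsNilpotent f := fun h => hnil ((isNilpotent_toLin'_iff N).1 h)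
  have hfunit : ¬ IsUnit f := fun h => hunit (isUnit_toLin'_iff.1 h)
  obtain ⟨k, hk, hcompl⟩ := ((Filter.eventually_ge_atTop 1).and
    f.eventually_isCompl_ker_pow_range_pow).exists
  have hU : ∀ u ∈ LinearMap.ker (f ^ k), f u ∈ LinearMap.ker (f ^ k) := fun u hu => by
    rw [LinearMap.mem_ker, ← Module.End.mul_apply, ← pow_succ, pow_succ', Module.End.mul_apply,
      LinearMap.mem_ker.1 hu, map_zero]
  have hW : ∀ w ∈ LinearMap.range (f ^ k), f w ∈ LinearMap.range (f ^ k) := by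
    rintro _ ⟨u, rfl⟩
    exact ⟨f u, by rw [← Module.End.mul_apply, ← pow_succ, pow_succ', Module.End.mul_apply]⟩
  have hUtop : LinearMap.ker (f ^ k) ≠ ⊤ := fun h => hfnil ⟨k, LinearMap.ker_eq_top.1 h⟩
  have hWtop : LinearMap.range (f ^ k) ≠ ⊤ := fun h => hfunit <|
    (isUnit_pow_iff (by lia)).1 ((LinearMap.isUnit_iff_range_eq_top _).2 h)
  have hnilU : IsNilpotent (f.restrict hU) := ⟨k, by
    ext1 u
    rw [Module.End.pow_restrict]
    exact Subtype.ext u.2⟩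
  have hunitW : IsUnit (f.restrict hW) := by
    have hker_le : LinearMap.ker f ≤ LinearMap.ker (f ^ k) := fun u hu => by
      obtain ⟨m, rfl⟩ := Nat.exists_eq_add_of_le' hk
      rw [LinearMap.mem_ker, pow_succ, Module.End.mul_apply, LinearMap.mem_ker.1 hu, map_zero]
    rw [LinearMap.isUnit_iff_ker_eq_bot, LinearMap.ker_eq_bot']
    exact fun w hw => Subtype.ext <| Submodule.disjoint_def.1 hcompl.disjoint _
      (hker_le (congrArg Subtype.val hw)) w.2
  let bU := Module.finBasis K (LinearMap.ker (f ^ k))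
  let bW := Module.finBasis K (LinearMap.range (f ^ k))
  obtain ⟨P, Q, hPQ, hQP, hN⟩ := exists_conj_fromBlocks_of_isCompl N hcompl hU hW bU bW
  refine ⟨_, _, P, Q, _, _, ?_, ?_, hPQ, hQP, hN, ?_, ?_⟩
  · simpa using Submodule.finrank_lt hUtop
  · simpa using Submodule.finrank_lt hWtop
  · exact hnilU.map (LinearMap.toMatrixAlgEquiv bU)
  · exact hunitW.map (LinearMap.toMatrixAlgEquiv bW)

end Fitting

section CalogeroMoserSet

/-- A quadruple `(X, Y, v, w)` of two square matrices, a column vector and a row vector. The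
rank-one condition on `X * Y - Y * X + 1` is recorded by a chosen factorization `v * w`. -/
abbrev CMDatum (ι R : Type*) := Matrix ι ι R × Matrix ι ι R × (ι → R) × (ι → R)

/-- The quadruples `(X, Y, v, w)` satisfying the Calogero–Moser equation `[X, Y] + 1 = v * w`. -/
def calogeroMoserSet (ι R : Type*) [Fintype ι] [DecidableEq ι] [CommRing R] :
    Set (CMDatum ι R) :=
  {q | q.1 * q.2.1 - q.2.1 * q.1 + 1 = vecMulVec q.2.2.1 q.2.2.2}

/-- The part of the Calogero–Moser set where `X` has simple spectrum. -/
def regularLocus (ι K : Type*) [Fintype ι] [DecidableEq ι] [Field K] : Set (CMDatum ι K) :=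
  {q ∈ calogeroMoserSet ι K | HasSimpleSpectrum q.1}

variable {ι κ R K : Type*} [Fintype ι] [DecidableEq ι] [Fintype κ] [DecidableEq κ]
  [CommRing R] [Field K]

theorem mem_calogeroMoserSet {X Y : Matrix ι ι R} {v w : ι → R} :
    (X, Y, v, w) ∈ calogeroMoserSet ι R ↔ X * Y - Y * X + 1 = vecMulVec v w :=
  Iff.rfl

theorem add_mem_calogeroMoserSet_iff_of_commute {X Y Z : Matrix ι ι R} {v w : ι → R}
    (hZ : Commute Z Y) :
    (X + Z, Y, v, w) ∈ calogeroMoserSet ι R ↔ (X, Y, v, w) ∈ calogeroMoserSet ι R := by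
  rw [mem_calogeroMoserSet, mem_calogeroMoserSet, Matrix.add_mul, Matrix.mul_add, hZ.eq,
    add_sub_add_right_eq_sub]

namespace CMDatum

/-- Transport of a datum along an invertible matrix `P` with inverse `Q`; the two index types
are kept apart so that block decompositions can be used as `P`. -/
def conj (P : Matrix ι κ R) (Q : Matrix κ ι R) (q : CMDatum κ R) : CMDatum ι R :=
  (P * q.1 * Q, P * q.2.1 * Q, P *ᵥ q.2.2.1, q.2.2.2 ᵥ* Q)

/-- The datum `(X + a, Y + b, v, w)`. -/
def shift (a b : R) (q : CMDatum ι R) : CMDatum ι R :=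
  (q.1 + a • 1, q.2.1 + b • 1, q.2.2)

theorem conj_conj {ι κ μ : Type*} [Fintype κ] [Fintype μ] (P : Matrix ι κ R)
    (Q : Matrix κ ι R) (P' : Matrix κ μ R) (Q' : Matrix μ κ R) (q : CMDatum μ R) :
    conj P Q (conj P' Q' q) = conj (P * P') (Q' * Q) q := by
  simp only [conj, mulVec_mulVec, vecMul_vecMul, Matrix.mul_assoc]

theorem conj_conj_cancel {ι κ : Type*} [Fintype ι] [DecidableEq ι] [Fintype κ] {P : Matrix ι κ R}
    {Q : Matrix κ ι R} (hPQ : P * Q = 1) (q : CMDatum ι R) :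
    conj P Q (conj Q P q) = q := by
  rw [conj_conj, hPQ]
  simp only [conj, Matrix.one_mul, Matrix.mul_one, one_mulVec, vecMul_one]

theorem conj_mem_calogeroMoserSet {P : Matrix ι κ R} {Q : Matrix κ ι R} (hPQ : P * Q = 1)
    (hQP : Q * P = 1) {q : CMDatum κ R} (hq : q ∈ calogeroMoserSet κ R) :
    conj P Q q ∈ calogeroMoserSet ι R := by
  have conj_mul (U V : Matrix κ κ R) : P * U * Q * (P * V * Q) = P * (U * V) * Q := calc
    P * U * Q * (P * V * Q) = P * U * (Q * P) * V * Q := by simp only [Matrix.mul_assoc]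
    _ = P * (U * V) * Q := by rw [hQP, Matrix.mul_one, Matrix.mul_assoc P]
  rw [conj, mem_calogeroMoserSet, ← vecMulVec_mul, ← mul_vecMulVec, ← mem_calogeroMoserSet.1 hq,
    conj_mul, conj_mul, Matrix.mul_add, Matrix.add_mul, Matrix.mul_sub, Matrix.sub_mul,
    Matrix.mul_one, hPQ]

theorem conj_mem_regularLocus {P : Matrix ι κ K} {Q : Matrix κ ι K} (hPQ : P * Q = 1)
    (hQP : Q * P = 1) {q : CMDatum κ K} (hq : q ∈ regularLocus κ K) :
    conj P Q q ∈ regularLocus ι K :=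
  ⟨conj_mem_calogeroMoserSet hPQ hQP hq.1, hq.2.conj hPQ hQP⟩

theorem shift_neg_shift {ι : Type*} [DecidableEq ι] (a b : R) (q : CMDatum ι R) :
    shift (-a) (-b) (shift a b q) = q := by
  simp [shift, add_assoc]

theorem shift_mem_calogeroMoserSet {q : CMDatum ι R} (hq : q ∈ calogeroMoserSet ι R) (a b : R) :
    shift a b q ∈ calogeroMoserSet ι R := by
  have commutator_eq : (q.1 + a • 1) * (q.2.1 + b • 1) - (q.2.1 + b • 1) * (q.1 + a • 1) =
      q.1 * q.2.1 - q.2.1 * q.1 := by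
    simp only [Matrix.add_mul, Matrix.mul_add, Matrix.smul_mul, Matrix.mul_smul, Matrix.one_mul,
      Matrix.mul_one, smul_add, smul_comm b a]
    abel
  rw [shift, mem_calogeroMoserSet, commutator_eq]
  exact hq

theorem shift_mem_regularLocus {q : CMDatum ι K} (hq : q ∈ regularLocus ι K) (a b : K) :
    shift a b q ∈ regularLocus ι K :=
  ⟨shift_mem_calogeroMoserSet hq.1 a b, hq.2.add_smul_one a⟩

section Topology

variable [TopologicalSpace K] [IsTopologicalRing K]

theorem continuous_conj {ι κ R : Type*} [Fintype κ] [CommRing R]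
    [TopologicalSpace R] [IsTopologicalRing R] :
    Continuous fun r : Matrix ι κ R × Matrix κ ι R × CMDatum κ R => r.2.2.conj r.1 r.2.1 := by
  refine .prodMk ?_ (.prodMk ?_ (.prodMk ?_ ?_))
  · exact Continuous.matrix_mul (by fun_prop) (by fun_prop)
  · exact Continuous.matrix_mul (by fun_prop) (by fun_prop)
  · exact Continuous.matrix_mulVec (by fun_prop) (by fun_prop)
  · exact Continuous.matrix_vecMul (by fun_prop) (by fun_prop)

theorem conj_mem_closure_regularLocus {P : Matrix ι κ K} {Q : Matrix κ ι K} (hPQ : P * Q = 1)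
    (hQP : Q * P = 1) {q : CMDatum κ K} (hq : q ∈ closure (regularLocus κ K)) :
    conj P Q q ∈ closure (regularLocus ι K) :=
  map_mem_closure (continuous_conj.comp' (by fun_prop : Continuous fun q => (P, Q, q))) hq
    fun _ => conj_mem_regularLocus hPQ hQP

theorem mem_closure_regularLocus_of_shift {q : CMDatum ι K} {a b : K}
    (hq : shift a b q ∈ closure (regularLocus ι K)) : q ∈ closure (regularLocus ι K) := by
  have hcont : Continuous (shift (ι := ι) (-a) (-b)) := by unfold shift; fun_prop
  have hback := map_mem_closure hcont hq fun _ hp => shift_mem_regularLocus hp (-a) (-b)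
  rwa [shift_neg_shift] at hback

end Topology

/-- The Calogero–Moser datum with block diagonal `X = diag(X₁, X₂)` whose `Y` has diagonal blocks
`Y₁` and `Y₂`. The Calogero–Moser equation turns into Sylvester equations for the off-diagonal
blocks of `Y`, which determine them when `X₁` and `X₂` have no common eigenvalue. -/
noncomputable def glue (p : CMDatum ι K) (q : CMDatum κ K) : CMDatum (ι ⊕ κ) K :=
  (fromBlocks p.1 0 0 q.1,
    fromBlocks p.2.1 (sylvesterSolution p.1 q.1 (vecMulVec p.2.2.1 q.2.2.2))
      (sylvesterSolution q.1 p.1 (vecMulVec q.2.2.1 p.2.2.2)) q.2.1,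
    Sum.elim p.2.2.1 q.2.2.1, Sum.elim p.2.2.2 q.2.2.2)

theorem fromBlocks_mem_calogeroMoserSet_iff {A B : Matrix ι ι R} {C : Matrix ι κ R}
    {E : Matrix κ ι R} {D F : Matrix κ κ R} {v₁ w₁ : ι → R} {v₂ w₂ : κ → R} :
    (fromBlocks A 0 0 D, fromBlocks B C E F, Sum.elim v₁ v₂, Sum.elim w₁ w₂) ∈
        calogeroMoserSet (ι ⊕ κ) R ↔
      (A, B, v₁, w₁) ∈ calogeroMoserSet ι R ∧ (D, F, v₂, w₂) ∈ calogeroMoserSet κ R ∧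
        A * C - C * D = vecMulVec v₁ w₂ ∧ D * E - E * A = vecMulVec v₂ w₁ := by
  have vecMulVec_elim : vecMulVec (Sum.elim v₁ v₂) (Sum.elim w₁ w₂) =
      fromBlocks (vecMulVec v₁ w₁) (vecMulVec v₁ w₂) (vecMulVec v₂ w₁) (vecMulVec v₂ w₂) := by
    ext (i | i) (j | j) <;> simp [vecMulVec_apply]
  simp only [mem_calogeroMoserSet, vecMulVec_elim, fromBlocks_multiply, sub_eq_add_neg,
    fromBlocks_neg, ← fromBlocks_one, fromBlocks_add, fromBlocks_inj, Matrix.zero_mul,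
    Matrix.mul_zero, add_zero, zero_add]
  tauto

theorem glue_mem_regularLocus {p : CMDatum ι K} {q : CMDatum κ K} (hp : p ∈ regularLocus ι K)
    (hq : q ∈ regularLocus κ K) (h : (sylvesterMatrix p.1 q.1).det ≠ 0) :
    glue p q ∈ regularLocus (ι ⊕ κ) K :=
  ⟨fromBlocks_mem_calogeroMoserSet_iff.2 ⟨hp.1, hq.1, (eq_sylvesterSolution_iff h).1 rfl,
    (eq_sylvesterSolution_iff (det_sylvesterMatrix_ne_zero_comm.2 h)).1 rfl⟩,
    hp.2.fromBlocks hq.2 h⟩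

theorem exists_eq_glue_of_mem_calogeroMoserSet {A : Matrix ι ι K} {D : Matrix κ κ K}
    (h : (sylvesterMatrix A D).det ≠ 0) {Y : Matrix (ι ⊕ κ) (ι ⊕ κ) K} {v w : ι ⊕ κ → K}
    (hq : (fromBlocks A 0 0 D, Y, v, w) ∈ calogeroMoserSet (ι ⊕ κ) K) :
    ∃ p ∈ calogeroMoserSet ι K, ∃ q ∈ calogeroMoserSet κ K,
      p.1 = A ∧ q.1 = D ∧ (fromBlocks A 0 0 D, Y, v, w) = glue p q := by
  rw [← fromBlocks_toBlocks Y, ← Sum.elim_comp_inl_inr v, ← Sum.elim_comp_inl_inr w] at hq ⊢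
  obtain ⟨hp, hr, hC, hE⟩ := fromBlocks_mem_calogeroMoserSet_iff.1 hq
  refine ⟨_, hp, _, hr, rfl, rfl, ?_⟩
  rw [(eq_sylvesterSolution_iff h).2 hC,
    (eq_sylvesterSolution_iff (det_sylvesterMatrix_ne_zero_comm.2 h)).2 hE]
  rfl

section Topology

variable [TopologicalSpace K] [IsTopologicalDivisionRing K]

theorem continuousAt_glue {p : CMDatum ι K} {q : CMDatum κ K}
    (h : (sylvesterMatrix p.1 q.1).det ≠ 0) :
    ContinuousAt (fun r : CMDatum ι K × CMDatum κ K => glue r.1 r.2) (p, q) := by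
  have hupper : ContinuousAt (fun r : CMDatum ι K × CMDatum κ K =>
      sylvesterSolution r.1.1 r.2.1 (vecMulVec r.1.2.2.1 r.2.2.2.2)) (p, q) :=
    continuousAt_sylvesterSolution (by fun_prop) (by fun_prop)
      (Continuous.matrix_vecMulVec (by fun_prop) (by fun_prop)).continuousAt h
  have hlower : ContinuousAt (fun r : CMDatum ι K × CMDatum κ K =>
      sylvesterSolution r.2.1 r.1.1 (vecMulVec r.2.2.2.1 r.1.2.2.2)) (p, q) :=
    continuousAt_sylvesterSolution (by fun_prop) (by fun_prop)
      (Continuous.matrix_vecMulVec (by fun_prop) (by fun_prop)).continuousAt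
      (det_sylvesterMatrix_ne_zero_comm.2 h)
  have hblocks : Continuous fun s : (CMDatum ι K × CMDatum κ K) × Matrix ι κ K × Matrix κ ι K =>
      ((fromBlocks s.1.1.1 0 0 s.1.2.1, fromBlocks s.1.1.2.1 s.2.1 s.2.2 s.1.2.2.1,
        Sum.elim s.1.1.2.2.1 s.1.2.2.2.1, Sum.elim s.1.1.2.2.2 s.1.2.2.2.2) :
          CMDatum (ι ⊕ κ) K) := by
    refine .prodMk (by fun_prop) (.prodMk (by fun_prop) (.prodMk ?_ ?_)) <;>
      exact continuous_pi (Sum.rec (by simp only [Sum.elim_inl]; fun_prop)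
        (by simp only [Sum.elim_inr]; fun_prop))
  exact hblocks.continuousAt.comp' (continuousAt_id.prodMk (hupper.prodMk hlower))

theorem glue_mem_closure_regularLocus [T1Space K] {p : CMDatum ι K} {q : CMDatum κ K}
    (hp : p ∈ closure (regularLocus ι K)) (hq : q ∈ closure (regularLocus κ K))
    (h : (sylvesterMatrix p.1 q.1).det ≠ 0) :
    glue p q ∈ closure (regularLocus (ι ⊕ κ) K) := by
  have hdet : Continuous fun r : CMDatum ι K × CMDatum κ K => (sylvesterMatrix r.1.1 r.2.1).det :=
    (continuous_sylvesterMatrix.comp' (by fun_prop :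
      Continuous fun r : CMDatum ι K × CMDatum κ K => (r.1.1, r.2.1))).matrix_det
  have hpq : (p, q) ∈ closure (regularLocus ι K ×ˢ regularLocus κ K) := by
    rw [closure_prod_eq]
    exact ⟨hp, hq⟩
  rw [mem_closure_iff_frequently] at hpq ⊢
  refine (continuousAt_glue h).tendsto.frequently
    ((hpq.and_eventually (hdet.continuousAt.eventually_ne h)).mono ?_)
  exact fun r hr => glue_mem_regularLocus hr.1.1 hr.1.2 hr.2

end Topology

end CMDatum

end CalogeroMoserSet

section Traces

variable {ι R : Type*} [Fintype ι] [DecidableEq ι] [CommRing R]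

theorem trace_mul_cycle_four {ι R : Type*} [Fintype ι] [CommRing R] (A B C D : Matrix ι ι R) :
    (A * B * C * D).trace = (D * A * B * C).trace := by
  rw [trace_mul_comm]
  simp only [Matrix.mul_assoc]

theorem trace_commutator_sq (X Y : Matrix ι ι R) :
    ((X * Y - Y * X) ^ 2).trace =
      2 * (X * Y * X * Y).trace - 2 * (X * X * Y * Y).trace := by
  simp only [pow_two, Matrix.sub_mul, Matrix.mul_sub, trace_sub, ← Matrix.mul_assoc]
  rw [trace_mul_cycle_four X Y Y X, trace_mul_cycle_four Y X X Y, trace_mul_cycle_four Y Y X X,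
    trace_mul_cycle_four X Y Y X, trace_mul_cycle_four Y X Y X]
  ring

theorem trace_add_smul_pow_three (X Z : Matrix ι ι R) (t : R) :
    ((X + t • Z) ^ 3).trace = (X ^ 3).trace + 3 * (X * X * Z).trace * t +
      3 * (X * Z * Z).trace * t ^ 2 + (Z ^ 3).trace * t ^ 3 := by
  simp only [pow_succ, pow_zero, one_mul, Matrix.add_mul, Matrix.mul_add, Matrix.smul_mul,
    Matrix.mul_smul, trace_add, trace_smul, smul_eq_mul, smul_add]
  rw [trace_mul_cycle X Z X, trace_mul_cycle Z X X, trace_mul_cycle X Z X,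
    trace_mul_cycle Z X Z, trace_mul_cycle Z Z X]
  ring

theorem trace_add_smul_pow_four (X Z : Matrix ι ι R) (t : R) :
    ((X + t • Z) ^ 4).trace = (X ^ 4).trace + 4 * (X * X * X * Z).trace * t +
      (4 * (X * X * Z * Z).trace + 2 * (X * Z * X * Z).trace) * t ^ 2 +
      4 * (X * Z * Z * Z).trace * t ^ 3 + (Z ^ 4).trace * t ^ 4 := by
  have cycle (A B C D : Matrix ι ι R) := trace_mul_cycle_four A B C D
  simp only [pow_succ, pow_zero, one_mul, Matrix.add_mul, Matrix.mul_add, Matrix.smul_mul,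
    Matrix.mul_smul, trace_add, trace_smul, smul_eq_mul, smul_add]
  linear_combination t * (cycle Z X X X + 2 * cycle X Z X X + 3 * cycle X X Z X) +
    t ^ 2 * (cycle Z X Z X + cycle Z X X Z + 2 * cycle Z Z X X + 3 * cycle X Z Z X) +
    t ^ 3 * (cycle Z X Z Z + 2 * cycle Z Z X Z + 3 * cycle Z Z Z X)

theorem trace_commutator_sq_of_mem_calogeroMoserSet {X Y : Matrix ι ι R} {v w : ι → R}
    (hq : (X, Y, v, w) ∈ calogeroMoserSet ι R) :
    ((X * Y - Y * X) ^ 2).trace = (Fintype.card ι : R) ^ 2 - Fintype.card ι := by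
  have hvw : v ⬝ᵥ w = Fintype.card ι := by
    rw [← trace_vecMulVec, ← mem_calogeroMoserSet.1 hq, trace_add, trace_sub, trace_mul_comm X Y,
      sub_self, zero_add, trace_one]
  have hcomm : X * Y - Y * X = vecMulVec v w - 1 := eq_sub_of_add_eq hq
  rw [hcomm, pow_two, Matrix.sub_mul, Matrix.mul_sub, vecMulVec_mul_vecMulVec]
  simp only [trace_sub, Matrix.mul_one, Matrix.one_mul, trace_one, trace_vecMulVec,
    dotProduct_smul, dotProduct_comm w v, hvw, smul_eq_mul]
  ring

theorem eq_zero_of_eventually_sum_mul_pow_eq_zero {R : Type*} [CommRing R] [IsDomain R]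
    [TopologicalSpace R] [T1Space R] [(𝓝[≠] (0 : R)).NeBot] {n : ℕ} {a : Fin n → R}
    (h : ∀ᶠ t in 𝓝 0, ∑ i : Fin n, a i * t ^ (i : ℕ) = 0) : a = 0 := by
  let p : R[X] := ∑ i : Fin n, monomial i (a i)
  have hp : p = 0 := eq_zero_of_infinite_isRoot p <| infinite_of_mem_nhds 0 <|
    h.mono fun t ht => by simpa [p, eval_finsetSum] using ht
  ext i
  simpa [p, finsetSum_coeff, coeff_monomial, Fin.val_inj] using congrArg (coeff · i) hp

theorem exists_trace_add_smul_one_eq_zero {K : Type*} [Field K] [CharZero K] [Nonempty ι]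
    (X : Matrix ι ι K) : ∃ c : K, (X + c • 1).trace = 0 :=
  ⟨-X.trace / Fintype.card ι, by simp⟩

section Coefficients

variable {ι K : Type*} [Fintype ι] [DecidableEq ι] [Field K] [CharZero K] [TopologicalSpace K]
  [T1Space K] [(𝓝[≠] (0 : K)).NeBot] {X Z : Matrix ι ι K}

theorem trace_sq_mul_eq_zero_of_eventually_trace_pow_three
    (h : ∀ᶠ t in 𝓝 (0 : K), ((X + t • Z) ^ 3).trace = 0) : (X * X * Z).trace = 0 := by
  have hcoeff := eq_zero_of_eventually_sum_mul_pow_eq_zero (a := ![(X ^ 3).trace,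
    3 * (X * X * Z).trace, 3 * (X * Z * Z).trace, (Z ^ 3).trace]) <| h.mono fun t ht => by
      simpa [Fin.sum_univ_four] using (trace_add_smul_pow_three X Z t).symm.trans ht
  simpa using congrFun hcoeff 1

theorem trace_sq_mul_sq_eq_zero_of_eventually_trace_pow_four
    (h : ∀ᶠ t in 𝓝 (0 : K), ((X + t • Z) ^ 4).trace = 0) :
    2 * (X * X * Z * Z).trace + (X * Z * X * Z).trace = 0 := by
  have hcoeff := eq_zero_of_eventually_sum_mul_pow_eq_zero (a := ![(X ^ 4).trace,
    4 * (X * X * X * Z).trace, 4 * (X * X * Z * Z).trace + 2 * (X * Z * X * Z).trace,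
    4 * (X * Z * Z * Z).trace, (Z ^ 4).trace]) <| h.mono fun t ht => by
      simpa [Fin.sum_univ_five] using (trace_add_smul_pow_four X Z t).symm.trans ht
  have hquadratic : 4 * (X * X * Z * Z).trace + 2 * (X * Z * X * Z).trace = 0 :=
    congrFun hcoeff 2
  linear_combination hquadratic / 2

end Coefficients

end Traces

section Density

variable {ι K : Type*} [Fintype ι] [DecidableEq ι] [Field K] [TopologicalSpace K]
  [IsTopologicalDivisionRing K] [T1Space K]

theorem mem_closure_regularLocus_of_not_isNilpotent_of_not_isUnit
    (ih : ∀ m < Fintype.card ι, calogeroMoserSet (Fin m) K ⊆ closure (regularLocus (Fin m) K))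
    {q : CMDatum ι K} (hq : q ∈ calogeroMoserSet ι K) (hnil : ¬ IsNilpotent q.1)
    (hunit : ¬ IsUnit q.1) : q ∈ closure (regularLocus ι K) := by
  obtain ⟨a, b, P, Q, A, D, ha, hb, hPQ, hQP, hX, hA, hD⟩ := exists_fitting_fromBlocks hnil hunit
  have hdet := det_sylvesterMatrix_ne_zero_of_isNilpotent_of_isUnit hA hD
  have hfst : (CMDatum.conj Q P q).1 = fromBlocks A 0 0 D := calc
    Q * q.1 * P = Q * P * fromBlocks A 0 0 D * (Q * P) := by rw [hX]; simp only [Matrix.mul_assoc]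
    _ = fromBlocks A 0 0 D := by rw [hQP, Matrix.one_mul, Matrix.mul_one]
  have hconj := CMDatum.conj_mem_calogeroMoserSet hQP hPQ hq
  rw [← Prod.mk.eta (p := CMDatum.conj Q P q), hfst] at hconj
  obtain ⟨p, hp, r, hr, rfl, rfl, hglue⟩ :=
    CMDatum.exists_eq_glue_of_mem_calogeroMoserSet hdet hconj
  rw [← CMDatum.conj_conj_cancel hPQ q, ← Prod.mk.eta (p := CMDatum.conj Q P q), hfst]
  refine CMDatum.conj_mem_closure_regularLocus hPQ hQP ?_
  exact hglue ▸ CMDatum.glue_mem_closure_regularLocus (ih a ha hp) (ih b hb hr) hdet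

variable [IsAlgClosed K] [CharZero K]

theorem isNilpotent_of_notMem_closure_regularLocus [Nonempty ι]
    (ih : ∀ m < Fintype.card ι, calogeroMoserSet (Fin m) K ⊆ closure (regularLocus (Fin m) K))
    {q : CMDatum ι K} (hq : q ∈ calogeroMoserSet ι K) (hcl : q ∉ closure (regularLocus ι K))
    (htrace : q.1.trace = 0) : IsNilpotent q.1 := by
  obtain ⟨c, hc⟩ := spectrum.nonempty_of_isAlgClosed_of_finiteDimensional K q.1
  have hsub : algebraMap K (Matrix ι ι K) c - q.1 = -(q.1 + -c • 1) := by
    rw [Algebra.algebraMap_eq_smul_one, neg_smul, ← sub_eq_add_neg, neg_sub]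
  have hunit : ¬ IsUnit (q.1 + -c • 1) := by
    rwa [← IsUnit.neg_iff, ← hsub]
  have hnil : IsNilpotent (q.1 + -c • 1) := by
    by_contra hnil
    exact hcl <| CMDatum.mem_closure_regularLocus_of_shift (b := 0) <|
      mem_closure_regularLocus_of_not_isNilpotent_of_not_isUnit ih
        (CMDatum.shift_mem_calogeroMoserSet hq (-c) 0) hnil hunit
  have hc0 : c = 0 := by
    simpa [htrace] using (isNilpotent_trace_of_isNilpotent hnil).eq_zero
  simpa [hc0] using hnil

theorem eventually_trace_pow_eq_zero_of_notMem_closure_regularLocus [Nonempty ι]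
    (ih : ∀ m < Fintype.card ι, calogeroMoserSet (Fin m) K ⊆ closure (regularLocus (Fin m) K))
    {X Y Z : Matrix ι ι K} {v w : ι → K} (hq : (X, Y, v, w) ∈ calogeroMoserSet ι K)
    (hcl : (X, Y, v, w) ∉ closure (regularLocus ι K)) (hX : X.trace = 0) (hZ : Z.trace = 0)
    (hcomm : Commute Z Y) {k : ℕ} (hk : k ≠ 0) :
    ∀ᶠ t in 𝓝 (0 : K), ((X + t • Z) ^ k).trace = 0 := by
  have hline : Continuous fun t : K => ((X + t • Z, Y, v, w) : CMDatum ι K) := by fun_prop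
  have hopen : (closure (regularLocus ι K))ᶜ ∈ 𝓝 ((X + (0 : K) • Z, Y, v, w) : CMDatum ι K) :=
    isClosed_closure.isOpen_compl.mem_nhds (by simpa using hcl)
  filter_upwards [hline.continuousAt.eventually hopen] with t ht
  have hnil : IsNilpotent (X + t • Z) := isNilpotent_of_notMem_closure_regularLocus ih
    ((add_mem_calogeroMoserSet_iff_of_commute (hcomm.smul_left t)).2 hq) ht (by simp [hX, hZ])
  exact (isNilpotent_trace_of_isNilpotent (hnil.pow_of_pos hk)).eq_zero

variable [(𝓝[≠] (0 : K)).NeBot]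

theorem mem_closure_regularLocus_of_trace_eq_zero [Nontrivial ι]
    (ih : ∀ m < Fintype.card ι, calogeroMoserSet (Fin m) K ⊆ closure (regularLocus (Fin m) K))
    {X Y : Matrix ι ι K} {v w : ι → K} (hq : (X, Y, v, w) ∈ calogeroMoserSet ι K)
    (hX : X.trace = 0) (hY : Y.trace = 0) : (X, Y, v, w) ∈ closure (regularLocus ι K) := by
  by_contra hcl
  have htrace {Z : Matrix ι ι K} (hZ : Z.trace = 0) (hcomm : Commute Z Y) {k : ℕ} (hk : k ≠ 0) :=
    eventually_trace_pow_eq_zero_of_notMem_closure_regularLocus ih hq hcl hX hZ hcomm hk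
  have hfour : 2 * (X * X * Y * Y).trace + (X * Y * X * Y).trace = 0 :=
    trace_sq_mul_sq_eq_zero_of_eventually_trace_pow_four (htrace hY (Commute.refl Y) four_ne_zero)
  obtain ⟨c, hc⟩ := exists_trace_add_smul_one_eq_zero (Y * Y)
  have hcomm : Commute (Y * Y + c • 1) Y :=
    ((Commute.refl Y).mul_left (Commute.refl Y)).add_left ((Commute.one_left Y).smul_left c)
  have hXX : (X * X).trace = 0 := by
    rw [← pow_two]
    simpa using (htrace (trace_zero ι K) (Commute.zero_left Y) two_ne_zero).self_of_nhds
  have hthree : (X * X * Y * Y).trace = 0 := by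
    simpa [Matrix.mul_add, hXX, ← Matrix.mul_assoc] using
      trace_sq_mul_eq_zero_of_eventually_trace_pow_three (htrace hc hcomm three_ne_zero)
  have hcard : (Fintype.card ι : K) * (Fintype.card ι - 1) = 0 := by
    linear_combination trace_commutator_sq X Y - trace_commutator_sq_of_mem_calogeroMoserSet hq +
      2 * hfour - 6 * hthree
  rcases mul_eq_zero.1 hcard with h | h
  · exact Fintype.card_ne_zero (Nat.cast_eq_zero.1 h)
  · exact Fintype.one_lt_card.ne' (Nat.cast_eq_one.1 (sub_eq_zero.1 h))

theorem calogeroMoserSet_fin_subset_closure_regularLocus (n : ℕ) :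
    calogeroMoserSet (Fin n) K ⊆ closure (regularLocus (Fin n) K) := by
  induction n using Nat.strong_induction_on with
  | _ n ih =>
    rintro ⟨X, Y, v, w⟩ hq
    rcases subsingleton_or_nontrivial (Fin n) with _ | _
    · exact subset_closure ⟨hq, hasSimpleSpectrum_of_subsingleton X⟩
    · obtain ⟨a, ha⟩ := exists_trace_add_smul_one_eq_zero X
      obtain ⟨b, hb⟩ := exists_trace_add_smul_one_eq_zero Y
      exact CMDatum.mem_closure_regularLocus_of_shift (a := a) (b := b) <|
        mem_closure_regularLocus_of_trace_eq_zero (by simpa using ih)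
          (CMDatum.shift_mem_calogeroMoserSet hq a b) ha hb

end Density

section RegularLocus

variable {ι K : Type*} [Fintype ι] [DecidableEq ι] [Field K]

theorem diagonal_mem_calogeroMoserSet_iff {R : Type*} [CommRing R] {x : ι → R}
    {Y : Matrix ι ι R} {v w : ι → R} :
    (diagonal x, Y, v, w) ∈ calogeroMoserSet ι R ↔
      ∀ i j, (x i - x j) * Y i j + (1 : Matrix ι ι R) i j = v i * w j := by
  simp only [mem_calogeroMoserSet, ← Matrix.ext_iff, Matrix.add_apply, Matrix.sub_apply,
    diagonal_mul, mul_diagonal, vecMulVec_apply, sub_mul, mul_comm (Y _ _)]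

/-- The Calogero–Moser datum with `X = diagonal x`, `v = w = 1` and `d` as diagonal of `Y`; for
injective `x` the off-diagonal entries of `Y`, which form Moser's matrix, are forced. -/
def moserDatum {ι K : Type*} [DecidableEq ι] [Field K] (x d : ι → K) : CMDatum ι K :=
  (diagonal x, of fun i j => if i = j then d i else (x i - x j)⁻¹, 1, 1)

theorem moserDatum_mem_regularLocus {x : ι → K} (hx : Function.Injective x) (d : ι → K) :
    moserDatum x d ∈ regularLocus ι K := by
  refine ⟨diagonal_mem_calogeroMoserSet_iff.2 fun i j => ?_, hasSimpleSpectrum_diagonal hx⟩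
  rcases eq_or_ne i j with rfl | hij
  · simp
  · simp [hij, mul_inv_cancel₀ (sub_ne_zero.2 (hx.ne hij))]

theorem mul_eq_one_of_diagonal_mem_calogeroMoserSet {R : Type*} [CommRing R] {x : ι → R}
    {Y : Matrix ι ι R} {v w : ι → R} (hq : (diagonal x, Y, v, w) ∈ calogeroMoserSet ι R) (i : ι) :
    v i * w i = 1 := by
  simpa using (diagonal_mem_calogeroMoserSet_iff.1 hq i i).symm

theorem eq_conj_moserDatum {x : ι → K} (hx : Function.Injective x) {Y : Matrix ι ι K}
    {v w : ι → K} (hq : (diagonal x, Y, v, w) ∈ calogeroMoserSet ι K) :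
    (diagonal x, Y, v, w) =
      (moserDatum x fun i => Y i i).conj (diagonal v) (diagonal w) := by
  have hvw := mul_eq_one_of_diagonal_mem_calogeroMoserSet hq
  refine Prod.ext ?_ (Prod.ext ?_ (Prod.ext ?_ ?_))
  · simp [CMDatum.conj, moserDatum, mul_right_comm _ (x _), hvw]
  · ext i j
    rcases eq_or_ne i j with rfl | hij
    · simp [CMDatum.conj, moserDatum, mul_right_comm _ (Y i i), hvw]
    · have hentry : (x i - x j) * Y i j = v i * w j := by
        simpa [hij] using diagonal_mem_calogeroMoserSet_iff.1 hq i j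
      have hYij : Y i j = v i * w j * (x i - x j)⁻¹ := by
        rw [← hentry, mul_comm, inv_mul_cancel_left₀ (sub_ne_zero.2 (hx.ne hij))]
      simpa [CMDatum.conj, moserDatum, hij, mul_right_comm] using hYij
  · ext i
    simp [CMDatum.conj, moserDatum, mulVec_diagonal]
  · ext i
    simp [CMDatum.conj, moserDatum, vecMul_diagonal]

/-- The parametrization of the regular locus by an eigenbasis `g`, the eigenvalues `x` of `X` and
the diagonal entries `d` of `Y` in that basis. -/
noncomputable def moserChart (p : Matrix ι ι K × (ι → K) × (ι → K)) : CMDatum ι K :=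
  (moserDatum p.2.1 p.2.2).conj p.1 p.1⁻¹

/-- The domain of `moserChart`: the basis `g` is invertible and the eigenvalues `x` are
distinct. -/
def moserChartSource (ι K : Type*) [Fintype ι] [DecidableEq ι] [Field K] :
    Set (Matrix ι ι K × (ι → K) × (ι → K)) :=
  {g | g.det ≠ 0} ×ˢ {x | Function.Injective x} ×ˢ Set.univ

theorem image_moserChart : moserChart '' moserChartSource ι K = regularLocus ι K := by
  refine Set.Subset.antisymm ?_ ?_
  · rintro _ ⟨⟨g, x, d⟩, ⟨hg, hx, -⟩, rfl⟩
    exact CMDatum.conj_mem_regularLocus (mul_nonsing_inv g (Ne.isUnit hg))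
      (nonsing_inv_mul g (Ne.isUnit hg)) (moserDatum_mem_regularLocus hx d)
  · rintro ⟨X, Y, v, w⟩ ⟨hq, hX⟩
    obtain ⟨g, x, hg, hx, rfl⟩ := hX.exists_conj_diagonal
    have hgg := mul_nonsing_inv g hg.isUnit
    have hgg' := nonsing_inv_mul g hg.isUnit
    obtain ⟨Y', v', w', hY'⟩ : ∃ Y' v' w', (diagonal x, Y', v', w') =
        CMDatum.conj g⁻¹ g (g * diagonal x * g⁻¹, Y, v, w) :=
      ⟨_, _, _, by
        rw [CMDatum.conj, ← Matrix.mul_assoc, ← Matrix.mul_assoc, hgg', Matrix.one_mul,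
          Matrix.mul_assoc, hgg', Matrix.mul_one]⟩
    have hq' : (diagonal x, Y', v', w') ∈ calogeroMoserSet ι K :=
      hY' ▸ CMDatum.conj_mem_calogeroMoserSet hgg' hgg hq
    have hinv : (g * diagonal v')⁻¹ = diagonal w' * g⁻¹ := by
      have hvw : diagonal v' * diagonal w' = 1 := by
        simp [mul_eq_one_of_diagonal_mem_calogeroMoserSet hq']
      rw [Matrix.mul_inv_rev, inv_eq_right_inv hvw]
    have hdet : (diagonal v').det ≠ 0 := by
      simpa [Finset.prod_ne_zero_iff] using fun i =>
        left_ne_zero_of_mul_eq_one (mul_eq_one_of_diagonal_mem_calogeroMoserSet hq' i)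
    refine ⟨(g * diagonal v', x, fun i => Y' i i), ⟨?_, hx, trivial⟩, ?_⟩
    · rw [Set.mem_ofPred_eq, det_mul]
      exact mul_ne_zero hg hdet
    · rw [moserChart, hinv, ← CMDatum.conj_conj, ← eq_conj_moserDatum hx hq', hY',
        CMDatum.conj_conj_cancel hgg]

theorem continuousAt_moserDatum {ι K : Type*} [DecidableEq ι] [Field K] [TopologicalSpace K]
    [IsTopologicalDivisionRing K] {x : ι → K} (hx : Function.Injective x) (d : ι → K) :
    ContinuousAt (fun p : (ι → K) × (ι → K) => moserDatum p.1 p.2) (x, d) := by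
  refine .prodMk (Continuous.matrix_diagonal continuous_fst).continuousAt
    (.prodMk ?_ continuousAt_const)
  refine continuousAt_pi.2 fun i => continuousAt_pi.2 fun j => ?_
  rcases eq_or_ne i j with rfl | hij
  · simp only [of_apply, if_true]
    fun_prop
  · simp only [of_apply, if_neg hij]
    exact ContinuousAt.inv₀ (by fun_prop) (sub_ne_zero.2 (hx.ne hij))

theorem continuousOn_moserChart [TopologicalSpace K] [IsTopologicalDivisionRing K] :
    ContinuousOn (moserChart (ι := ι) (K := K)) (moserChartSource ι K) := by
  rintro ⟨g, x, d⟩ ⟨hg, hx, -⟩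
  have hinv : ContinuousAt (fun p : Matrix ι ι K × (ι → K) × (ι → K) => p.1⁻¹) (g, x, d) :=
    ContinuousAt.comp (continuousAt_matrix_inv_of_det_ne_zero hg) continuousAt_fst
  have hdatum : ContinuousAt (fun p : Matrix ι ι K × (ι → K) × (ι → K) => moserDatum p.2.1 p.2.2)
      (g, x, d) :=
    ContinuousAt.comp (f := Prod.snd) (x := (g, x, d)) (continuousAt_moserDatum hx d)
      continuousAt_snd
  exact (CMDatum.continuous_conj.continuousAt.comp'
    (continuousAt_fst.prodMk (hinv.prodMk hdatum))).continuousWithinAt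

end RegularLocus

section Connectedness

theorem isPreconnected_setOf_eval_ne_zero {σ : Type*} (p : MvPolynomial σ ℂ) :
    IsPreconnected {x : σ → ℂ | MvPolynomial.eval x p ≠ 0} := by
  refine isPreconnected_of_forall_pair fun a ha b hb => ?_
  let line (t : ℂ) : σ → ℂ := a + t • (b - a)
  let F : ℂ[X] := MvPolynomial.aeval (fun i => C (a i) + X * C (b i - a i)) p
  have hF (t : ℂ) : F.eval t = MvPolynomial.eval (line t) p := by
    rw [← coe_evalRingHom, MvPolynomial.map_aeval]
    exact MvPolynomial.eval₂Hom_congr (RingHom.ext fun c => by simp)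
      (funext fun i => by simp [line]) rfl
  have hline : Continuous line := by fun_prop
  have hF0 : F.eval 0 ≠ 0 := by simpa [hF, line] using ha
  have hF1 : F.eval 1 ≠ 0 := by simpa [hF, line] using hb
  have hroots : {t | F.IsRoot t}.Countable :=
    (finite_setOfPred_isRoot fun h => hF0 (by simp [h])).countable
  have hpre : IsPreconnected {t | F.IsRoot t}ᶜ :=
    (hroots.isConnected_compl_of_one_lt_rank (by simp)).isPreconnected
  refine ⟨line '' {t | F.IsRoot t}ᶜ, ?_, ⟨0, hF0, by simp [line]⟩, ⟨1, hF1, by simp [line]⟩,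
    hpre.image _ hline.continuousOn⟩
  rintro _ ⟨t, ht, rfl⟩
  rwa [Set.mem_ofPred_eq, ← hF]

theorem isPreconnected_setOf_det_ne_zero {ι : Type*} [Fintype ι] [DecidableEq ι] :
    IsPreconnected {g : Matrix ι ι ℂ | g.det ≠ 0} := by
  convert! (isPreconnected_setOf_eval_ne_zero (det (mvPolynomialX ι ι ℂ))).image
    (fun s => of fun i j => s (i, j)) (by fun_prop) using 1
  ext g
  simp only [eval_det_mvPolynomialX, Set.mem_image, Set.mem_ofPred_eq]
  exact ⟨fun hg => ⟨fun ij => g ij.1 ij.2, hg, rfl⟩, by rintro ⟨s, hs, rfl⟩; exact hs⟩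

theorem isPreconnected_setOf_injective {ι : Type*} [Finite ι] :
    IsPreconnected {x : ι → ℂ | Function.Injective x} := by
  classical
  have := Fintype.ofFinite ι
  convert! isPreconnected_setOf_eval_ne_zero (∏ ij ∈ (Finset.univ : Finset ι).offDiag,
    (MvPolynomial.X (R := ℂ) ij.1 - MvPolynomial.X ij.2)) using 1
  ext x
  simp only [Set.mem_ofPred_eq, map_prod, map_sub, MvPolynomial.eval_X, Finset.prod_ne_zero_iff,
    Finset.mem_offDiag, Finset.mem_univ, true_and, sub_ne_zero, Prod.forall]
  exact Function.injective_iff_pairwise_ne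

theorem isConnected_regularLocus (n : ℕ) : IsConnected (regularLocus (Fin n) ℂ) := by
  have hne : (moserChartSource (Fin n) ℂ).Nonempty := by
    refine ⟨(1, fun i => (i : ℕ), 0), ?_, fun i j h => ?_, trivial⟩
    · simp
    · exact Fin.ext (Nat.cast_injective h)
  have hpre : IsPreconnected (moserChartSource (Fin n) ℂ) :=
    isPreconnected_setOf_det_ne_zero.prod (isPreconnected_setOf_injective.prod isPreconnected_univ)
  rw [← image_moserChart]
  exact IsConnected.image ⟨hne, hpre⟩ _ continuousOn_moserChart

theorem isConnected_calogeroMoserSet (n : ℕ) : IsConnected (calogeroMoserSet (Fin n) ℂ) :=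
  (isConnected_regularLocus n).subset_closure (fun _ hq => hq.1)
    (calogeroMoserSet_fin_subset_closure_regularLocus n)

end Connectedness

section RankOne

theorem exists_eq_vecMulVec_of_rank_eq_one {ι κ K : Type*} [Fintype κ] [Field K]
    {M : Matrix ι κ K} (h : M.rank = 1) : ∃ v w, M = vecMulVec v w := by
  classical
  obtain ⟨v, hv⟩ := finrank_le_one_iff.1 h.le
  choose w hw using fun j => hv ⟨M.col j, Pi.single j 1, by simp⟩
  refine ⟨v, w, Matrix.ext fun i j => ?_⟩
  rw [vecMulVec_apply, mul_comm]
  exact (congrFun (congrArg Subtype.val (hw j)) i).symm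

theorem rank_commutator_add_one_eq_one_iff {ι K : Type*} [Fintype ι] [DecidableEq ι] [Nonempty ι]
    [Field K] [CharZero K] {X Y : Matrix ι ι K} :
    (X * Y - Y * X + 1).rank = 1 ↔ ∃ v w, (X, Y, v, w) ∈ calogeroMoserSet ι K := by
  refine ⟨exists_eq_vecMulVec_of_rank_eq_one, ?_⟩
  rintro ⟨v, w, hq⟩
  have hle : (X * Y - Y * X + 1).rank ≤ 1 := by
    rw [mem_calogeroMoserSet.1 hq]
    exact rank_vecMulVec_le v w
  have hne : X * Y - Y * X + 1 ≠ 0 := fun h => by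
    have htrace := congrArg trace h
    simp [trace_mul_comm X Y] at htrace
  refine hle.antisymm (Nat.one_le_iff_ne_zero.2 fun h => hne ?_)
  exact toLin'.map_eq_zero_iff.1 (LinearMap.range_eq_bot.1 (Submodule.finrank_eq_zero.1 h))

end RankOne

/-- **G. Wilson: connectedness of the Calogero–Moser space.** For every `n ≥ 1`, the set of
pairs of `n × n` complex matrices `(X, Y)` with `rank(XY − YX + I) = 1` is nonempty and
connected (in the standard topology on `Mat_n(ℂ) × Mat_n(ℂ)`).  Equivalently, the
Calogero–Moser space `C_n`, the quotient of this set by simultaneous conjugation, is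
connected. -/
theorem calogero_moser_connected (n : ℕ) (hn : 1 ≤ n) :
    IsConnected {p : Matrix (Fin n) (Fin n) ℂ × Matrix (Fin n) (Fin n) ℂ |
      Matrix.rank (p.1 * p.2 - p.2 * p.1 + 1) = 1} := by
  have : NeZero n := ⟨by lia⟩
  convert! (isConnected_calogeroMoserSet n).image (fun q => (q.1, q.2.1)) (by fun_prop) using 1
  ext ⟨X, Y⟩
  simp [rank_commutator_add_one_eq_one_iff, Prod.ext_iff]
end

section
/- (Algebraic flatness of Hecke algebras of polygonal Fuchsian groups; Etingof–Rains.) Let r ≥ 3 and let m_1,…,m_r be integers with m_j ≥ 2. Let R = ℂ[q_{jk}^{±1} : 1 ≤ j ≤ r, 1 ≤ k ≤ m_j] be the Laurent polynomial ring in the variables q_{jk}, and let H be the quotient of the free associative R-algebra on generators c_1,…,c_r by the two-sided ideal generated by the relations ∏_{k=1}^{m_j} (c_j − e^{2πik/m_j} q_{jk}) = 0 for each j = 1,…,r, and c_1 c_2 ⋯ c_r = 1 (each c_j is automatically invertible in H since the q_{jk} are units). Then H is free as a left R-module if and only if Σ_{j=1}^r (1 − 1/m_j) ≥ 2. -/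
noncomputable section

/-- The base ring: the Laurent polynomial ring `R = ℂ[q_{jk}^{±1}]` in the variables
`q_{jk}`, `1 ≤ j ≤ r`, `1 ≤ k ≤ m_j`, realized as the monoid algebra of `ℂ` over the free
abelian group on the index set `Σ_j Fin (m_j)`. -/
abbrev HeckeBase (r : ℕ) (m : Fin r → ℕ) : Type :=
  AddMonoidAlgebra ℂ ((Σ j : Fin r, Fin (m j)) →₀ ℤ)

/-- The Laurent variable `q_{jk}`. -/
def qVar {r : ℕ} {m : Fin r → ℕ} (j : Fin r) (k : Fin (m j)) : HeckeBase r m :=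
  AddMonoidAlgebra.single (Finsupp.single ⟨j, k⟩ 1) 1

/-- The defining relations of the Hecke algebra `H_τ(Γ(m₁,…,m_r))` of the polygonal
Fuchsian group: for each `j`, `∏_{k=1}^{m_j} (c_j − e^{2πik/m_j} q_{jk}) = 0`, and
`c₁ c₂ ⋯ c_r = 1`, as relations on the free associative `R`-algebra on `c₁,…,c_r`. -/
def heckeRel (r : ℕ) (m : Fin r → ℕ) :
    FreeAlgebra (HeckeBase r m) (Fin r) → FreeAlgebra (HeckeBase r m) (Fin r) → Prop :=
  fun a b =>
    (∃ j : Fin r,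
      a = (List.ofFn fun k : Fin (m j) =>
            FreeAlgebra.ι (HeckeBase r m) j
              - algebraMap (HeckeBase r m) (FreeAlgebra (HeckeBase r m) (Fin r))
                  (Complex.exp (2 * Real.pi * Complex.I * ((k : ℕ) + 1) / (m j)) •
                    qVar j k)).prod
        ∧ b = 0)
    ∨ (a = (List.ofFn fun j : Fin r => FreeAlgebra.ι (HeckeBase r m) j).prod ∧ b = 1)

/-!
Let `W` be the Coxeter group generated by the reflections `s_j` in the sides of a polygon with
angles `π / m_j`. The Fuchsian group is the subgroup of elements of even length, with
`c_j = s_j s_{j + 1}`, and `H` deforms its group algebra. The angle condition says that no element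
of `W` has three distinct left descents, that is, that finite parabolic subgroups have rank at
most two.

Under this condition the regular representation deforms: on the free module on `W` there are
involutions `L_j` which agree, up to units and shorter elements, with left multiplication by `s_j`,
and such that `c_j ↦ L_j L_{j + 1}` satisfies the relations of `H` on elements of even length. One
constructs `L_j w` by induction on the length of `w`. If `s_j w` is longer and has a second left
descent `i`, the deformed braid relation of `s_i` and `s_j` prescribes `L_j w`; since there is
never a third descent, no two such prescriptions conflict. Hence the elements of `H` attached to
reduced words are linearly independent, and they span by Matsumoto's theorem modulo shorter words.

If the condition fails, `W` is finite and the same spanning argument makes `H` a finitely generated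
module. Were it free, of rank `n > 0`, the norms of the `c_j` would multiply to `1`, whereas, once
each `q_{jk}` is specialized to `t_j`, they are `t_j ^ n` up to roots of unity, and the product of
the `t_j` is arbitrary.
-/

namespace HeckeFuchsian

open CoxeterSystem

/-! ### The numbers game on alternating words -/

section AlternatingWords

variable {I : Type*}

/-- The letter which prolongs `alternatingWord i j k` to the left. -/
def nextLetter (i j : I) (k : ℕ) : I := if Even k then j else i

theorem nextLetter_zero (i j : I) : nextLetter i j 0 = j := rfl

theorem nextLetter_succ (i j : I) (k : ℕ) : nextLetter i j (k + 1) = nextLetter j i k := by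
  by_cases hk : Even k <;> simp [nextLetter, Nat.even_add_one, hk]

theorem eq_nextLetter_or_eq_nextLetter_swap {i j l : I} (k : ℕ) (hl : l = i ∨ l = j) :
    l = nextLetter i j k ∨ l = nextLetter j i k := by
  unfold nextLetter; split_ifs <;> tauto

theorem nextLetter_mem (i j : I) (k : ℕ) : nextLetter i j k = i ∨ nextLetter i j k = j := by
  unfold nextLetter; split_ifs <;> tauto

theorem alternatingWord_zero (i j : I) : alternatingWord i j 0 = [] := rfl

theorem alternatingWord_succ_eq_cons (i j : I) (k : ℕ) :
    alternatingWord i j (k + 1) = nextLetter i j k :: alternatingWord i j k :=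
  alternatingWord_succ' i j k

theorem prod_map_alternatingWord_two_mul {G : Type*} [Monoid G] (s : I → G) (i j : I) (k : ℕ) :
    ((alternatingWord i j (2 * k)).map s).prod = (s i * s j) ^ k := by
  induction k with
  | zero => simp [alternatingWord_zero]
  | succ k ih =>
    rw [show 2 * (k + 1) = 2 * k + 1 + 1 by ring, alternatingWord_succ, alternatingWord_succ]
    simp [ih, pow_succ]

end AlternatingWords

section DihedralCoefficients

open Polynomial.Chebyshev

/-- The coefficients `sin (kπ/n) / sin (π/n)` of the roots of the dihedral group of order `2n`
with respect to the two simple roots; `n = 0` encodes the infinite dihedral group, for which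
the junk value `π / 0 = 0` makes the `k`-th coefficient equal to `k`. -/
def dihedralCoeff (n k : ℕ) : ℝ := (U ℝ ((k : ℤ) - 1)).eval (Real.cos (Real.pi / n))

theorem dihedralCoeff_zero_right (n : ℕ) : dihedralCoeff n 0 = 0 := by simp [dihedralCoeff]

theorem dihedralCoeff_one_right (n : ℕ) : dihedralCoeff n 1 = 1 := by simp [dihedralCoeff]

theorem dihedralCoeff_add_two (n k : ℕ) :
    dihedralCoeff n (k + 2) =
      2 * Real.cos (Real.pi / n) * dihedralCoeff n (k + 1) - dihedralCoeff n k := by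
  rw [dihedralCoeff, dihedralCoeff, show ((k + 2 : ℕ) : ℤ) - 1 = (k - 1) + 2 by push_cast; ring,
    show ((k + 1 : ℕ) : ℤ) - 1 = (k - 1) + 1 by push_cast; ring, U_add_two]
  simp [dihedralCoeff]

theorem dihedralCoeff_zero_left (k : ℕ) : dihedralCoeff 0 k = k := by
  simp [dihedralCoeff, U_eval_one]

theorem dihedralCoeff_mul_sin (n k : ℕ) :
    dihedralCoeff n k * Real.sin (Real.pi / n) = Real.sin (k * (Real.pi / n)) := by
  have h := U_real_cos (Real.pi / n) ((k : ℤ) - 1)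
  push_cast at h
  rwa [sub_add_cancel] at h

variable {n : ℕ}

theorem sin_pi_div_pos (hn : 2 ≤ n) : 0 < Real.sin (Real.pi / n) := by
  have hn' : (1 : ℝ) < n := by exact_mod_cast hn
  exact Real.sin_pos_of_pos_of_lt_pi (by positivity) (div_lt_self Real.pi_pos hn')

theorem dihedralCoeff_eq (hn : 2 ≤ n) (k : ℕ) :
    dihedralCoeff n k = Real.sin (k * (Real.pi / n)) / Real.sin (Real.pi / n) :=
  eq_div_of_mul_eq (sin_pi_div_pos hn).ne' (dihedralCoeff_mul_sin n k)

theorem dihedralCoeff_self (hn : 2 ≤ n) : dihedralCoeff n n = 0 := by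
  rw [dihedralCoeff_eq hn, mul_div_cancel₀ _ (by positivity), Real.sin_pi, zero_div]

theorem dihedralCoeff_pred (hn : 2 ≤ n) : dihedralCoeff n (n - 1) = 1 := by
  have hn0 : (n : ℝ) ≠ 0 := by positivity
  have : ((n - 1 : ℕ) : ℝ) * (Real.pi / n) = Real.pi - Real.pi / n := by
    rw [Nat.cast_sub (by lia)]; field_simp; norm_num
  rw [dihedralCoeff_eq hn, this, Real.sin_pi_sub, div_self (sin_pi_div_pos hn).ne']

theorem dihedralCoeff_two_mul (hn : 2 ≤ n) : dihedralCoeff n (2 * n) = 0 := by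
  have : ((2 * n : ℕ) : ℝ) * (Real.pi / n) = 2 * Real.pi := by push_cast; field_simp
  rw [dihedralCoeff_eq hn, this, Real.sin_two_pi, zero_div]

theorem dihedralCoeff_two_mul_add_one (hn : 2 ≤ n) : dihedralCoeff n (2 * n + 1) = 1 := by
  have : ((2 * n + 1 : ℕ) : ℝ) * (Real.pi / n) = Real.pi / n + 2 * Real.pi := by
    push_cast; field_simp; ring
  rw [dihedralCoeff_eq hn, this, Real.sin_add_two_pi, div_self (sin_pi_div_pos hn).ne']

theorem one_le_dihedralCoeff (hn : n ≠ 1) {k : ℕ} (hk : 1 ≤ k) (hkn : n = 0 ∨ k < n) :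
    1 ≤ dihedralCoeff n k := by
  rcases hkn with rfl | hkn
  · rw [dihedralCoeff_zero_left]; exact_mod_cast hk
  have hn2 : 2 ≤ n := by lia
  rw [dihedralCoeff_eq hn2, le_div_iff₀ (sin_pi_div_pos hn2), one_mul, ← sub_nonneg,
    Real.sin_sub_sin]
  set θ := Real.pi / n with hθ
  have hnθ : n * θ = Real.pi := by rw [hθ]; field_simp
  have hθ0 : 0 < θ := by positivity
  have hk1 : (1 : ℝ) ≤ k := by exact_mod_cast hk
  have hk2 : (k : ℝ) + 1 ≤ n := by exact_mod_cast hkn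
  have hsin : 0 ≤ Real.sin ((k * θ - θ) / 2) := by
    apply Real.sin_nonneg_of_nonneg_of_le_pi <;> nlinarith
  have hcos : 0 ≤ Real.cos ((k * θ + θ) / 2) := by
    apply Real.cos_nonneg_of_neg_pi_div_two_le_of_le <;> nlinarith
  positivity

theorem one_le_dihedralCoeff_combination (hn : n ≠ 1) {k : ℕ} (hkn : n = 0 ∨ k < n) {a b : ℝ}
    (ha : 1 ≤ a) (hb : 1 ≤ b) : 1 ≤ dihedralCoeff n (k + 1) * a + dihedralCoeff n k * b := by
  by_cases htop : n = k + 1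
  · have hpred := dihedralCoeff_pred (n := n) (by lia)
    rw [← htop, dihedralCoeff_self (by lia), show k = n - 1 by lia, hpred]
    linarith
  have hsucc := one_le_dihedralCoeff hn (k := k + 1) (by lia) (by lia)
  have hcoeff : 0 ≤ dihedralCoeff n k := by
    rcases Nat.eq_zero_or_pos k with rfl | hk
    · rw [dihedralCoeff_zero_right]
    · linarith [one_le_dihedralCoeff hn hk hkn]
  nlinarith

end DihedralCoefficients

section ContragredientRepresentation

variable {I : Type*} (M : CoxeterMatrix I)

/-- The Cartan matrix `-2 cos (π / m_ij)` of a Coxeter matrix.  The junk value `π / 0 = 0`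
gives the entry `-2` where `m_ij = ∞`, which Mathlib encodes as `0`. -/
def coxeterCartan (i j : I) : ℝ := -2 * Real.cos (Real.pi / M i j)

theorem coxeterCartan_symm (i j : I) : coxeterCartan M i j = coxeterCartan M j i := by
  rw [coxeterCartan, coxeterCartan, M.symmetric]

theorem coxeterCartan_self (i : I) : coxeterCartan M i i = 2 := by simp [coxeterCartan]

theorem proj_coxeterCartan_self (i : I) :
    (LinearMap.proj i : (I → ℝ) →ₗ[ℝ] ℝ) (coxeterCartan M i) = 2 := coxeterCartan_self M i

/-- The simple reflection in the contragredient geometric representation; in coordinates it is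
a move of the numbers game at the vertex `i`. -/
def simpleReflection (i : I) : (I → ℝ) ≃ₗ[ℝ] (I → ℝ) :=
  Module.reflection (proj_coxeterCartan_self M i)

theorem simpleReflection_apply (i l : I) (p : I → ℝ) :
    simpleReflection M i p l = p l - p i * coxeterCartan M i l := by
  simp [simpleReflection, Module.reflection_apply]

theorem simpleReflection_apply_self (i : I) (p : I → ℝ) : simpleReflection M i p i = -p i := by
  rw [simpleReflection_apply, coxeterCartan_self]; ring

theorem simpleReflection_mul_self (i : I) : simpleReflection M i * simpleReflection M i = 1 :=
  LinearEquiv.ext (Module.involutive_reflection (proj_coxeterCartan_self M i))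

/-- The result of playing the numbers game from `p` along the alternating word in `i` and `j` of
length `k`. -/
def alternatingMove (i j : I) (k : ℕ) (p : I → ℝ) : I → ℝ :=
  ((alternatingWord i j k).map (simpleReflection M)).prod p

theorem alternatingMove_zero (i j : I) (p : I → ℝ) : alternatingMove M i j 0 p = p := rfl

theorem alternatingMove_succ (i j : I) (k : ℕ) (p : I → ℝ) :
    alternatingMove M i j (k + 1) p =
      simpleReflection M (nextLetter i j k) (alternatingMove M i j k p) := by
  simp [alternatingMove, alternatingWord_succ_eq_cons]

theorem alternatingMove_apply_nextLetter (i j : I) (k : ℕ) (p : I → ℝ) :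
    alternatingMove M i j k p (nextLetter i j k) =
      dihedralCoeff (M i j) (k + 1) * p j + dihedralCoeff (M i j) k * p i := by
  induction k using Nat.twoStepInduction with
  | zero =>
    simp [alternatingMove_zero, nextLetter_zero, dihedralCoeff_zero_right, dihedralCoeff_one_right]
  | one =>
    simp [alternatingMove_succ, alternatingMove_zero, nextLetter_succ, nextLetter_zero,
      simpleReflection_apply, dihedralCoeff_add_two, dihedralCoeff_zero_right,
      dihedralCoeff_one_right, coxeterCartan, M.symmetric j i]
    ring
  | more k ih ih' =>
    have hlast : nextLetter i j (k + 2) = nextLetter i j k := by simp [nextLetter_succ]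
    have hcartan : coxeterCartan M (nextLetter i j (k + 1)) (nextLetter i j k) =
        coxeterCartan M i j := by
      rw [nextLetter_succ]; unfold nextLetter
      split_ifs
      · rfl
      · exact coxeterCartan_symm M j i
    rw [hlast, alternatingMove_succ, simpleReflection_apply, hcartan, ih', alternatingMove_succ,
      simpleReflection_apply_self, ih, coxeterCartan, dihedralCoeff_add_two _ (k + 1)]
    linear_combination (-p i) * dihedralCoeff_add_two (M i j) k

theorem alternatingMove_sub_mem_span (i j : I) (k : ℕ) (p : I → ℝ) :
    alternatingMove M i j k p - p ∈
      Submodule.span ℝ {coxeterCartan M i, coxeterCartan M j} := by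
  induction k with
  | zero => simp [alternatingMove_zero]
  | succ k ih =>
    have hmove : ∀ l q, simpleReflection M l q - p = (q - p) - q l • coxeterCartan M l :=
      fun l q ↦ by ext; simp [simpleReflection_apply]; ring
    rw [alternatingMove_succ, hmove]
    refine Submodule.sub_mem _ ih (Submodule.smul_mem _ _ (Submodule.subset_span ?_))
    rcases nextLetter_mem i j k with h | h <;> simp [h]

variable {M}

theorem eq_zero_of_mem_span_coxeterCartan_pair {i j : I} (hij : 2 ≤ M i j) {v : I → ℝ}
    (hv : v ∈ Submodule.span ℝ {coxeterCartan M i, coxeterCartan M j}) (hi : v i = 0)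
    (hj : v j = 0) : v = 0 := by
  obtain ⟨a, b, rfl⟩ := Submodule.mem_span_pair.mp hv
  simp only [Pi.add_apply, Pi.smul_apply, smul_eq_mul, coxeterCartan_self,
    coxeterCartan_symm M j i] at hi hj
  have hdet : 4 - coxeterCartan M i j ^ 2 ≠ 0 := by
    have := Real.sin_sq_add_cos_sq (Real.pi / M i j)
    have := pow_pos (sin_pi_div_pos hij) 2
    rw [coxeterCartan]
    nlinarith
  have ha : a = 0 := (mul_eq_zero.mp (show (4 - coxeterCartan M i j ^ 2) * a = 0 by
    linear_combination 2 * hi - coxeterCartan M i j * hj)).resolve_left hdet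
  have hb : b = 0 := (mul_eq_zero.mp (show (4 - coxeterCartan M i j ^ 2) * b = 0 by
    linear_combination 2 * hj - coxeterCartan M i j * hi)).resolve_left hdet
  simp [ha, hb]

theorem alternatingMove_two_mul {i j : I} (hij : 2 ≤ M i j) (p : I → ℝ) :
    alternatingMove M i j (2 * M i j) p = p := by
  have hj : alternatingMove M i j (2 * M i j) p j = p j := by
    have h := alternatingMove_apply_nextLetter M i j (2 * M i j) p
    rwa [dihedralCoeff_two_mul_add_one hij, dihedralCoeff_two_mul hij, nextLetter,
      if_pos (even_two_mul _), one_mul, zero_mul, add_zero] at h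
  have hi : alternatingMove M i j (2 * M i j) p i = p i := by
    obtain ⟨k, hk⟩ : ∃ k, 2 * M i j = k + 1 := ⟨2 * M i j - 1, by lia⟩
    have hlast : nextLetter i j k = i := if_neg (by rw [← Nat.even_add_one, ← hk]; simp)
    have hrec := dihedralCoeff_add_two (M i j) k
    rw [show k + 2 = 2 * M i j + 1 by lia, ← hk, dihedralCoeff_two_mul_add_one hij,
      dihedralCoeff_two_mul hij] at hrec
    have h := alternatingMove_apply_nextLetter M i j k p
    rw [hlast, ← hk, dihedralCoeff_two_mul hij] at h
    rw [hk, alternatingMove_succ, hlast, simpleReflection_apply_self, h]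
    linear_combination -p i * hrec
  refine sub_eq_zero.mp (eq_zero_of_mem_span_coxeterCartan_pair hij
    (alternatingMove_sub_mem_span M i j _ p) ?_ ?_) <;> simp [hi, hj]

theorem two_le_of_ne {i j : I} (hij : i ≠ j) (h0 : M i j ≠ 0) : 2 ≤ M i j := by
  have := M.off_diagonal i j hij
  lia

variable (M)

theorem isLiftable_simpleReflection : M.IsLiftable (simpleReflection M) := by
  intro i j
  rcases eq_or_ne i j with rfl | hij
  · rw [simpleReflection_mul_self, one_pow]
  rcases eq_or_ne (M i j) 0 with h0 | h0
  · rw [h0, pow_zero]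
  rw [← prod_map_alternatingWord_two_mul]
  exact LinearEquiv.ext (alternatingMove_two_mul (two_le_of_ne hij h0))

end ContragredientRepresentation

section Position

variable {I W : Type*} [Group W] {M : CoxeterMatrix I} (cs : CoxeterSystem M W)

/-- The image of the vector `(1, …, 1)`, which lies in the interior of the fundamental chamber,
under an element of the Coxeter group. -/
def position (w : W) : I → ℝ :=
  cs.lift ⟨simpleReflection M, isLiftable_simpleReflection M⟩ w 1

theorem position_one : position cs 1 = 1 := by simp [position]

theorem position_simple_mul (i : I) (w : W) :
    position cs (cs.simple i * w) = simpleReflection M i (position cs w) := by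
  simp [position]

theorem position_alternatingWord_mul (i j : I) (k : ℕ) (w : W) :
    position cs (cs.wordProd (alternatingWord i j k) * w) =
      alternatingMove M i j k (position cs w) := by
  induction k with
  | zero => simp [alternatingMove_zero, alternatingWord_zero]
  | succ k ih =>
    rw [alternatingWord_succ_eq_cons, cs.wordProd_cons, mul_assoc, position_simple_mul, ih,
      alternatingMove_succ]

theorem wordProd_alternatingWord_succ_mul (i j : I) (k : ℕ) (w : W) :
    cs.wordProd (alternatingWord i j (k + 1)) * w =
      cs.simple (nextLetter i j k) * (cs.wordProd (alternatingWord i j k) * w) := by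
  rw [alternatingWord_succ_eq_cons, cs.wordProd_cons, mul_assoc]

/-- `w` is the alternating word in `i`, `j` of length `k` times the element `d`, which has
neither `i` nor `j` as a left descent, and the lengths add up. -/
structure IsDihedralDecomposition (w : W) (i j : I) (k : ℕ) (d : W) : Prop where
  eq : w = cs.wordProd (alternatingWord i j k) * d
  not_descent_left : ¬ cs.IsLeftDescent d i
  not_descent_right : ¬ cs.IsLeftDescent d j
  length_eq : cs.length w = cs.length d + k

namespace IsDihedralDecomposition

variable {cs} {w d : W} {i j : I} {k : ℕ}

theorem le_of_ne_zero (h : IsDihedralDecomposition cs w i j k d) (h0 : M i j ≠ 0) :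
    k ≤ M i j := by
  by_contra! hk
  refine cs.not_isReduced_alternatingWord i j h0 hk (le_antisymm (cs.length_wordProd_le _) ?_)
  have := cs.length_mul_le (cs.wordProd (alternatingWord i j k)) d
  rw [← h.eq, h.length_eq] at this
  rw [length_alternatingWord]
  lia

theorem not_descent_of_mem {l : I} (h : IsDihedralDecomposition cs w i j k d)
    (hl : l = i ∨ l = j) : ¬ cs.IsLeftDescent d l := by
  rcases hl with rfl | rfl
  exacts [h.not_descent_left, h.not_descent_right]

theorem length_simple_nextLetter_swap_mul (h : IsDihedralDecomposition cs w i j (k + 1) d) :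
    cs.length (cs.simple (nextLetter j i (k + 1)) * w) ≤ cs.length d + k := by
  rw [h.eq, nextLetter_succ, wordProd_alternatingWord_succ_mul,
    cs.simple_mul_simple_cancel_left]
  refine (cs.length_mul_le _ _).trans ?_
  have := cs.length_wordProd_le (alternatingWord i j k)
  rw [length_alternatingWord] at this
  lia

theorem eq_nextLetter_of_not_descent {l : I}
    (h : IsDihedralDecomposition cs w i j k d) (hl : l = i ∨ l = j) (hlw : ¬ cs.IsLeftDescent w l)
    (hk : k ≠ 0) : l = nextLetter i j k ∧ (M i j = 0 ∨ k < M i j) := by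
  obtain ⟨k, rfl⟩ := Nat.exists_eq_succ_of_ne_zero hk
  have hprev : l ≠ nextLetter j i (k + 1) := by
    rintro rfl
    have := h.length_simple_nextLetter_swap_mul
    rw [cs.not_isLeftDescent_iff, h.length_eq] at hlw
    lia
  have hnext := (eq_nextLetter_or_eq_nextLetter_swap (k + 1) hl).resolve_right hprev
  refine ⟨hnext, ?_⟩
  by_contra! htop
  have hk : k + 1 = M i j := le_antisymm (h.le_of_ne_zero htop.1) htop.2
  have hbraid : IsDihedralDecomposition cs w j i (k + 1) d := by
    refine ⟨?_, h.not_descent_right, h.not_descent_left, h.length_eq⟩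
    have := cs.wordProd_braidWord_eq i j
    rw [braidWord, braidWord, M.symmetric j i, ← hk] at this
    rw [h.eq, this]
  have := hbraid.length_simple_nextLetter_swap_mul
  rw [← hnext] at this
  rw [cs.not_isLeftDescent_iff, h.length_eq] at hlw
  lia

end IsDihedralDecomposition

theorem exists_isDihedralDecomposition (i j : I) (w : W) :
    ∃ k d, IsDihedralDecomposition cs w i j k d ∨ IsDihedralDecomposition cs w j i k d := by
  induction hn : cs.length w using Nat.strong_induction_on generalizing w with
  | _ n ih =>
  subst hn
  by_cases hdesc : ∃ l, (l = i ∨ l = j) ∧ cs.IsLeftDescent w l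
  swap
  · push Not at hdesc
    exact ⟨0, w, .inl ⟨by simp [alternatingWord_zero], hdesc i (.inl rfl), hdesc j (.inr rfl), rfl⟩⟩
  obtain ⟨l, hl, hlw⟩ := hdesc
  have hlen := cs.isLeftDescent_iff.mp hlw
  have extend : ∀ {i j k d}, (l = i ∨ l = j) →
      IsDihedralDecomposition cs (cs.simple l * w) i j k d →
      ∃ k d, IsDihedralDecomposition cs w i j k d ∨ IsDihedralDecomposition cs w j i k d := by
    intro i j k d hl h
    have prolong : ∀ {i j}, l = nextLetter i j k →
        IsDihedralDecomposition cs (cs.simple l * w) i j k d →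
        IsDihedralDecomposition cs w i j (k + 1) d := by
      rintro i j rfl h
      refine ⟨?_, h.not_descent_left, h.not_descent_right, by have := h.length_eq; lia⟩
      rw [wordProd_alternatingWord_succ_mul, ← h.eq, cs.simple_mul_simple_cancel_left]
    rcases eq_nextLetter_or_eq_nextLetter_swap k hl with hnext | hprev
    · exact ⟨k + 1, d, .inl (prolong hnext h)⟩
    cases k with
    | zero =>
      refine ⟨1, d, .inr (prolong hprev ⟨?_, h.not_descent_right, h.not_descent_left, ?_⟩)⟩
      · simpa [alternatingWord_zero] using h.eq
      · exact h.length_eq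
    | succ k =>
      have := h.length_simple_nextLetter_swap_mul
      rw [← hprev, cs.simple_mul_simple_cancel_left] at this
      have := h.length_eq
      lia
  obtain ⟨k, d, h | h⟩ := ih _ hlw _ rfl
  · exact extend hl h
  · obtain ⟨k, d, h⟩ := extend hl.symm h
    exact ⟨k, d, h.symm⟩

theorem one_le_position_of_not_isLeftDescent {w : W} {i : I} (hi : ¬ cs.IsLeftDescent w i) :
    1 ≤ position cs w i := by
  induction hn : cs.length w using Nat.strong_induction_on generalizing w i with
  | _ n ih =>
  subst hn
  rcases eq_or_ne w 1 with rfl | hw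
  · simp [position_one]
  obtain ⟨j, hj⟩ := cs.exists_leftDescent_of_ne_one hw
  have hij : i ≠ j := by rintro rfl; exact hi hj
  have main : ∀ {x y k d}, x ≠ y → i = x ∨ i = y → j = x ∨ j = y →
      IsDihedralDecomposition cs w x y k d → 1 ≤ position cs w i := by
    intro x y k d hxy hix hjx h
    have hk : k ≠ 0 := by
      rintro rfl
      obtain rfl : w = d := by simpa [alternatingWord_zero] using h.eq
      exact h.not_descent_of_mem hjx hj
    obtain ⟨rfl, hkM⟩ := h.eq_nextLetter_of_not_descent hix hi hk
    have hd : cs.length d < cs.length w := by rw [h.length_eq]; lia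
    rw [h.eq, position_alternatingWord_mul, alternatingMove_apply_nextLetter]
    exact one_le_dihedralCoeff_combination (M.off_diagonal _ _ hxy) hkM
      (ih _ hd h.not_descent_right rfl) (ih _ hd h.not_descent_left rfl)
  obtain ⟨k, d, h | h⟩ := exists_isDihedralDecomposition cs i j w
  · exact main hij (.inl rfl) (.inr rfl) h
  · exact main hij.symm (.inr rfl) (.inl rfl) h

theorem isLeftDescent_iff_position_neg {w : W} {i : I} :
    cs.IsLeftDescent w i ↔ position cs w i < 0 := by
  refine ⟨fun h ↦ ?_, fun h ↦ ?_⟩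
  · rw [cs.isLeftDescent_iff_not_isLeftDescent_mul] at h
    have := one_le_position_of_not_isLeftDescent cs h
    rw [position_simple_mul, simpleReflection_apply_self] at this
    linarith
  · by_contra hi
    linarith [one_le_position_of_not_isLeftDescent cs hi]

variable {i j : I} {d w : W}

theorem one_le_position_apply_nextLetter (hij : i ≠ j) (hi : ¬ cs.IsLeftDescent d i)
    (hj : ¬ cs.IsLeftDescent d j) {k : ℕ} (hk : M i j = 0 ∨ k < M i j) :
    1 ≤ position cs (cs.wordProd (alternatingWord i j k) * d) (nextLetter i j k) := by
  rw [position_alternatingWord_mul, alternatingMove_apply_nextLetter]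
  exact one_le_dihedralCoeff_combination (M.off_diagonal _ _ hij) hk
    (one_le_position_of_not_isLeftDescent cs hj) (one_le_position_of_not_isLeftDescent cs hi)

theorem length_alternatingWord_mul (hij : i ≠ j) (hi : ¬ cs.IsLeftDescent d i)
    (hj : ¬ cs.IsLeftDescent d j) {k : ℕ} (hk : M i j = 0 ∨ k ≤ M i j) :
    cs.length (cs.wordProd (alternatingWord i j k) * d) = cs.length d + k := by
  induction k with
  | zero => simp [alternatingWord_zero]
  | succ k ih =>
    have hnext : ¬ cs.IsLeftDescent (cs.wordProd (alternatingWord i j k) * d)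
        (nextLetter i j k) := by
      rw [isLeftDescent_iff_position_neg]
      linarith [one_le_position_apply_nextLetter cs hij hi hj (k := k) (by lia)]
    rw [wordProd_alternatingWord_succ_mul, cs.not_isLeftDescent_iff.mp hnext, ih (by lia),
      add_assoc]

theorem exists_eq_braidWord_mul (hij : i ≠ j) (hi : cs.IsLeftDescent w i)
    (hj : cs.IsLeftDescent w j) : M i j ≠ 0 ∧ ∃ d, ¬ cs.IsLeftDescent d i ∧
      ¬ cs.IsLeftDescent d j ∧ w = cs.wordProd (braidWord M i j) * d := by
  have main : ∀ {x y k d}, x ≠ y → cs.IsLeftDescent w x → cs.IsLeftDescent w y →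
      IsDihedralDecomposition cs w x y k d → M x y ≠ 0 ∧ k = M x y := by
    intro x y k d hxy hx hy h
    have hk : ¬ (M x y = 0 ∨ k < M x y) := by
      intro hk
      have hpos := one_le_position_apply_nextLetter cs hxy h.not_descent_left
        h.not_descent_right hk
      have hneg : position cs w (nextLetter x y k) < 0 := by
        rw [← isLeftDescent_iff_position_neg]
        rcases nextLetter_mem x y k with h | h <;> rwa [h]
      rw [h.eq] at hneg
      linarith
    push Not at hk
    exact ⟨hk.1, le_antisymm (h.le_of_ne_zero hk.1) hk.2⟩
  obtain ⟨k, d, h | h⟩ := exists_isDihedralDecomposition cs i j w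
  · obtain ⟨h0, rfl⟩ := main hij hi hj h
    exact ⟨h0, d, h.not_descent_left, h.not_descent_right, h.eq⟩
  · obtain ⟨h0, rfl⟩ := main hij.symm hj hi h
    refine ⟨M.symmetric i j ▸ h0, d, h.not_descent_right, h.not_descent_left, ?_⟩
    rw [cs.wordProd_braidWord_eq]
    exact h.eq

end Position

/-! ### Coxeter groups without three common descents -/

section Vinberg

variable {I W : Type*} [Group W] {M : CoxeterMatrix I} (cs : CoxeterSystem M W)

theorem ascent_induction {motive : W → Prop} (one : motive 1)
    (ascent : ∀ w i, ¬ cs.IsLeftDescent w i → motive w → motive (cs.simple i * w)) (w : W) :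
    motive w := by
  induction hn : cs.length w using Nat.strong_induction_on generalizing w with
  | _ n ih =>
  subst hn
  rcases eq_or_ne w 1 with rfl | hw
  · exact one
  obtain ⟨i, hi⟩ := cs.exists_leftDescent_of_ne_one hw
  have := ascent _ i (cs.isLeftDescent_iff_not_isLeftDescent_mul.mp hi) (ih _ hi _ rfl)
  rwa [cs.simple_mul_simple_cancel_left] at this

variable [Fintype I]

theorem exists_not_isLeftDescent_of_coxeterCartan_nonpos [Nonempty I] {y : I → ℝ}
    (hy : ∀ l, 0 < y l) (hCy : ∀ i, ∑ l, coxeterCartan M i l * y l ≤ 0) (w : W) :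
    ∃ i, ¬ cs.IsLeftDescent w i := by
  have hpos : 0 < ∑ l, position cs w l * y l := by
    induction w using ascent_induction cs with
    | one => simpa [position_one] using Finset.sum_pos (fun l _ ↦ hy l) Finset.univ_nonempty
    | ascent w i hi ih =>
      have hstep : ∑ l, position cs (cs.simple i * w) l * y l =
          ∑ l, position cs w l * y l - position cs w i * ∑ l, coxeterCartan M i l * y l := by
        rw [Finset.mul_sum, ← Finset.sum_sub_distrib]
        exact Finset.sum_congr rfl fun l _ ↦ by
          rw [position_simple_mul, simpleReflection_apply]; ring
      have := one_le_position_of_not_isLeftDescent cs hi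
      nlinarith [hCy i]
  by_contra! hall
  refine hpos.not_ge (Finset.sum_nonpos fun l _ ↦ ?_)
  exact mul_nonpos_of_nonpos_of_nonneg
    ((isLeftDescent_iff_position_neg cs).mp (hall l)).le (hy l).le

theorem exists_position_eq_one_sub (w : W) : ∃ a : I → ℝ,
    (∀ l, position cs w l = 1 - ∑ i, a i * coxeterCartan M i l) ∧
    ∑ l, a l * ∑ i, a i * coxeterCartan M i l = 2 * ∑ l, a l ∧ cs.length w ≤ ∑ l, a l := by
  classical
  induction w using ascent_induction cs with
  | one => exact ⟨0, by simp [position_one], by simp, by simp⟩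
  | ascent w i hi ih =>
    obtain ⟨a, hpos, hquad, hlen⟩ := ih
    set t := position cs w i with ht
    set b : I → ℝ := a + Pi.single i t with hb
    have hsum (g : I → ℝ) : ∑ l, b l * g l = ∑ l, a l * g l + t * g i := by
      simp [hb, add_mul, Finset.sum_add_distrib, Pi.single_apply]
    have hsum_one : ∑ l, b l = ∑ l, a l + t := by simpa using hsum 1
    refine ⟨b, fun l ↦ ?_, ?_, ?_⟩
    · rw [position_simple_mul, simpleReflection_apply, hpos l, hsum]; ring
    · have hrow : ∑ l, a l * coxeterCartan M l i = 1 - t := by rw [ht, hpos i, sub_sub_cancel]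
      have hcol : ∑ l, a l * coxeterCartan M i l = 1 - t := by
        simp only [coxeterCartan_symm M i, hrow]
      rw [hsum_one, hsum, hsum]
      simp only [hsum, mul_add, Finset.sum_add_distrib, hquad, coxeterCartan_self]
      simp only [mul_left_comm (a _) t, ← Finset.mul_sum, hrow, hcol]
      ring
    · have := one_le_position_of_not_isLeftDescent cs hi
      rw [hsum_one, cs.not_isLeftDescent_iff.mp hi]
      push_cast
      linarith

theorem exists_length_le_of_coxeterCartan_posDef {ε : ℝ} (hε : 0 < ε)
    (hquad : ∀ a : I → ℝ, ε * ∑ l, a l ^ 2 ≤ ∑ l, a l * ∑ i, a i * coxeterCartan M i l) :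
    ∃ B : ℕ, ∀ w, cs.length w ≤ B := by
  obtain ⟨B, hB⟩ := exists_nat_ge (2 * Fintype.card I / ε)
  refine ⟨B, fun w ↦ ?_⟩
  obtain ⟨a, -, ha, hlen⟩ := exists_position_eq_one_sub cs w
  have hcauchy : (∑ l, a l) ^ 2 ≤ Fintype.card I * ∑ l, a l ^ 2 := by
    simpa using sq_sum_le_card_mul_sum_sq (s := Finset.univ) (f := a)
  have hbound : ε * (∑ l, a l) ^ 2 ≤ 2 * Fintype.card I * ∑ l, a l := by
    have := (hquad a).trans_eq ha
    nlinarith [(Nat.cast_nonneg (Fintype.card I) : (0 : ℝ) ≤ _)]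
  have hle : ∑ l, a l ≤ 2 * Fintype.card I / ε := by
    rw [le_div_iff₀ hε]
    by_contra! hlt
    have : 0 < ∑ l, a l := pos_of_mul_pos_left ((by positivity : (0 : ℝ) ≤ _).trans_lt hlt) hε.le
    nlinarith
  exact_mod_cast hlen.trans (hle.trans hB)

end Vinberg

section Polygon

/-- No element of the Coxeter group has three distinct left descents, i.e. all finite parabolic
subgroups have rank at most two. -/
def NoTripleDescent {I W : Type*} [Group W] {M : CoxeterMatrix I} (cs : CoxeterSystem M W) :
    Prop :=
  ∀ w i j k, i ≠ j → j ≠ k → i ≠ k → cs.IsLeftDescent w i → cs.IsLeftDescent w j →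
    ¬ cs.IsLeftDescent w k

variable {N : ℕ}

theorem fin_add_two_ne (i : Fin (N + 3)) : i + 1 + 1 ≠ i := by
  rw [add_assoc, Ne, add_eq_left, Fin.ext_iff]
  simp [Fin.val_add, Nat.mod_eq_of_lt (show 2 < N + 3 by lia)]

theorem fin_add_three_ne (hN : N ≠ 0) (i : Fin (N + 3)) : i + 1 + 1 + 1 ≠ i := by
  rw [add_assoc, add_assoc, Ne, add_eq_left, Fin.ext_iff]
  have h2 : 2 % (N + 3) = 2 := Nat.mod_eq_of_lt (by lia)
  have h3 : 3 % (N + 3) = 3 := Nat.mod_eq_of_lt (by lia)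
  simp [Fin.val_add, h2, h3]

/-- The Coxeter matrix of the group generated by the reflections in the sides of a polygon with
angles `π / m j`, where side `j` and side `j + 1` (cyclically) meet at the vertex `j`. -/
def polygonMatrix (m : Fin (N + 3) → ℕ) (hm : ∀ j, 2 ≤ m j) : CoxeterMatrix (Fin (N + 3)) where
  M := .of fun i j ↦ if i = j then 1 else if j = i + 1 then m i else if i = j + 1 then m j else 0
  isSymm := by
    ext i j
    have := fin_add_two_ne i
    simp only [Matrix.transpose_apply, Matrix.of_apply]
    grind
  diagonal i := by simp
  off_diagonal i j hij := by
    have := hm i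
    have := hm j
    simp only [Matrix.of_apply]
    grind

variable {m : Fin (N + 3) → ℕ} (hm : ∀ j, 2 ≤ m j)

theorem polygonMatrix_add_one (e : Fin (N + 3)) : polygonMatrix m hm e (e + 1) = m e := by
  simp [polygonMatrix]

theorem eq_add_one_of_polygonMatrix_ne_zero {i j : Fin (N + 3)} (hij : i ≠ j)
    (h : polygonMatrix m hm i j ≠ 0) : j = i + 1 ∨ i = j + 1 := by
  simp only [polygonMatrix, Matrix.of_apply] at h
  grind

variable {W : Type*} [Group W]

theorem noTripleDescent_of_one_le (cs : CoxeterSystem (polygonMatrix m hm) W) (hN : N ≠ 0) :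
    NoTripleDescent cs := by
  intro w i j k hij hjk hik hi hj hk
  have hedge {a b} (hab : a ≠ b) (ha : cs.IsLeftDescent w a) (hb : cs.IsLeftDescent w b) :=
    eq_add_one_of_polygonMatrix_ne_zero hm hab (exists_eq_braidWord_mul cs hab ha hb).1
  have := fin_add_three_ne hN
  have := fin_add_two_ne (N := N)
  rcases hedge hij hi hj with rfl | rfl <;> rcases hedge hjk hj hk with h | h <;>
    rcases hedge hik hi hk with h' | h' <;> grind

include hm in
theorem polygonMatrix_angle_pos (j : Fin (N + 3)) : 0 < Real.pi / m j := by
  have := hm j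
  positivity

include hm in
theorem polygonMatrix_angle_le (j : Fin (N + 3)) : Real.pi / m j ≤ Real.pi / 2 := by
  have : (2 : ℝ) ≤ m j := by exact_mod_cast hm j
  gcongr

theorem coxeterCartan_polygonMatrix (e : Fin (N + 3)) :
    coxeterCartan (polygonMatrix m hm) e (e + 1) = -2 * Real.cos (Real.pi / m e) := by
  rw [coxeterCartan, polygonMatrix_add_one]

end Polygon

section Triangle

variable {m : Fin (0 + 3) → ℕ} (hm : ∀ j, 2 ≤ m j)

theorem coxeterCartan_triangle (i j : Fin (0 + 3)) :
    coxeterCartan (polygonMatrix m hm) i j =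
      !![2, -2 * Real.cos (Real.pi / m 0), -2 * Real.cos (Real.pi / m 2);
        -2 * Real.cos (Real.pi / m 0), 2, -2 * Real.cos (Real.pi / m 1);
        -2 * Real.cos (Real.pi / m 2), -2 * Real.cos (Real.pi / m 1), 2] i j := by
  have h01 : coxeterCartan (polygonMatrix m hm) 0 1 = _ := coxeterCartan_polygonMatrix hm 0
  have h12 : coxeterCartan (polygonMatrix m hm) 1 2 = _ := coxeterCartan_polygonMatrix hm 1
  have h20 : coxeterCartan (polygonMatrix m hm) 2 0 = _ := coxeterCartan_polygonMatrix hm 2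
  have h10 := (coxeterCartan_symm _ _ _).trans h01
  have h21 := (coxeterCartan_symm _ _ _).trans h12
  have h02 := (coxeterCartan_symm _ _ _).trans h20
  fin_cases i <;> fin_cases j <;> simp [coxeterCartan_self, h01, h12, h20, h10, h21, h02]

theorem sin_le_cos_mul_sin_add {u v w : ℝ} (hu : 0 ≤ Real.sin u) (hw : 0 ≤ w) (huv : 0 ≤ u + v)
    (h : u + v + w ≤ Real.pi) :
    Real.sin v ≤ Real.cos u * Real.sin (u + v) + Real.cos w * Real.sin u := by
  have hcos : -Real.cos (u + v) ≤ Real.cos w := by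
    rw [← Real.cos_pi_sub]
    exact Real.cos_le_cos_of_nonneg_of_le_pi hw (by linarith) (by linarith)
  have hsin : Real.sin v = Real.cos u * Real.sin (u + v) - Real.cos (u + v) * Real.sin u := by
    rw [mul_comm, ← Real.sin_sub, add_sub_cancel_left]
  nlinarith

variable {W : Type*} [Group W]

theorem noTripleDescent_triangle (cs : CoxeterSystem (polygonMatrix m hm) W)
    (h : Real.pi / m 0 + Real.pi / m 1 + Real.pi / m 2 ≤ Real.pi) : NoTripleDescent cs := by
  have hpos := polygonMatrix_angle_pos hm
  have h0 := hpos 0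
  have h1 := hpos 1
  have h2 := hpos 2
  have hsin0 := Real.sin_pos_of_pos_of_lt_pi h0 (by linarith)
  have hsin1 := Real.sin_pos_of_pos_of_lt_pi h1 (by linarith)
  have hsin01 := Real.sin_pos_of_pos_of_lt_pi (add_pos h0 h1) (by linarith)
  have hrow0 := sin_le_cos_mul_sin_add hsin0.le h2.le (add_pos h0 h1).le h
  have hrow2 := sin_le_cos_mul_sin_add hsin1.le h2.le (add_pos h1 h0).le (by linarith)
  have hrow1 := Real.sin_add (Real.pi / m 0) (Real.pi / m 1)
  rw [add_comm (Real.pi / m 1)] at hrow2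
  have hsum (f : Fin (0 + 3) → ℝ) : ∑ i, f i = f 0 + f 1 + f 2 := Fin.sum_univ_three f
  intro w i j k hij hjk hik hi hj hk
  obtain ⟨l, hl⟩ := exists_not_isLeftDescent_of_coxeterCartan_nonpos cs
    (y := ![Real.sin (Real.pi / m 1), Real.sin (Real.pi / m 0 + Real.pi / m 1),
      Real.sin (Real.pi / m 0)])
    (by intro l; fin_cases l <;> assumption)
    (by
      intro i
      simp only [hsum, coxeterCartan_triangle]
      fin_cases i <;> simp <;> linarith) w
  have : l = i ∨ l = j ∨ l = k := by lia
  rcases this with rfl | rfl | rfl <;> contradiction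

theorem exists_quadratic_lower_bound {u v w : ℝ} (hu0 : 0 < u) (hu : u ≤ Real.pi / 2)
    (hv0 : 0 < v) (hv : v ≤ Real.pi / 2) (hw0 : 0 < w) (hw : w ≤ Real.pi / 2)
    (h : Real.pi < u + v + w) :
    ∃ ε > 0, ∀ a b c : ℝ, ε * (b ^ 2 + c ^ 2) ≤ a ^ 2 + b ^ 2 + c ^ 2 -
      2 * a * b * Real.cos u - 2 * b * c * Real.cos v - 2 * a * c * Real.cos w := by
  have hsinu := Real.sin_pos_of_pos_of_lt_pi hu0 (by linarith)
  have hsinw := Real.sin_pos_of_pos_of_lt_pi hw0 (by linarith)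
  have hcosu := Real.cos_nonneg_of_neg_pi_div_two_le_of_le (by linarith) hu
  have hcosv := Real.cos_nonneg_of_neg_pi_div_two_le_of_le (by linarith) hv
  have hcosw := Real.cos_nonneg_of_neg_pi_div_two_le_of_le (by linarith) hw
  set x := Real.sin w
  set y := Real.sin u
  set τ := (Real.cos v + Real.cos w * Real.cos u) / (x * y) with hτ
  have hxy : 0 < x * y := by positivity
  have hτ1 : τ < 1 := by
    have := Real.cos_lt_cos_of_nonneg_of_le_pi (x := Real.pi - (w + u)) (y := v) (by linarith)
      (by linarith) (by linarith)
    rw [Real.cos_pi_sub, Real.cos_add] at this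
    rw [hτ, div_lt_one hxy]
    linarith
  have hcos : Real.cos v = τ * (x * y) - Real.cos w * Real.cos u := by
    rw [hτ, div_mul_cancel₀ _ hxy.ne', add_sub_cancel_right]
  have hτ0 : 0 ≤ τ := by positivity
  refine ⟨(1 - τ) * min (x ^ 2) (y ^ 2),
    mul_pos (by linarith) (lt_min (by positivity) (by positivity)), fun a b c ↦ ?_⟩
  have hsquares : a ^ 2 + b ^ 2 + c ^ 2 - 2 * a * b * Real.cos u - 2 * b * c * Real.cos v -
      2 * a * c * Real.cos w = (a - b * Real.cos u - c * Real.cos w) ^ 2 +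
        τ * (b * y - c * x) ^ 2 + (1 - τ) * (b ^ 2 * y ^ 2 + c ^ 2 * x ^ 2) := by
    rw [hcos]
    linear_combination (-c ^ 2) * Real.sin_sq_add_cos_sq w + (-b ^ 2) * Real.sin_sq_add_cos_sq u
  have hmin : min (x ^ 2) (y ^ 2) * (b ^ 2 + c ^ 2) ≤ b ^ 2 * y ^ 2 + c ^ 2 * x ^ 2 := by
    nlinarith [sq_nonneg b, sq_nonneg c, min_le_left (x ^ 2) (y ^ 2), min_le_right (x ^ 2) (y ^ 2)]
  rw [hsquares, mul_assoc]
  nlinarith [sq_nonneg (a - b * Real.cos u - c * Real.cos w),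
    mul_nonneg hτ0 (sq_nonneg (b * y - c * x)),
    mul_le_mul_of_nonneg_left hmin (sub_nonneg.mpr hτ1.le)]

theorem exists_length_le_triangle (cs : CoxeterSystem (polygonMatrix m hm) W)
    (h : Real.pi < Real.pi / m 0 + Real.pi / m 1 + Real.pi / m 2) :
    ∃ B : ℕ, ∀ w, cs.length w ≤ B := by
  have hpos := polygonMatrix_angle_pos hm
  have hle := polygonMatrix_angle_le hm
  obtain ⟨ε₀, hε₀, h₀⟩ := exists_quadratic_lower_bound (hpos 0) (hle 0) (hpos 1) (hle 1)
    (hpos 2) (hle 2) h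
  obtain ⟨ε₁, hε₁, h₁⟩ := exists_quadratic_lower_bound (hpos 1) (hle 1) (hpos 2) (hle 2)
    (hpos 0) (hle 0) (by linarith)
  have hsum (f : Fin (0 + 3) → ℝ) : ∑ i, f i = f 0 + f 1 + f 2 := Fin.sum_univ_three f
  refine exists_length_le_of_coxeterCartan_posDef cs (lt_min hε₀ hε₁) fun a ↦ ?_
  simp only [hsum, coxeterCartan_triangle]
  simp only [Matrix.of_apply, Matrix.cons_val]
  have := h₀ (a 0) (a 1) (a 2)
  have := h₁ (a 1) (a 2) (a 0)
  nlinarith [sq_nonneg (a 0), sq_nonneg (a 1), sq_nonneg (a 2), min_le_left ε₀ ε₁,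
    min_le_right ε₀ ε₁]

end Triangle

section AngleSum

variable {N : ℕ} {m : Fin (N + 3) → ℕ} (hm : ∀ j, 2 ≤ m j) {W : Type*} [Group W]

theorem angle_sum_eq (m : Fin (0 + 3) → ℕ) :
    Real.pi / m 0 + Real.pi / m 1 + Real.pi / m 2 =
      Real.pi * (3 - ((∑ j, (1 - 1 / (m j : ℚ)) : ℚ) : ℝ)) := by
  rw [Fin.sum_univ_three]; push_cast; ring

include hm in
theorem eq_zero_of_sum_lt_two (h : ∑ j, (1 - 1 / (m j : ℚ)) < 2) : N = 0 := by
  by_contra hN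
  have hhalf j : (1 / 2 : ℚ) ≤ 1 - 1 / (m j : ℚ) := by
    have : (2 : ℚ) ≤ m j := by exact_mod_cast hm j
    have : 1 / (m j : ℚ) ≤ 1 / 2 := by gcongr
    linarith
  have hsum := (Finset.card_nsmul_le_sum Finset.univ _ _ fun j _ ↦ hhalf j).trans_lt h
  have : (1 : ℚ) ≤ N := by exact_mod_cast Nat.one_le_iff_ne_zero.mpr hN
  simp at hsum
  linarith

theorem noTripleDescent_of_two_le_sum (cs : CoxeterSystem (polygonMatrix m hm) W)
    (h : (2 : ℚ) ≤ ∑ j, (1 - 1 / (m j : ℚ))) : NoTripleDescent cs := by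
  rcases eq_or_ne N 0 with rfl | hN
  · refine noTripleDescent_triangle hm cs ?_
    have : (2 : ℝ) ≤ ((∑ j, (1 - 1 / (m j : ℚ)) : ℚ) : ℝ) := by exact_mod_cast h
    rw [angle_sum_eq]
    nlinarith [Real.pi_pos]
  · exact noTripleDescent_of_one_le hm cs hN

theorem exists_length_le_of_sum_lt_two (cs : CoxeterSystem (polygonMatrix m hm) W)
    (h : ∑ j, (1 - 1 / (m j : ℚ)) < 2) : ∃ B : ℕ, ∀ w, cs.length w ≤ B := by
  obtain rfl := eq_zero_of_sum_lt_two hm h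
  refine exists_length_le_triangle hm cs ?_
  have : ((∑ j, (1 - 1 / (m j : ℚ)) : ℚ) : ℝ) < 2 := by exact_mod_cast h
  rw [angle_sum_eq]
  nlinarith [Real.pi_pos]

end AngleSum

open Polynomial

/-! ### Deformed braid relations -/

section BraidSum

variable {I R A : Type*} [CommRing R] [Ring A] [Algebra R A]

/-- The product of the values of `f` along `alternatingWord i j k`. -/
def alternatingProd (f : I → A) (i j : I) (k : ℕ) : A := ((alternatingWord i j k).map f).prod

theorem alternatingProd_zero (f : I → A) (i j : I) : alternatingProd f i j 0 = 1 := rfl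

theorem alternatingProd_succ (f : I → A) (i j : I) (k : ℕ) :
    alternatingProd f i j (k + 1) = f (nextLetter i j k) * alternatingProd f i j k := by
  simp [alternatingProd, alternatingWord_succ_eq_cons]

theorem isUnit_alternatingProd {f : I → A} (hf : ∀ i, f i * f i = 1) (i j : I) (k : ℕ) :
    IsUnit (alternatingProd f i j k) := by
  induction k with
  | zero => exact isUnit_one
  | succ k ih =>
    rw [alternatingProd_succ]
    exact (isUnit_iff_exists.mpr ⟨_, hf _, hf _⟩).mul ih

/-- The alternating product which equals `⋯ f i * f j * f i * (f i * f j) ^ a`, with `m` factors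
in front of the power, after cancelling squares; see `alternatingProd_mul_pow`. -/
def reducedProd (f : I → A) (i j : I) (m a : ℕ) : A :=
  if m ≤ 2 * a then alternatingProd f i j (2 * a - m) else alternatingProd f j i (m - 2 * a)

theorem alternatingProd_mul_pow {f : I → A} (hf : ∀ i, f i * f i = 1) (i j : I) (m a : ℕ) :
    alternatingProd f j i m * (f i * f j) ^ a = reducedProd f i j m a := by
  rw [← prod_map_alternatingWord_two_mul]
  change _ * alternatingProd f i j (2 * a) = _
  induction m with
  | zero => simp [reducedProd, alternatingProd_zero]
  | succ m ih =>
    rw [alternatingProd_succ, mul_assoc, ih]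
    unfold reducedProd
    rcases lt_trichotomy m (2 * a) with h | h | h
    · obtain ⟨n, hn⟩ : ∃ n, 2 * a - m = n + 1 := ⟨2 * a - m - 1, by lia⟩
      have hletter : nextLetter j i m = nextLetter i j n := by
        rw [← nextLetter_succ, nextLetter, nextLetter]
        congr 1; simp only [Nat.even_iff, eq_iff_iff]; lia
      rw [if_pos h.le, if_pos (by lia), show 2 * a - (m + 1) = n by lia, hn, alternatingProd_succ,
        hletter, ← mul_assoc, hf, one_mul]
    · subst h
      rw [if_pos le_rfl, if_neg (by lia), Nat.sub_self, Nat.add_sub_cancel_left,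
        alternatingProd_succ]
      simp [nextLetter, alternatingProd_zero]
    · obtain ⟨n, rfl⟩ := Nat.exists_eq_add_of_lt h
      have hletter : nextLetter j i (2 * a + n + 1) = nextLetter j i (n + 1) := by
        simp [nextLetter, Nat.even_add_one, Nat.even_add]
      rw [if_neg (by lia), if_neg (by lia), hletter,
        show 2 * a + n + 1 + 1 - 2 * a = n + 1 + 1 by lia,
        show 2 * a + n + 1 - 2 * a = n + 1 by lia, ← alternatingProd_succ]

/-- The relation `p (f i * f j) = 0` for `p` of degree at most `m`, multiplied by an alternating
product with `m` factors so as to be centered: all its terms are alternating products with at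
most `m` factors, and this for arbitrary `f`. -/
def braidSum (p : R[X]) (f : I → A) (i j : I) (m : ℕ) : A :=
  ∑ a ∈ Finset.range (m + 1), p.coeff a • reducedProd f i j m a

theorem braidSum_eq {f : I → A} (hf : ∀ i, f i * f i = 1) (i j : I) {p : R[X]} {m : ℕ}
    (hp : p.natDegree ≤ m) :
    braidSum p f i j m = alternatingProd f j i m * aeval (f i * f j) p := by
  rw [aeval_eq_sum_range' (Nat.lt_succ_of_le hp), Finset.mul_sum]
  exact Finset.sum_congr rfl fun a _ ↦ by
    rw [mul_smul_comm, alternatingProd_mul_pow hf]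

theorem braidSum_reflect (p : R[X]) (f : I → A) (i j : I) (m : ℕ) :
    braidSum (p.reflect m) f j i m = braidSum p f i j m := by
  unfold braidSum
  rw [← Finset.sum_range_reflect]
  refine Finset.sum_congr rfl fun a ha ↦ ?_
  rw [Finset.mem_range] at ha
  rw [coeff_reflect, show m + 1 - 1 - a = m - a by lia, revAt_le (by lia),
    show m - (m - a) = a by lia]
  unfold reducedProd
  split_ifs
  · rw [show 2 * (m - a) - m = 0 by lia, show 2 * a - m = 0 by lia]; rfl
  · rw [show 2 * (m - a) - m = m - 2 * a by lia]
  · rw [show m - 2 * (m - a) = 2 * a - m by lia]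
  · lia

/-- The terms of `braidSum` with fewer than `m` factors. -/
def braidMiddle (p : R[X]) (f : I → A) (i j : I) (m : ℕ) : A :=
  ∑ a ∈ Finset.range (m - 1), p.coeff (a + 1) • reducedProd f i j m (a + 1)

theorem braidSum_eq_add_braidMiddle (p : R[X]) (f : I → A) (i j : I) {m : ℕ} (hm : m ≠ 0) :
    braidSum p f i j m = p.coeff m • alternatingProd f i j m +
      p.coeff 0 • alternatingProd f j i m + braidMiddle p f i j m := by
  obtain ⟨k, rfl⟩ := Nat.exists_eq_add_one_of_ne_zero hm
  have htop : reducedProd f i j (k + 1) (k + 1) = alternatingProd f i j (k + 1) := by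
    rw [reducedProd, if_pos (by lia), show 2 * (k + 1) - (k + 1) = k + 1 by lia]
  have hbot : reducedProd f i j (k + 1) 0 = alternatingProd f j i (k + 1) := by
    simp [reducedProd]
  rw [braidSum, braidMiddle, Finset.sum_range_succ, Finset.sum_range_succ', htop, hbot,
    Nat.add_sub_cancel]
  abel

theorem aeval_semiconjBy {a x y : A} (h : SemiconjBy a x y) (p : R[X]) :
    SemiconjBy a (aeval x p) (aeval y p) := by
  rw [aeval_eq_sum_range, aeval_eq_sum_range]
  simp only [SemiconjBy, Finset.mul_sum, Finset.sum_mul, mul_smul_comm, smul_mul_assoc,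
    (h.pow_right _).eq]

theorem aeval_mul_mul_of_mem {f : I → A} (hf : ∀ i, f i * f i = 1) {i j l : I}
    (hl : l = i ∨ l = j) (p : R[X]) :
    aeval (f i * f j) p * f l = f l * aeval (f j * f i) p := by
  refine (aeval_semiconjBy (x := f j * f i) (y := f i * f j) ?_ p).eq.symm
  rcases hl with rfl | rfl
  · simp only [SemiconjBy, mul_assoc]
  · rw [SemiconjBy, ← mul_assoc, hf, one_mul, mul_assoc, hf, mul_one]

end BraidSum

open Finsupp (single)

section CongrUpToUnit

variable {R V V' : Type*} [CommRing R] [AddCommGroup V] [Module R V] [AddCommGroup V'] [Module R V']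

/-- `x` and `y` agree modulo `F` up to a unit of the base ring. -/
def CongrUpToUnit (F : Submodule R V) (x y : V) : Prop := ∃ κ : Rˣ, x - κ • y ∈ F

namespace CongrUpToUnit

variable {F F' : Submodule R V} {x y z : V}

theorem refl (F : Submodule R V) (x : V) : CongrUpToUnit F x x := ⟨1, by simp⟩

theorem symm (h : CongrUpToUnit F x y) : CongrUpToUnit F y x := by
  obtain ⟨κ, hκ⟩ := h
  refine ⟨κ⁻¹, ?_⟩
  have := F.smul_mem (-(κ⁻¹ : Rˣ) : R) hκ
  rwa [neg_smul, ← Units.smul_def, smul_sub, inv_smul_smul, neg_sub] at this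

theorem trans (h : CongrUpToUnit F x y) (h' : CongrUpToUnit F y z) : CongrUpToUnit F x z := by
  obtain ⟨κ, hκ⟩ := h
  obtain ⟨κ', hκ'⟩ := h'
  refine ⟨κ * κ', ?_⟩
  have := F.add_mem hκ (F.smul_mem (κ : R) hκ')
  rwa [← Units.smul_def, smul_sub, smul_smul, sub_add_sub_cancel] at this

theorem mono (hF : F ≤ F') (h : CongrUpToUnit F x y) : CongrUpToUnit F' x y :=
  let ⟨κ, hκ⟩ := h; ⟨κ, hF hκ⟩

theorem map (h : CongrUpToUnit F x y) (f : V →ₗ[R] V') {F' : Submodule R V'}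
    (hf : ∀ v ∈ F, f v ∈ F') : CongrUpToUnit F' (f x) (f y) := by
  obtain ⟨κ, hκ⟩ := h
  exact ⟨κ, by simpa [Units.smul_def] using hf _ hκ⟩

theorem mem (h : CongrUpToUnit F x y) (hy : y ∈ F) : x ∈ F := by
  obtain ⟨κ, hκ⟩ := h
  simpa [Units.smul_def] using F.add_mem hκ (F.smul_mem (κ : R) hy)

theorem of_smul_add_smul_mem {a b : R} (ha : IsUnit a) (hb : IsUnit b)
    (h : a • x + b • y ∈ F) : CongrUpToUnit F x y := by
  obtain ⟨a, rfl⟩ := ha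
  obtain ⟨b, rfl⟩ := hb
  refine ⟨-(a⁻¹ * b), ?_⟩
  have := F.smul_mem ((a⁻¹ : Rˣ) : R) h
  simpa [Units.smul_def, smul_smul, smul_add, sub_eq_add_neg] using this

end CongrUpToUnit

end CongrUpToUnit

section BraidPolynomials

variable {I R : Type*} [CommRing R] {M : CoxeterMatrix I}

/-- Coefficients of the deformed braid relations `poly i j (s_i s_j) = 0` of order `M i j`.
The condition `reflect_eq` makes the relations for `s_i s_j` and for its inverse `s_j s_i`
equivalent. -/
structure BraidPolynomials (M : CoxeterMatrix I) (R : Type*) [CommRing R] where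
  poly : I → I → R[X]
  natDegree_le {i j : I} : i ≠ j → M i j ≠ 0 → (poly i j).natDegree ≤ M i j
  reflect_eq {i j : I} : i ≠ j → M i j ≠ 0 → (poly i j).reflect (M i j) = poly j i
  isUnit_coeff_zero {i j : I} : i ≠ j → M i j ≠ 0 → IsUnit ((poly i j).coeff 0)

namespace BraidPolynomials

/-- The polynomial annihilating `s_i s_j` on vectors of the parity of `n`: on odd vectors, the
relation `poly i j = 0` is imposed on `s_j s_i` instead of `s_i s_j`. -/
def level (P : BraidPolynomials M R) (n : ℕ) (i j : I) : R[X] :=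
  if Even n then P.poly i j else P.poly j i

variable (P : BraidPolynomials M R)

theorem level_add_one (n : ℕ) (i j : I) : P.level (n + 1) i j = P.level n j i := by
  by_cases hn : Even n <;> simp [level, Nat.even_add_one, hn]

theorem level_congr {n n' : ℕ} (h : n % 2 = n' % 2) : P.level n = P.level n' := by
  funext i j
  simp only [level, Nat.even_iff, h]

variable {P} {i j : I} (hij : i ≠ j) (h0 : M i j ≠ 0) (n : ℕ)
include hij h0

theorem natDegree_level_le : (P.level n i j).natDegree ≤ M i j := by
  unfold level
  split_ifs
  · exact P.natDegree_le hij h0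
  · rw [M.symmetric] at h0 ⊢
    exact P.natDegree_le hij.symm h0

theorem reflect_level : (P.level n i j).reflect (M i j) = P.level n j i := by
  unfold level
  split_ifs
  · exact P.reflect_eq hij h0
  · rw [M.symmetric] at h0 ⊢
    exact P.reflect_eq hij.symm h0

theorem isUnit_coeff_zero_level : IsUnit ((P.level n i j).coeff 0) := by
  unfold level
  split_ifs
  · exact P.isUnit_coeff_zero hij h0
  · exact P.isUnit_coeff_zero hij.symm (M.symmetric i j ▸ h0)

theorem isUnit_coeff_level : IsUnit ((P.level n i j).coeff (M i j)) := by
  have h := isUnit_coeff_zero_level (P := P) hij.symm (M.symmetric i j ▸ h0) n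
  rwa [← reflect_level hij h0, coeff_reflect, revAt_le (Nat.zero_le _), Nat.sub_zero] at h

end BraidPolynomials

end BraidPolynomials

section LengthFiltration

variable {I W : Type*} [Group W] {M : CoxeterMatrix I} (cs : CoxeterSystem M W)
variable (R : Type*) [CommRing R]

/-- The span of the elements of length less than `n` and congruent to `n` modulo `2`. -/
def lower (n : ℕ) : Submodule R (W →₀ R) :=
  Finsupp.supported R R {w | cs.length w < n ∧ cs.length w % 2 = n % 2}

variable {cs R} {n n' : ℕ} {V : Type*} [AddCommGroup V] [Module R V]

theorem single_mem_lower {w : W} (h : cs.length w < n) (h' : cs.length w % 2 = n % 2) :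
    single w 1 ∈ lower cs R n :=
  Finsupp.single_mem_supported R 1 ⟨h, h'⟩

theorem lower_mono (h : n ≤ n') (h' : n % 2 = n' % 2) : lower cs R n ≤ lower cs R n' :=
  Finsupp.supported_mono fun _ hw ↦ ⟨hw.1.trans_le h, hw.2.trans h'⟩

theorem map_mem_of_mem_supported {α : Type*} {s : Set α} {f : (α →₀ R) →ₗ[R] V}
    {F : Submodule R V} (hf : ∀ a ∈ s, f (single a 1) ∈ F) {x : α →₀ R}
    (hx : x ∈ Finsupp.supported R R s) : f x ∈ F := by
  suffices Finsupp.supported R R s ≤ F.comap f from this hx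
  rw [Finsupp.supported_eq_span_single, Submodule.span_le]
  rintro _ ⟨a, ha, rfl⟩
  exact hf a ha

theorem map_mem_of_mem_lower {f : (W →₀ R) →ₗ[R] V} {F : Submodule R V}
    (hf : ∀ v, cs.length v < n → cs.length v % 2 = n % 2 → f (single v 1) ∈ F)
    {x : W →₀ R} (hx : x ∈ lower cs R n) : f x ∈ F :=
  map_mem_of_mem_supported (fun v hv ↦ hf v hv.1 hv.2) hx

theorem map_eq_of_mem_lower {f g : (W →₀ R) →ₗ[R] V}
    (hfg : ∀ v, cs.length v < n → cs.length v % 2 = n % 2 → f (single v 1) = g (single v 1))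
    {x : W →₀ R} (hx : x ∈ lower cs R n) : f x = g x := by
  have h := map_mem_of_mem_lower (f := f - g) (F := ⊥)
    (fun v hv hv' ↦ by simp [hfg v hv hv']) hx
  rwa [Submodule.mem_bot, LinearMap.sub_apply, sub_eq_zero] at h

end LengthFiltration

section DihedralBottom

variable {I W : Type*} [Group W] {M : CoxeterMatrix I} (cs : CoxeterSystem M W)

/-- The simple reflections `s_i` and `s_j` generate a finite dihedral group `D`, and `d` is the
shortest element of the coset `D d`. -/
structure IsDihedralBottom (i j : I) (d : W) : Prop where
  ne : i ≠ j
  order_ne_zero : M i j ≠ 0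
  not_descent_left : ¬ cs.IsLeftDescent d i
  not_descent_right : ¬ cs.IsLeftDescent d j

namespace IsDihedralBottom

variable {cs} {i j i' j' : I} {d d' : W}

theorem swap (h : IsDihedralBottom cs i j d) : IsDihedralBottom cs j i d :=
  ⟨h.ne.symm, M.symmetric i j ▸ h.order_ne_zero, h.not_descent_right, h.not_descent_left⟩

theorem length_mul (h : IsDihedralBottom cs i j d) {k : ℕ} (hk : k ≤ M i j) :
    cs.length (cs.wordProd (alternatingWord i j k) * d) = cs.length d + k :=
  length_alternatingWord_mul cs h.ne h.not_descent_left h.not_descent_right (.inr hk)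

theorem simple_mul_braidWord_mul (h : IsDihedralBottom cs i j d) :
    cs.simple (nextLetter i j (M i j - 1)) * (cs.wordProd (braidWord M i j) * d) =
      cs.wordProd (alternatingWord i j (M i j - 1)) * d := by
  obtain ⟨k, hk⟩ := Nat.exists_eq_add_one_of_ne_zero h.order_ne_zero
  rw [braidWord, hk, wordProd_alternatingWord_succ_mul, Nat.add_sub_cancel,
    cs.simple_mul_simple_cancel_left]

theorem isLeftDescent_nextLetter (h : IsDihedralBottom cs i j d) :
    cs.IsLeftDescent (cs.wordProd (braidWord M i j) * d) (nextLetter i j (M i j - 1)) := by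
  rw [IsLeftDescent, h.simple_mul_braidWord_mul, h.length_mul (Nat.sub_le _ _), braidWord,
    h.length_mul le_rfl]
  exact Nat.add_lt_add_left (Nat.sub_one_lt h.order_ne_zero) _

theorem isLeftDescent_of_mem (h : IsDihedralBottom cs i j d) {l : I} (hl : l = i ∨ l = j) :
    cs.IsLeftDescent (cs.wordProd (braidWord M i j) * d) l := by
  rcases eq_nextLetter_or_eq_nextLetter_swap (M i j - 1) hl with rfl | rfl
  · exact h.isLeftDescent_nextLetter
  · rw [cs.wordProd_braidWord_eq, M.symmetric]
    exact h.swap.isLeftDescent_nextLetter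

theorem eq_or_eq_swap (hT : NoTripleDescent cs) (h : IsDihedralBottom cs i j d)
    (h' : IsDihedralBottom cs i' j' d')
    (heq : cs.wordProd (braidWord M i j) * d = cs.wordProd (braidWord M i' j') * d') :
    d' = d ∧ (i' = i ∧ j' = j ∨ i' = j ∧ j' = i) := by
  have mem_pair : ∀ {l}, l = i' ∨ l = j' → l = i ∨ l = j := by
    intro l hl
    by_contra! hne
    exact hT _ i j l h.ne hne.2.symm hne.1.symm (h.isLeftDescent_of_mem (.inl rfl))
      (h.isLeftDescent_of_mem (.inr rfl)) (heq ▸ h'.isLeftDescent_of_mem hl)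
  have hne := h'.ne
  rcases mem_pair (.inl rfl) with rfl | rfl <;> rcases mem_pair (.inr rfl) with rfl | rfl
  · exact absurd rfl hne
  · exact ⟨(mul_left_cancel heq).symm, .inl ⟨rfl, rfl⟩⟩
  · rw [cs.wordProd_braidWord_eq] at heq
    exact ⟨(mul_left_cancel heq).symm, .inr ⟨rfl, rfl⟩⟩
  · exact absurd rfl hne

end IsDihedralBottom

end DihedralBottom

/-! ### The deformed regular representation -/

section PartialModel

variable {I W : Type*} [Group W] {M : CoxeterMatrix I} (cs : CoxeterSystem M W)
variable {R : Type*} [CommRing R] (P : BraidPolynomials M R)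

/-- Operators on the free module on `W` whose values on the elements of length less than `n`
satisfy all those braid and quadratic relations which only involve these values. -/
structure IsPartialModel (n : ℕ) (L : I → Module.End R (W →₀ R)) : Prop where
  ascent (i : I) (v : W) : cs.length v < n → ¬ cs.IsLeftDescent v i →
    CongrUpToUnit (lower cs R (cs.length v + 1)) (L i (single v 1)) (single (cs.simple i * v) 1)
  descent (i : I) (v : W) : cs.length v < n → cs.IsLeftDescent v i →
    L i (single v 1) ∈ lower cs R (cs.length v + 1)
  involutive (i : I) (v : W) : cs.length v + 1 < n → ¬ cs.IsLeftDescent v i →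
    L i (L i (single v 1)) = single v 1
  braid (i j : I) (d : W) : IsDihedralBottom cs i j d → cs.length d + M i j ≤ n →
    braidSum (P.level (cs.length d) i j) L i j (M i j) (single d 1) = 0

/-- `L'` agrees with `L` on the elements of length less than `n`. -/
def AgreeBelow (n : ℕ) (L L' : I → Module.End R (W →₀ R)) : Prop :=
  ∀ i v, cs.length v < n → L' i (single v 1) = L i (single v 1)

variable {cs P} {n k : ℕ} {L L' : I → Module.End R (W →₀ R)} {i j : I} {v w d : W}

theorem AgreeBelow.apply_eq (hA : AgreeBelow cs n L L') (i : I) (hk : k ≤ n + 1) {x : W →₀ R}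
    (hx : x ∈ lower cs R k) : L' i x = L i x :=
  map_eq_of_mem_lower (fun v hv hv' ↦ hA i v (by lia)) hx

namespace IsPartialModel

theorem apply_single_mem (h : IsPartialModel cs P n L) (i : I) (hv : cs.length v < n) :
    L i (single v 1) ∈ lower cs R (cs.length v + 3) := by
  by_cases hi : cs.IsLeftDescent v i
  · exact lower_mono (by lia) (by lia) (h.descent i v hv hi)
  · have hlen := cs.not_isLeftDescent_iff.mp hi
    exact ((h.ascent i v hv hi).mono (lower_mono (by lia) (by lia))).mem
      (single_mem_lower (by lia) (by lia))

theorem apply_mem (h : IsPartialModel cs P n L) (i : I) (hk : k ≤ n) {x : W →₀ R}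
    (hx : x ∈ lower cs R k) : L i x ∈ lower cs R (k + 1) :=
  map_mem_of_mem_lower (fun _ _ _ ↦
    lower_mono (by lia) (by lia) (h.apply_single_mem i (by lia))) hx

theorem congrUpToUnit_apply (h : IsPartialModel cs P n L) (hv : cs.length v < n)
    (hi : ¬ cs.IsLeftDescent v i) {x : W →₀ R}
    (hx : CongrUpToUnit (lower cs R (cs.length v)) x (single v 1)) :
    CongrUpToUnit (lower cs R (cs.length v + 1)) (L i x) (single (cs.simple i * v) 1) :=
  (hx.map (L i) fun _ hy ↦ h.apply_mem i hv.le hy).trans (h.ascent i v hv hi)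

theorem congrUpToUnit_alternatingProd (h : IsPartialModel cs P n L)
    (hd : IsDihedralBottom cs i j d) (hk : k ≤ M i j) (hn : cs.length d + k ≤ n) :
    CongrUpToUnit (lower cs R (cs.length d + k)) (alternatingProd L i j k (single d 1))
      (single (cs.wordProd (alternatingWord i j k) * d) 1) := by
  induction k with
  | zero => simpa [alternatingProd_zero, alternatingWord_zero] using .refl _ _
  | succ k ih =>
    have hlen := hd.length_mul (k := k) (by lia)
    have hlen' := hd.length_mul hk
    rw [wordProd_alternatingWord_succ_mul] at hlen' ⊢
    rw [alternatingProd_succ, Module.End.mul_apply, ← add_assoc, ← hlen]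
    exact h.congrUpToUnit_apply (by lia) (cs.not_isLeftDescent_iff.mpr (by lia))
      (hlen ▸ ih (by lia) (by lia))

theorem alternatingProd_mem (h : IsPartialModel cs P n L) (hd : IsDihedralBottom cs i j d)
    (hk : k ≤ M i j) (hn : cs.length d + k ≤ n) :
    alternatingProd L i j k (single d 1) ∈ lower cs R (cs.length d + k + 2) := by
  have hlen := hd.length_mul hk
  exact ((h.congrUpToUnit_alternatingProd hd hk hn).mono (lower_mono (by lia) (by lia))).mem
    (single_mem_lower (by lia) (by lia))

theorem alternatingProd_congr (h : IsPartialModel cs P n L) (hA : AgreeBelow cs n L L')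
    (hd : IsDihedralBottom cs i j d) (hk : k ≤ M i j) (hn : cs.length d + k ≤ n) :
    alternatingProd L' i j k (single d 1) = alternatingProd L i j k (single d 1) := by
  induction k with
  | zero => rfl
  | succ k ih =>
    rw [alternatingProd_succ, alternatingProd_succ, Module.End.mul_apply, Module.End.mul_apply,
      ih (by lia) (by lia)]
    exact hA.apply_eq _ (by lia) (h.alternatingProd_mem hd (by lia) (by lia))

theorem braidMiddle_congr (h : IsPartialModel cs P n L) (hA : AgreeBelow cs n L L') (p : R[X])
    (hd : IsDihedralBottom cs i j d) (hn : cs.length d + M i j ≤ n + 1) :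
    braidMiddle p L' i j (M i j) (single d 1) = braidMiddle p L i j (M i j) (single d 1) := by
  simp only [braidMiddle, LinearMap.sum_apply, LinearMap.smul_apply]
  refine Finset.sum_congr rfl fun a ha ↦ ?_
  rw [Finset.mem_range] at ha
  unfold reducedProd
  split_ifs
  · rw [h.alternatingProd_congr hA hd (by lia) (by lia)]
  · rw [h.alternatingProd_congr hA hd.swap (by rw [M.symmetric]; lia) (by lia)]

theorem braidMiddle_mem (h : IsPartialModel cs P n L) (p : R[X])
    (hd : IsDihedralBottom cs i j d) (hn : cs.length d + M i j ≤ n + 1) :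
    braidMiddle p L i j (M i j) (single d 1) ∈ lower cs R (cs.length d + M i j) := by
  simp only [braidMiddle, LinearMap.sum_apply, LinearMap.smul_apply]
  refine Submodule.sum_mem _ fun a ha ↦ Submodule.smul_mem _ _ ?_
  rw [Finset.mem_range] at ha
  unfold reducedProd
  split_ifs
  · exact lower_mono (by lia) (by lia) (h.alternatingProd_mem hd (by lia) (by lia))
  · exact lower_mono (by lia) (by lia)
      (h.alternatingProd_mem hd.swap (by rw [M.symmetric]; lia) (by lia))

theorem congr (h : IsPartialModel cs P n L) (hA : AgreeBelow cs n L L') :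
    IsPartialModel cs P n L' where
  ascent i v hv hi := by rw [hA i v hv]; exact h.ascent i v hv hi
  descent i v hv hi := by rw [hA i v hv]; exact h.descent i v hv hi
  involutive i v hv hi := by
    rw [hA i v (by lia), hA.apply_eq i (by lia) (h.apply_single_mem i (by lia)),
      h.involutive i v hv hi]
  braid i j d hd hn := by
    rw [← h.braid i j d hd hn, braidSum_eq_add_braidMiddle _ _ _ _ hd.order_ne_zero,
      braidSum_eq_add_braidMiddle _ _ _ _ hd.order_ne_zero]
    simp only [LinearMap.add_apply, LinearMap.smul_apply]
    rw [h.alternatingProd_congr hA hd le_rfl hn,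
      h.alternatingProd_congr hA hd.swap (M.symmetric i j).le hn,
      h.braidMiddle_congr hA _ hd (by lia)]

theorem exists_alternatingProd_eq (h : IsPartialModel cs P n L) (hd : IsDihedralBottom cs i j d)
    (hn : cs.length d + M i j = n + 1) :
    ∃ κ : Rˣ, ∃ z ∈ lower cs R (n + 1), ∀ L', AgreeBelow cs n L L' →
      alternatingProd L' i j (M i j) (single d 1) =
        κ • L' (nextLetter i j (M i j - 1)) (single (cs.simple (nextLetter i j (M i j - 1)) *
          (cs.wordProd (braidWord M i j) * d)) 1) + z := by
  rw [hd.simple_mul_braidWord_mul]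
  obtain ⟨k, hk⟩ := Nat.exists_eq_add_one_of_ne_zero hd.order_ne_zero
  rw [hk, Nat.add_sub_cancel]
  obtain ⟨κ, hκ⟩ := h.congrUpToUnit_alternatingProd hd (k := k) (by lia) (by lia)
  rw [show cs.length d + k = n by lia] at hκ
  refine ⟨κ, _, h.apply_mem (nextLetter i j k) le_rfl hκ, fun L' hA ↦ ?_⟩
  rw [← hA.apply_eq (nextLetter i j k) n.le_succ hκ,
    ← h.alternatingProd_congr hA hd (by lia) (by lia), alternatingProd_succ,
    Module.End.mul_apply, map_sub, Units.smul_def, Units.smul_def, map_smul]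
  abel

theorem exists_braidSum_eq (h : IsPartialModel cs P n L) (hd : IsDihedralBottom cs i j d)
    (hn : cs.length d + M i j = n + 1) :
    ∃ α β : Rˣ, ∃ z ∈ lower cs R (n + 1), ∀ L', AgreeBelow cs n L L' →
      braidSum (P.level (cs.length d) i j) L' i j (M i j) (single d 1) =
        α • L' i (single (cs.simple i * (cs.wordProd (braidWord M i j) * d)) 1) +
        β • L' j (single (cs.simple j * (cs.wordProd (braidWord M i j) * d)) 1) + z := by
  set w := cs.wordProd (braidWord M i j) * d with hw
  set p := P.level (cs.length d) i j
  obtain ⟨κ, y, hy, hκ⟩ := h.exists_alternatingProd_eq hd hn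
  obtain ⟨κ', y', hy', hκ'⟩ := h.exists_alternatingProd_eq hd.swap (M.symmetric i j ▸ hn)
  rw [← cs.wordProd_braidWord_eq, M.symmetric, ← hw] at hκ'
  obtain ⟨u, hu⟩ := BraidPolynomials.isUnit_coeff_level (P := P) hd.ne hd.order_ne_zero
    (cs.length d)
  obtain ⟨u', hu'⟩ := BraidPolynomials.isUnit_coeff_zero_level (P := P) hd.ne hd.order_ne_zero
    (cs.length d)
  obtain ⟨z, hz, hbraid⟩ : ∃ z ∈ lower cs R (n + 1), ∀ L', AgreeBelow cs n L L' →
      braidSum p L' i j (M i j) (single d 1) =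
        (u * κ) • L' (nextLetter i j (M i j - 1))
          (single (cs.simple (nextLetter i j (M i j - 1)) * w) 1) +
        (u' * κ') • L' (nextLetter j i (M i j - 1))
          (single (cs.simple (nextLetter j i (M i j - 1)) * w) 1) + z := by
    refine ⟨u • y + u' • y' + braidMiddle p L i j (M i j) (single d 1),
      add_mem (add_mem (Submodule.smul_mem _ _ hy) (Submodule.smul_mem _ _ hy'))
        (hn ▸ h.braidMiddle_mem p hd hn.le), fun L' hA ↦ ?_⟩
    rw [braidSum_eq_add_braidMiddle _ _ _ _ hd.order_ne_zero]
    simp only [LinearMap.add_apply, LinearMap.smul_apply]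
    rw [hκ L' hA, hκ' L' hA, h.braidMiddle_congr hA p hd hn.le, ← hu, ← hu']
    simp only [smul_add, mul_smul, Units.smul_def]
    abel
  unfold nextLetter at hbraid
  split_ifs at hbraid
  · exact ⟨_, _, z, hz, fun L' hA ↦ by rw [hbraid L' hA, add_comm (_ • _)]⟩
  · exact ⟨_, _, z, hz, hbraid⟩

theorem exists_braid_values (hT : NoTripleDescent cs) (h : IsPartialModel cs P n L) (w : W)
    (hw : cs.length w = n + 1) :
    ∃ f : I → W →₀ R, (∀ i, CongrUpToUnit (lower cs R (n + 1)) (f i) (single w 1)) ∧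
      ∀ L', AgreeBelow cs n L L' →
        (∀ i, cs.IsLeftDescent w i → L' i (single (cs.simple i * w) 1) = f i) →
        ∀ i j d, IsDihedralBottom cs i j d → w = cs.wordProd (braidWord M i j) * d →
          braidSum (P.level (cs.length d) i j) L' i j (M i j) (single d 1) = 0 := by
  classical
  by_cases hex : ∃ i j d, IsDihedralBottom cs i j d ∧ w = cs.wordProd (braidWord M i j) * d
  swap
  · exact ⟨fun _ ↦ single w 1, fun _ ↦ .refl _ _,
      fun _ _ _ i j d hd hwd ↦ absurd ⟨i, j, d, hd, hwd⟩ hex⟩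
  obtain ⟨i, j, d, hd, hwd⟩ := hex
  have hn : cs.length d + M i j = n + 1 := by
    rw [← hw, hwd, braidWord, hd.length_mul le_rfl]
  obtain ⟨α, β, z, hz, hbraid⟩ := h.exists_braidSum_eq hd hn
  rw [← hwd] at hbraid
  refine ⟨fun l ↦ if l = i then single w 1 else -(β⁻¹ • (α • single w 1 + z)), fun l ↦ ?_,
    fun L' hA hL' i' j' d' hd' hwd' ↦ ?_⟩
  · beta_reduce
    split_ifs
    · exact .refl _ _
    · refine ⟨-(β⁻¹ * α), ?_⟩
      rw [Units.neg_smul, mul_smul, sub_neg_eq_add, smul_add, neg_add_rev, neg_add_cancel_right]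
      exact Submodule.neg_mem _ (Submodule.smul_mem _ ((β⁻¹ : Rˣ) : R) hz)
  · have hi := hL' i (hwd ▸ hd.isLeftDescent_of_mem (.inl rfl))
    have hj := hL' j (hwd ▸ hd.isLeftDescent_of_mem (.inr rfl))
    simp only [reduceIte, if_neg hd.ne.symm] at hi hj
    have hzero : braidSum (P.level (cs.length d) i j) L' i j (M i j) (single d 1) = 0 := by
      rw [hbraid L' hA, hi, hj, smul_neg, smul_inv_smul]
      abel
    obtain ⟨rfl, ⟨rfl, rfl⟩ | ⟨rfl, rfl⟩⟩ := hd.eq_or_eq_swap hT hd' (hwd ▸ hwd')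
    · exact hzero
    · rwa [← BraidPolynomials.reflect_level hd.ne hd.order_ne_zero, M.symmetric,
        M.symmetric, braidSum_reflect]

end IsPartialModel

end PartialModel

section Model

variable {I W : Type*} [Group W] {M : CoxeterMatrix I} {cs : CoxeterSystem M W}
variable {R : Type*} [CommRing R] {P : BraidPolynomials M R}

namespace IsPartialModel

variable {n : ℕ} {L : I → Module.End R (W →₀ R)} {i : I} {v : W}

theorem exists_descent_value (h : IsPartialModel cs P n L) (hv : cs.length v = n)
    (hi : cs.IsLeftDescent v i) :
    ∃ x ∈ lower cs R (n + 1), ∀ L', AgreeBelow cs n L L' → L' i (single v 1) = x →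
      L' i (L' i (single (cs.simple i * v) 1)) = single (cs.simple i * v) 1 := by
  have hlen := cs.isLeftDescent_iff.mp hi
  obtain ⟨κ, hκ⟩ := h.ascent i (cs.simple i * v) (by lia)
    (cs.isLeftDescent_iff_not_isLeftDescent_mul.mp hi)
  rw [cs.simple_mul_simple_cancel_left, hlen, hv] at hκ
  set u := single (cs.simple i * v) (1 : R)
  refine ⟨κ⁻¹ • (u - L i (L i u - κ • single v 1)), ?_, fun L' hA hL' ↦ ?_⟩
  · exact Submodule.smul_mem _ ((κ⁻¹ : Rˣ) : R) (sub_mem (single_mem_lower (by lia) (by lia))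
      (h.apply_mem i le_rfl hκ))
  · have hlead : L' i (L' i u) = κ • L' i (single v 1) + L' i (L i u - κ • single v 1) := by
      rw [hA i _ (by lia), map_sub, Units.smul_def, Units.smul_def, map_smul]
      abel
    rw [hlead, hL', smul_inv_smul, hA.apply_eq i n.le_succ hκ, sub_add_cancel]

theorem exists_succ (hT : NoTripleDescent cs) (h : IsPartialModel cs P n L) :
    ∃ L', IsPartialModel cs P (n + 1) L' ∧ AgreeBelow cs n L L' := by
  classical
  choose! F hF hbraid using h.exists_braid_values hT
  choose! D hD hinv using fun i v ↦ h.exists_descent_value (i := i) (v := v)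
  let L' : I → Module.End R (W →₀ R) := fun i ↦ Finsupp.linearCombination R fun v ↦
    if cs.length v < n then L i (single v 1)
    else if cs.IsLeftDescent v i then D i v else F (cs.simple i * v) i
  have hA : AgreeBelow cs n L L' := fun i v hv ↦ by simp [L', hv]
  have L'_descent : ∀ i v, cs.length v = n → cs.IsLeftDescent v i → L' i (single v 1) = D i v :=
    fun i v hv hi ↦ by simp [L', hv, hi]
  have L'_ascent : ∀ i v, cs.length v = n → ¬ cs.IsLeftDescent v i →
      L' i (single v 1) = F (cs.simple i * v) i := fun i v hv hi ↦ by simp [L', hv, hi]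
  have h' := h.congr hA
  refine ⟨L', ⟨fun i v hv hi ↦ ?_, fun i v hv hi ↦ ?_, fun i v hv hi ↦ ?_, fun i j d hd hn ↦ ?_⟩,
    hA⟩
  · obtain hv | hv := Nat.lt_succ_iff_lt_or_eq.mp hv
    · exact h'.ascent i v hv hi
    · rw [L'_ascent i v hv hi, hv]
      exact hF _ (hv ▸ cs.not_isLeftDescent_iff.mp hi) i
  · obtain hv | hv := Nat.lt_succ_iff_lt_or_eq.mp hv
    · exact h'.descent i v hv hi
    · rw [L'_descent i v hv hi, hv]
      exact hD i v hv hi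
  · obtain hv | hv := Nat.lt_succ_iff_lt_or_eq.mp hv
    · exact h'.involutive i v hv hi
    · have hlen : cs.length (cs.simple i * v) = n := (cs.not_isLeftDescent_iff.mp hi).trans hv
      have hdesc : cs.IsLeftDescent (cs.simple i * v) i := by
        rwa [cs.isLeftDescent_iff_not_isLeftDescent_mul, cs.simple_mul_simple_cancel_left]
      simpa using hinv i _ hlen hdesc L' hA (L'_descent i _ hlen hdesc)
  · obtain hn | hn := Nat.le_succ_iff.mp hn
    · exact h'.braid i j d hd hn
    · have hw := (hd.length_mul le_rfl).trans hn
      refine hbraid _ hw L' hA (fun l hl ↦ ?_) i j d hd rfl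
      have hlen := cs.isLeftDescent_iff.mp hl
      rw [L'_ascent l _ (by lia) (cs.isLeftDescent_iff_not_isLeftDescent_mul.mp hl),
        cs.simple_mul_simple_cancel_left]

theorem zero : IsPartialModel cs P 0 0 where
  ascent _ _ hv := absurd hv (Nat.not_lt_zero _)
  descent _ _ hv := absurd hv (Nat.not_lt_zero _)
  involutive _ _ hv := absurd hv (Nat.not_lt_zero _)
  braid _ _ _ hd hn := absurd (Nat.eq_zero_of_add_eq_zero_left (Nat.le_zero.mp hn))
    hd.order_ne_zero

end IsPartialModel

theorem exists_forall_isPartialModel (hT : NoTripleDescent cs) (P : BraidPolynomials M R) :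
    ∃ L, ∀ n, IsPartialModel cs P n L := by
  choose! next hnext hagree using
    fun n L (h : IsPartialModel cs P n L) ↦ h.exists_succ hT
  let Q : ℕ → I → Module.End R (W →₀ R) := Nat.rec 0 next
  have hQ : ∀ n, IsPartialModel cs P n (Q n) :=
    Nat.rec .zero fun n h ↦ hnext n _ h
  have Q_add : ∀ n k, AgreeBelow cs n (Q n) (Q (n + k)) := by
    intro n k i v hv
    induction k with
    | zero => rfl
    | succ k ih => exact (hagree _ _ (hQ (n + k)) i v (by lia)).trans ih
  refine ⟨fun i ↦ Finsupp.linearCombination R fun v ↦ Q (cs.length v + 1) i (single v 1),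
    fun n ↦ (hQ n).congr fun i v hv ↦ ?_⟩
  obtain ⟨k, rfl⟩ := Nat.exists_eq_add_of_le (Nat.succ_le_of_lt hv)
  rw [Finsupp.linearCombination_single, one_smul]
  exact (Q_add _ k i v (Nat.lt_succ_self _)).symm

variable {L : I → Module.End R (W →₀ R)} (hL : ∀ n, IsPartialModel cs P n L)
include hL

theorem mul_self_eq_one_of_isPartialModel (i : I) : L i * L i = 1 := by
  suffices ∀ w, L i (L i (single w 1)) = single w 1 from
    Finsupp.lhom_ext' fun w ↦ LinearMap.ext_ring (this w)
  intro w
  induction hn : cs.length w using Nat.strong_induction_on generalizing w with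
  | _ n ih =>
  subst hn
  by_cases hi : cs.IsLeftDescent w i
  swap
  · exact (hL (cs.length w + 2)).involutive i w (by lia) hi
  have hlen := cs.isLeftDescent_iff.mp hi
  have hi' := cs.isLeftDescent_iff_not_isLeftDescent_mul.mp hi
  obtain ⟨κ, hκ⟩ := (hL (cs.length w)).ascent i _ (by lia) hi'
  rw [cs.simple_mul_simple_cancel_left, hlen] at hκ
  set u := single (cs.simple i * w) (1 : R)
  have hu : L i (L i u) = u := (hL (cs.length w + 2)).involutive i _ (by lia) hi'
  have hfix : (L i * L i) (L i u - κ • single w 1) = L i u - κ • single w 1 :=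
    map_eq_of_mem_lower (g := LinearMap.id) (fun v hv _ ↦ ih _ hv v rfl) hκ
  rw [Module.End.mul_apply, map_sub, map_sub, hu, sub_right_inj, Units.smul_def, map_smul,
    map_smul] at hfix
  exact smul_left_cancel κ hfix

theorem aeval_level_apply_single_eq_zero {i j : I} (hij : i ≠ j) (h0 : M i j ≠ 0) (w : W) :
    aeval (L i * L j) (P.level (cs.length w) i j) (single w 1) = 0 := by
  have hsq := mul_self_eq_one_of_isPartialModel hL
  induction hn : cs.length w using Nat.strong_induction_on generalizing w i j with
  | _ n ih =>
  subst hn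
  by_cases hd : IsDihedralBottom cs i j w
  · have hbraid := (hL _).braid i j w hd le_rfl
    rw [braidSum_eq hsq _ _ (BraidPolynomials.natDegree_level_le hij h0 _),
      Module.End.mul_apply] at hbraid
    have hinj := (Module.End.isUnit_iff (alternatingProd L j i (M i j))).mp
      (isUnit_alternatingProd hsq j i (M i j))
    exact hinj.injective (hbraid.trans (map_zero _).symm)
  obtain ⟨l, hl, hdesc⟩ : ∃ l, (l = i ∨ l = j) ∧ cs.IsLeftDescent w l := by
    by_contra! hall
    exact hd ⟨hij, h0, hall i (.inl rfl), hall j (.inr rfl)⟩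
  have hlen := cs.isLeftDescent_iff.mp hdesc
  set u := single (cs.simple l * w) (1 : R)
  have hlead := (hL (cs.length w)).ascent l _ (by lia)
    (cs.isLeftDescent_iff_not_isLeftDescent_mul.mp hdesc)
  rw [cs.simple_mul_simple_cancel_left, hlen] at hlead
  have hLu : aeval (L i * L j) (P.level (cs.length w) i j) (L l u) = 0 := by
    have hcomm := aeval_mul_mul_of_mem (f := L) hsq hl (P.level (cs.length w) i j)
    rw [← Module.End.mul_apply, hcomm, ← hlen, P.level_add_one, Module.End.mul_apply,
      ih _ (by lia) hij.symm (M.symmetric i j ▸ h0) _ rfl, map_zero]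
  have hker := hlead.symm.map (aeval (L i * L j) (P.level (cs.length w) i j)) (F' := ⊥)
    fun x hx ↦ map_mem_of_mem_lower (fun v hv hv' ↦ by
      rw [← P.level_congr hv']; exact ih _ hv hij h0 v rfl) hx
  exact hker.mem hLu

end Model

/-! ### Reduced words and spanning -/

section ReducedWords

variable {I W : Type*} [Group W] {M : CoxeterMatrix I} {cs : CoxeterSystem M W} {i j : I} {w d : W}
  {ω : List I}

theorem isLeftDescent_wordProd_cons (h : cs.IsReduced (i :: ω)) :
    cs.IsLeftDescent (cs.wordProd (i :: ω)) i := by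
  rw [IsLeftDescent, cs.wordProd_cons, cs.simple_mul_simple_cancel_left, ← cs.wordProd_cons, h.eq,
    List.length_cons, Nat.lt_succ_iff]
  exact cs.length_wordProd_le ω

theorem IsDihedralBottom.exists_isReduced_cons (h : IsDihedralBottom cs i j (cs.wordProd ω))
    (hω : cs.IsReduced ω) : ∃ t, alternatingWord i j (M i j) ++ ω =
      nextLetter i j (M i j - 1) :: t ∧ cs.IsReduced (nextLetter i j (M i j - 1) :: t) ∧
      cs.wordProd (nextLetter i j (M i j - 1) :: t) =
        cs.wordProd (braidWord M i j) * cs.wordProd ω := by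
  have hcons : alternatingWord i j (M i j) ++ ω =
      nextLetter i j (M i j - 1) :: (alternatingWord i j (M i j - 1) ++ ω) := by
    rw [← List.cons_append, ← alternatingWord_succ_eq_cons, Nat.sub_one_add_one h.order_ne_zero]
  refine ⟨_, hcons, ?_, ?_⟩ <;> rw [← hcons]
  · rw [CoxeterSystem.IsReduced, cs.wordProd_append, h.length_mul le_rfl, hω.eq, List.length_append,
      length_alternatingWord, add_comm]
  · exact cs.wordProd_append _ _

theorem exists_isReduced_braid_move (hij : i ≠ j) (hi : cs.IsLeftDescent w i)
    (hj : cs.IsLeftDescent w j) :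
    ∃ a b ω t t', a ≠ b ∧ M a b ≠ 0 ∧ alternatingWord a b (M a b) ++ ω = i :: t ∧
      alternatingWord b a (M a b) ++ ω = j :: t' ∧ cs.IsReduced (i :: t) ∧
      cs.IsReduced (j :: t') ∧ cs.wordProd (i :: t) = w ∧ cs.wordProd (j :: t') = w := by
  obtain ⟨h0, d, hdi, hdj, rfl⟩ := exists_eq_braidWord_mul cs hij hi hj
  obtain ⟨ω, hω, rfl⟩ := cs.exists_isReduced d
  have hd : IsDihedralBottom cs i j (cs.wordProd ω) := ⟨hij, h0, hdi, hdj⟩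
  obtain ⟨t, hcons, hred, hprod⟩ := hd.exists_isReduced_cons hω
  obtain ⟨t', hcons', hred', hprod'⟩ := hd.swap.exists_isReduced_cons hω
  rw [← cs.wordProd_braidWord_eq] at hprod'
  rw [M.symmetric j i] at hcons' hred' hprod'
  by_cases hk : Even (M i j - 1)
  · simp only [nextLetter, hk, if_true] at hcons hcons' hred hred' hprod hprod'
    exact ⟨j, i, ω, t', t, hij.symm, M.symmetric i j ▸ h0, M.symmetric i j ▸ hcons',
      M.symmetric i j ▸ hcons, hred', hred, hprod', hprod⟩
  · simp only [nextLetter, hk, if_false] at hcons hcons' hred hred' hprod hprod'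
    exact ⟨i, j, ω, t, t', hij, h0, hcons, hcons', hred, hred', hprod, hprod'⟩

end ReducedWords

section BraidVector

variable {I W R V : Type*} [Group W] {M : CoxeterMatrix I} [CommRing R] [AddCommGroup V]
  [Module R V]

/-- The span of the vectors obtained from `v₀` by applying fewer than `n` of the operators `L`. -/
def wordSpan (L : I → Module.End R V) (v₀ : V) (n : ℕ) : Submodule R V :=
  Submodule.span R {x | ∃ ω : List I, ω.length < n ∧ (ω.map L).prod v₀ = x}

/-- Involutions `L` of a module and a vector `v₀` such that the deformed braid relations hold on
all vectors obtained from `v₀` by applying an even number of the involutions. -/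
structure IsBraidVector (P : BraidPolynomials M R) (L : I → Module.End R V) (v₀ : V) : Prop where
  involutive (i : I) : L i * L i = 1
  braid {i j : I} (hij : i ≠ j) (h0 : M i j ≠ 0) {ω : List I} (hω : Even ω.length) :
    aeval (L i * L j) (P.poly i j) ((ω.map L).prod v₀) = 0

variable {P : BraidPolynomials M R} {L : I → Module.End R V} {v₀ : V} {i j : I} {ω : List I} {n : ℕ}

theorem prod_map_cons_apply (L : I → Module.End R V) (v₀ : V) (i : I) (ω : List I) :
    ((i :: ω).map L).prod v₀ = L i ((ω.map L).prod v₀) := by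
  rw [List.map_cons, List.prod_cons, Module.End.mul_apply]

theorem prod_map_mem_wordSpan (hω : ω.length < n) : (ω.map L).prod v₀ ∈ wordSpan L v₀ n :=
  Submodule.subset_span ⟨ω, hω, rfl⟩

theorem apply_mem_wordSpan (i : I) {x : V} (hx : x ∈ wordSpan L v₀ n) :
    L i x ∈ wordSpan L v₀ (n + 1) := by
  suffices wordSpan L v₀ n ≤ (wordSpan L v₀ (n + 1)).comap (L i) from this hx
  refine Submodule.span_le.mpr ?_
  rintro _ ⟨ω, hω, rfl⟩
  exact Submodule.subset_span ⟨i :: ω, Nat.succ_lt_succ hω, by simp⟩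

theorem prod_map_alternatingWord_append (k : ℕ) :
    ((alternatingWord i j k ++ ω).map L).prod v₀ = alternatingProd L i j k ((ω.map L).prod v₀) := by
  simp [alternatingProd]

theorem alternatingProd_mem_wordSpan {k : ℕ} (hk : ω.length + k < n) :
    alternatingProd L i j k ((ω.map L).prod v₀) ∈ wordSpan L v₀ n := by
  rw [← prod_map_alternatingWord_append]
  exact prod_map_mem_wordSpan (by simpa [add_comm k] using hk)

theorem braidMiddle_mem_wordSpan (p : R[X]) (m : ℕ) :
    braidMiddle p L i j m ((ω.map L).prod v₀) ∈ wordSpan L v₀ (ω.length + m) := by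
  simp only [braidMiddle, LinearMap.sum_apply, LinearMap.smul_apply]
  refine Submodule.sum_mem _ fun a ha ↦ Submodule.smul_mem _ _ ?_
  rw [Finset.mem_range] at ha
  unfold reducedProd
  split_ifs <;> exact alternatingProd_mem_wordSpan (by lia)

namespace IsBraidVector

variable (h : IsBraidVector P L v₀) {cs : CoxeterSystem M W} {ω' : List I}
include h

theorem apply_prod_map_cons (i : I) (ω : List I) :
    L i (((i :: ω).map L).prod v₀) = (ω.map L).prod v₀ := by
  rw [prod_map_cons_apply, ← Module.End.mul_apply, h.involutive, Module.End.one_apply]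

theorem aeval_level_eq_zero (hij : i ≠ j) (h0 : M i j ≠ 0) (ω : List I) :
    aeval (L i * L j) (P.level ω.length i j) ((ω.map L).prod v₀) = 0 := by
  by_cases hω : Even ω.length
  · rw [BraidPolynomials.level, if_pos hω]
    exact h.braid hij h0 hω
  · have hω' : Even (i :: ω).length := by simpa [Nat.even_add_one] using hω
    rw [BraidPolynomials.level, if_neg hω, ← h.apply_prod_map_cons i ω, ← Module.End.mul_apply,
      aeval_mul_mul_of_mem (f := L) h.involutive (.inl rfl), Module.End.mul_apply,
      h.braid hij.symm (M.symmetric i j ▸ h0) hω', map_zero]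

theorem congrUpToUnit_alternatingWord_append (hij : i ≠ j) (h0 : M i j ≠ 0) (ω : List I) :
    CongrUpToUnit (wordSpan L v₀ (ω.length + M i j))
      (((alternatingWord i j (M i j) ++ ω).map L).prod v₀)
      (((alternatingWord j i (M i j) ++ ω).map L).prod v₀) := by
  have hsum : braidSum (P.level ω.length i j) L i j (M i j) ((ω.map L).prod v₀) = 0 := by
    rw [braidSum_eq h.involutive i j (BraidPolynomials.natDegree_level_le hij h0 _),
      Module.End.mul_apply, h.aeval_level_eq_zero hij h0, map_zero]
  rw [braidSum_eq_add_braidMiddle _ _ _ _ h0, LinearMap.add_apply] at hsum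
  rw [prod_map_alternatingWord_append, prod_map_alternatingWord_append]
  refine .of_smul_add_smul_mem (P.isUnit_coeff_level hij h0 ω.length)
    (P.isUnit_coeff_zero_level hij h0 ω.length) ?_
  rw [← LinearMap.smul_apply, ← LinearMap.smul_apply, ← LinearMap.add_apply,
    eq_neg_of_add_eq_zero_left hsum]
  exact neg_mem (braidMiddle_mem_wordSpan _ _)

theorem congrUpToUnit_of_wordProd_eq (hω : cs.IsReduced ω) (hω' : cs.IsReduced ω')
    (heq : cs.wordProd ω = cs.wordProd ω') :
    CongrUpToUnit (wordSpan L v₀ ω.length) ((ω.map L).prod v₀) ((ω'.map L).prod v₀) := by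
  induction hn : ω.length generalizing ω ω' with
  | zero =>
    have hlen : ω'.length = ω.length := by rw [← hω'.eq, ← heq, hω.eq]
    rw [List.length_eq_zero_iff.mp hn, List.length_eq_zero_iff.mp (hlen.trans hn)]
    exact .refl _ _
  | succ n ih =>
    have same_head : ∀ {l t t'}, cs.IsReduced (l :: t) → cs.IsReduced (l :: t') →
        (l :: t).length = n + 1 → cs.wordProd (l :: t) = cs.wordProd (l :: t') →
        CongrUpToUnit (wordSpan L v₀ (n + 1)) (((l :: t).map L).prod v₀)
          (((l :: t').map L).prod v₀) := by
      intro l t t' ht ht' hlen heq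
      rw [cs.wordProd_cons, cs.wordProd_cons, mul_right_inj] at heq
      have := ih (ht.drop 1) (ht'.drop 1) heq (Nat.succ_injective hlen)
      simpa using this.map (L l) fun x hx ↦ apply_mem_wordSpan l hx
    obtain ⟨i, t, rfl⟩ := List.exists_cons_of_length_eq_add_one hn
    obtain ⟨j, t', rfl⟩ := List.exists_cons_of_length_eq_add_one
      (show ω'.length = n + 1 by rw [← hω'.eq, ← heq, hω.eq, hn])
    by_cases hij : i = j
    · subst hij
      exact same_head hω hω' hn heq
    obtain ⟨a, b, τ, u, u', hab, h0, hu, hu', hred, hred', hprod, hprod'⟩ :=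
      exists_isReduced_braid_move hij (isLeftDescent_wordProd_cons hω)
        (heq ▸ isLeftDescent_wordProd_cons hω')
    have hlen : (i :: u).length = n + 1 := by rw [← hred.eq, hprod, hω.eq, hn]
    have hlen' : (j :: u').length = n + 1 := by rw [← hred'.eq, hprod', hω.eq, hn]
    have hbraid := h.congrUpToUnit_alternatingWord_append hab h0 τ
    have hlen_add : τ.length + M a b = n + 1 := by
      rw [← hlen, ← hu, List.length_append, length_alternatingWord, add_comm]
    rw [hu, hu', hlen_add] at hbraid
    exact ((same_head hω hred hn hprod.symm).trans hbraid).trans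
      (same_head hred' hω' hlen' (hprod'.trans heq))

theorem prod_map_mem_wordSpan_of_not_isReduced (hω : ¬ cs.IsReduced ω) :
    (ω.map L).prod v₀ ∈ wordSpan L v₀ ω.length := by
  induction ω with
  | nil => exact absurd cs.length_one hω
  | cons i t ih =>
    by_cases ht : cs.IsReduced t
    swap
    · simpa using apply_mem_wordSpan i (ih ht)
    have hi : cs.IsLeftDescent (cs.wordProd t) i := by
      by_contra hi
      rw [cs.not_isLeftDescent_iff, ← cs.wordProd_cons, ht.eq] at hi
      exact hω hi
    obtain ⟨t', ht', hprod⟩ := cs.exists_isReduced (cs.simple i * cs.wordProd t)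
    have hlen' := cs.isLeftDescent_iff.mp hi
    rw [hprod, ht'.eq, ht.eq] at hlen'
    have heq : cs.wordProd t = cs.wordProd (i :: t') := by
      rw [cs.wordProd_cons, ← hprod, cs.simple_mul_simple_cancel_left]
    have hred : cs.IsReduced (i :: t') := by
      rw [CoxeterSystem.IsReduced, ← heq, ht.eq, List.length_cons, hlen']
    have hcongr := (h.congrUpToUnit_of_wordProd_eq ht hred heq).map (L i)
      fun x hx ↦ apply_mem_wordSpan i hx
    rw [h.apply_prod_map_cons, ← prod_map_cons_apply] at hcongr
    exact hcongr.mem (prod_map_mem_wordSpan (by lia))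

theorem prod_map_mem_span {wd : W → List I} (hwd : ∀ w, cs.IsReduced (wd w))
    (hprod : ∀ w, cs.wordProd (wd w) = w) (ω : List I) :
    (ω.map L).prod v₀ ∈ Submodule.span R (Set.range fun w ↦ ((wd w).map L).prod v₀) := by
  induction hn : ω.length using Nat.strong_induction_on generalizing ω with
  | _ n ih =>
  subst hn
  have hlower : wordSpan L v₀ ω.length ≤
      Submodule.span R (Set.range fun w ↦ ((wd w).map L).prod v₀) := by
    refine Submodule.span_le.mpr ?_
    rintro _ ⟨ω', hω', rfl⟩
    exact ih _ hω' ω' rfl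
  by_cases hω : cs.IsReduced ω
  · exact ((h.congrUpToUnit_of_wordProd_eq hω (hwd _) (hprod _).symm).mono hlower).mem
      (Submodule.subset_span ⟨cs.wordProd ω, rfl⟩)
  · exact hlower (h.prod_map_mem_wordSpan_of_not_isReduced hω)

end IsBraidVector

end BraidVector

/-! ### Cocycles -/

section BraidCocycle

variable {I W R A : Type*} [Group W] {M : CoxeterMatrix I} [CommRing R] [Ring A] [Algebra R A]

/-- Elements of an algebra satisfying the relations of the products `t i j = s_i s_j` of two
generators of a deformed Coxeter group with braid relations `P`. -/
structure IsBraidCocycle {A : Type*} [Semiring A] [Algebra R A] (P : BraidPolynomials M R)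
    (t : I → I → A) : Prop where
  self (i : I) : t i i = 1
  mul (i j k : I) : t i j * t j k = t i k
  braid {i j : I} : i ≠ j → M i j ≠ 0 → aeval (t i j) (P.poly i j) = 0

/-- The involutions which the generators induce on the direct sum of two copies of an algebra,
thought of as its even part `A` and its odd part `s_o A`. -/
def doubledOperator (R : Type*) [CommRing R] [Algebra R A] (t : I → I → A) (o i : I) :
    Module.End R (A × A) :=
  (LinearMap.mulLeft R (t i o) ∘ₗ LinearMap.snd R A A).prod
    (LinearMap.mulLeft R (t o i) ∘ₗ LinearMap.fst R A A)

variable {P : BraidPolynomials M R} {t : I → I → A} {cs : CoxeterSystem M W}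

theorem doubledOperator_apply (o i : I) (x : A × A) :
    doubledOperator R t o i x = (t i o * x.2, t o i * x.1) := rfl

theorem prod_map_doubledOperator_inl (o : I) (ω : List I) :
    (Even ω.length → ((ω.map (doubledOperator R t o)).prod (1, 0)).2 = 0) ∧
    (¬ Even ω.length → ((ω.map (doubledOperator R t o)).prod (1, 0)).1 = 0) := by
  induction ω with
  | nil => simp
  | cons i ω ih =>
    rw [prod_map_cons_apply, doubledOperator_apply, List.length_cons, Nat.even_add_one, not_not]
    exact ⟨fun hω ↦ by rw [ih.2 hω, mul_zero], fun hω ↦ by rw [ih.1 hω, mul_zero]⟩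

theorem aeval_apply_of_intertwines {R V V' : Type*} [CommSemiring R] [AddCommMonoid V]
    [Module R V] [AddCommMonoid V'] [Module R V'] {T : Module.End R V} {T' : Module.End R V'}
    (f : V →ₗ[R] V') (hf : ∀ x, T' (f x) = f (T x)) (p : R[X]) (x : V) :
    aeval T' p (f x) = f (aeval T p x) := by
  induction p using Polynomial.induction_on' with
  | add p q hp hq => simp only [map_add, LinearMap.add_apply, hp, hq]
  | monomial n a =>
    have hpow : ∀ n : ℕ, (T' ^ n) (f x) = f ((T ^ n) x) := fun n ↦ by
      induction n with
      | zero => rfl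
      | succ n ih =>
        rw [pow_succ', pow_succ', Module.End.mul_apply, Module.End.mul_apply, ih, hf]
    simp [aeval_monomial, Module.algebraMap_end_apply, hpow]

namespace IsBraidCocycle

variable (ht : IsBraidCocycle P t)
include ht

theorem isBraidVector_doubledOperator (o : I) :
    IsBraidVector P (doubledOperator R t o) ((1, 0) : A × A) where
  involutive i := by
    refine LinearMap.ext fun x ↦ ?_
    simp only [Module.End.mul_apply, doubledOperator_apply, ← mul_assoc, ht.mul, ht.self, one_mul,
      Module.End.one_apply]
  braid {i j} hij h0 ω hω := by
    set x := (ω.map (doubledOperator R t o)).prod ((1, 0) : A × A)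
    have hx : x = LinearMap.inl R A A x.1 :=
      Prod.ext rfl ((prod_map_doubledOperator_inl o ω).1 hω)
    rw [hx, aeval_apply_of_intertwines (T := Algebra.lmul R A (t i j)) _ fun y ↦ ?_,
      aeval_algHom_apply, ht.braid hij h0, map_zero, LinearMap.zero_apply, map_zero]
    simp [doubledOperator_apply, ← mul_assoc, ht.mul]

theorem inl_mem_span (o : I) (hgen : Algebra.adjoin R (Set.range fun ij : I × I ↦ t ij.1 ij.2) = ⊤)
    (x : A) : ((x, 0) : A × A) ∈ Submodule.span R
      (Set.range fun ω : List I ↦ (ω.map (doubledOperator R t o)).prod ((1, 0) : A × A)) := by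
  set U := Submodule.span R
    (Set.range fun ω : List I ↦ (ω.map (doubledOperator R t o)).prod ((1, 0) : A × A)) with hU
  have apply_mem : ∀ i, ∀ y ∈ U, doubledOperator R t o i y ∈ U := by
    intro i
    change U ≤ U.comap (doubledOperator R t o i)
    rw [hU, Submodule.span_le]
    rintro _ ⟨ω, rfl⟩
    exact Submodule.subset_span ⟨i :: ω, prod_map_cons_apply _ _ i ω⟩
  have mul_mem : ∀ a : A, ((a, 0) : A × A) ∈ U → ((x * a, 0) : A × A) ∈ U := by
    have hx : x ∈ Algebra.adjoin R (Set.range fun ij : I × I ↦ t ij.1 ij.2) :=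
      hgen ▸ Algebra.mem_top
    induction hx using Algebra.adjoin_induction with
    | mem _ hy =>
      obtain ⟨⟨i, j⟩, rfl⟩ := hy
      intro a ha
      simpa [doubledOperator_apply, ← mul_assoc, ht.mul] using apply_mem i _ (apply_mem j _ ha)
    | algebraMap r => exact fun a ha ↦ by simpa [Algebra.smul_def] using U.smul_mem r ha
    | add y z _ _ hy hz => exact fun a ha ↦ by simpa [add_mul] using U.add_mem (hy a ha) (hz a ha)
    | mul y z _ _ hy hz => exact fun a ha ↦ by rw [mul_assoc]; exact hy _ (hz _ ha)
  simpa using mul_mem 1 (Submodule.subset_span ⟨[], rfl⟩)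

theorem inl_mem_span_of_isReduced (o : I)
    (hgen : Algebra.adjoin R (Set.range fun ij : I × I ↦ t ij.1 ij.2) = ⊤) {wd : W → List I}
    (hwd : ∀ w, cs.IsReduced (wd w)) (hprod : ∀ w, cs.wordProd (wd w) = w) (x : A) :
    ((x, 0) : A × A) ∈ Submodule.span R
      (Set.range fun w ↦ ((wd w).map (doubledOperator R t o)).prod ((1, 0) : A × A)) := by
  refine Submodule.span_le.mpr ?_ (ht.inl_mem_span o hgen x)
  rintro _ ⟨ω, rfl⟩
  exact (ht.isBraidVector_doubledOperator o).prod_map_mem_span hwd hprod ω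

theorem finite_of_length_le [Finite I] [Nonempty I]
    (hgen : Algebra.adjoin R (Set.range fun ij : I × I ↦ t ij.1 ij.2) = ⊤) {B : ℕ}
    (hB : ∀ w, cs.length w ≤ B) : Module.Finite R A := by
  choose wd hwd hprod using cs.exists_isReduced
  have : Finite W := by
    have hsub : Set.range wd ⊆ {ω | ω.length ≤ B} := by
      rintro _ ⟨w, rfl⟩
      exact (hwd w).eq.symm.trans_le (hB _)
    exact Set.finite_range_iff (Function.LeftInverse.injective fun w ↦ (hprod w).symm) |>.mp
      ((List.finite_length_le I B).subset hsub)
  obtain ⟨o⟩ := ‹Nonempty I›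
  refine Module.finite_def.mpr (Submodule.fg_def.mpr
    ⟨_, (Set.finite_range fun w ↦ ((wd w).map (doubledOperator R t o)).prod
      ((1, 0) : A × A)).image (LinearMap.fst R A A), top_unique fun x _ ↦ ?_⟩)
  rw [← Submodule.map_span]
  exact ⟨_, ht.inl_mem_span_of_isReduced o hgen hwd (fun w ↦ (hprod w).symm) x, rfl⟩

end IsBraidCocycle

end BraidCocycle

theorem linearIndependent_of_congrUpToUnit {ι R : Type*} [CommRing R] (ℓ : ι → ℕ) {v : ι → ι →₀ R}
    (hv : ∀ w, CongrUpToUnit (Finsupp.supported R R {u | ℓ u < ℓ w}) (v w) (single w 1)) :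
    LinearIndependent R v := by
  have coeff_eq : ∀ {w u}, ℓ w ≤ ℓ u → ∃ κ : Rˣ, v w u = κ * single w (1 : R) u := by
    intro w u hle
    obtain ⟨κ, hκ⟩ := hv w
    exact ⟨κ, sub_eq_zero.mp <| Finsupp.notMem_support_iff.mp fun hu ↦
      ((Finsupp.mem_supported R _).mp hκ hu).not_ge hle⟩
  rw [linearIndependent_iff]
  intro a ha
  by_contra hne
  obtain ⟨u, hu, hmax⟩ :=
    Finset.exists_max_image a.support ℓ (Finsupp.support_nonempty_iff.mpr hne)
  have hsum : ∑ w ∈ a.support, a w * v w u = 0 := by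
    simpa [Finsupp.linearCombination_apply, Finsupp.sum] using DFunLike.congr_fun ha u
  rw [Finset.sum_eq_single_of_mem u hu] at hsum
  · obtain ⟨κ, hκ⟩ := coeff_eq (le_refl (ℓ u))
    rw [hκ, Finsupp.single_eq_same, mul_one, Units.mul_left_eq_zero] at hsum
    exact Finsupp.mem_support_iff.mp hu hsum
  · intro w hw hwu
    obtain ⟨κ, hκ⟩ := coeff_eq (hmax w hw)
    rw [hκ, Finsupp.single_eq_of_ne hwu.symm, mul_zero, mul_zero]

section EvenPart

variable {I W R : Type*} [Group W] {M : CoxeterMatrix I} [CommRing R]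
variable (cs : CoxeterSystem M W)

variable (R) in
/-- The span of the elements of even length. -/
def evenPart : Submodule R (W →₀ R) :=
  Finsupp.supported R R {w | Even (cs.length w)}

variable {cs} {P : BraidPolynomials M R} {L : I → Module.End R (W →₀ R)}

variable (hL : ∀ n, IsPartialModel cs P n L)
include hL

theorem mul_apply_mem_evenPart (i j : I) {x : W →₀ R} (hx : x ∈ evenPart R cs) :
    (L i * L j) x ∈ evenPart R cs := by
  refine map_mem_of_mem_supported (fun w hw ↦ ?_) hx
  have hmem := (hL (cs.length w + 3)).apply_mem i le_rfl
    ((hL (cs.length w + 1)).apply_single_mem j (Nat.lt_succ_self _))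
  refine Finsupp.supported_mono (fun u hu ↦ ?_) hmem
  have hw' := Nat.even_iff.mp hw
  have hparity : cs.length u % 2 = (cs.length w + 3 + 1) % 2 := hu.2
  exact Nat.even_iff.mpr (by lia)

/-- The restriction of `L i * L j` to the span of the elements of even length. -/
def evenProduct (i j : I) : Module.End R (evenPart R cs) :=
  (L i * L j).restrict fun _ ↦ mul_apply_mem_evenPart hL i j

theorem coe_evenProduct (i j : I) (x : evenPart R cs) :
    (evenProduct hL i j x : W →₀ R) = L i (L j x) := rfl

theorem apply_apply_of_isPartialModel (i : I) (x : W →₀ R) : L i (L i x) = x :=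
  LinearMap.congr_fun (mul_self_eq_one_of_isPartialModel hL i) x

theorem isBraidCocycle_evenProduct : IsBraidCocycle P (evenProduct hL) where
  self i := LinearMap.ext fun x ↦ Subtype.ext (apply_apply_of_isPartialModel hL i x)
  mul i j k := LinearMap.ext fun x ↦ Subtype.ext <|
    congr_arg (L i) (apply_apply_of_isPartialModel hL j (L k x))
  braid {i j} hij h0 := by
    refine LinearMap.ext fun x ↦ Subtype.ext ?_
    have hzero := map_mem_of_mem_supported (f := aeval (L i * L j) (P.poly i j)) (F := ⊥)
      (fun w (hw : Even (cs.length w)) ↦ by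
        simpa [BraidPolynomials.level, hw] using aeval_level_apply_single_eq_zero hL hij h0 w) x.2
    exact (aeval_apply_of_intertwines (T := evenProduct hL i j) (evenPart R cs).subtype
      (fun _ ↦ rfl) _ x).symm.trans hzero

theorem congrUpToUnit_prod_map_apply_single_one {ω : List I} (hω : cs.IsReduced ω) :
    CongrUpToUnit (lower cs R ω.length) ((ω.map L).prod (single 1 1))
      (single (cs.wordProd ω) 1) := by
  induction ω with
  | nil => simpa using .refl _ _
  | cons i ω ih =>
    have hω' : cs.IsReduced ω := hω.drop 1
    have hi : ¬ cs.IsLeftDescent (cs.wordProd ω) i := by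
      rw [cs.not_isLeftDescent_iff, ← cs.wordProd_cons, hω.eq, hω'.eq, List.length_cons]
    rw [prod_map_cons_apply, cs.wordProd_cons, List.length_cons, ← hω'.eq]
    exact (hL _).congrUpToUnit_apply (Nat.lt_succ_self _) hi (by rw [hω'.eq]; exact ih hω')

theorem linearIndependent_prod_map_apply_single_one {wd : W → List I}
    (hwd : ∀ w, cs.IsReduced (wd w)) (hprod : ∀ w, cs.wordProd (wd w) = w) :
    LinearIndependent R fun w ↦ ((wd w).map L).prod (single (1 : W) (1 : R)) := by
  refine linearIndependent_of_congrUpToUnit cs.length fun w ↦ ?_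
  have hlead := congrUpToUnit_prod_map_apply_single_one hL (hwd w)
  rw [← (hwd w).eq, hprod] at hlead
  exact hlead.mono (Finsupp.supported_mono fun _ hu ↦ hu.1)

end EvenPart

section Freeness

variable {I W R A : Type*} [Group W] {M : CoxeterMatrix I} [CommRing R] [Ring A] [Algebra R A]
variable {cs : CoxeterSystem M W} {P : BraidPolynomials M R} {t : I → I → A}

theorem linearIndependent_prod_map_doubledOperator {L : I → Module.End R (W →₀ R)}
    (hL : ∀ n, IsPartialModel cs P n L) (φ : A →ₐ[R] Module.End R (evenPart R cs))
    (hφ : ∀ i j, φ (t i j) = evenProduct hL i j) (o : I) {wd : W → List I}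
    (hwd : ∀ w, cs.IsReduced (wd w)) (hprod : ∀ w, cs.wordProd (wd w) = w) :
    LinearIndependent R fun w ↦
      ((wd w).map (doubledOperator R t o)).prod ((1, 0) : A × A) := by
  have h_one : single 1 1 ∈ evenPart R cs := Finsupp.single_mem_supported R 1 (by simp)
  let f : A →ₗ[R] W →₀ R :=
    (evenPart R cs).subtype ∘ₗ LinearMap.applyₗ ⟨single 1 1, h_one⟩ ∘ₗ φ.toLinearMap
  have f_mul : ∀ i j x, f (t i j * x) = L i (L j (f x)) := fun i j x ↦ by
    simp [f, hφ, coe_evenProduct]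
  let Φ : A × A →ₗ[R] W →₀ R := f.coprod (L o ∘ₗ f)
  have intertwines : ∀ i x, Φ (doubledOperator R t o i x) = L i (Φ x) := fun i x ↦ by
    simp [Φ, doubledOperator_apply, f_mul, apply_apply_of_isPartialModel hL, add_comm]
  have map_word : ∀ ω : List I,
      Φ ((ω.map (doubledOperator R t o)).prod (1, 0)) = (ω.map L).prod (single 1 1) := by
    intro ω
    induction ω with
    | nil => simp [Φ, f]
    | cons i ω ih => rw [prod_map_cons_apply, prod_map_cons_apply, intertwines, ih]
  refine .of_comp Φ ?_
  simpa only [Function.comp_def, map_word] using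
    linearIndependent_prod_map_apply_single_one hL hwd hprod

theorem IsBraidCocycle.free [Nonempty I] (ht : IsBraidCocycle P t) (hT : NoTripleDescent cs)
    (hgen : Algebra.adjoin R (Set.range fun ij : I × I ↦ t ij.1 ij.2) = ⊤)
    (huniv : ∀ C : I → I → Module.End R (evenPart R cs), IsBraidCocycle P C →
      ∃ φ : A →ₐ[R] Module.End R (evenPart R cs), ∀ i j, φ (t i j) = C i j) :
    Module.Free R A := by
  obtain ⟨o⟩ := ‹Nonempty I›
  obtain ⟨L, hL⟩ := exists_forall_isPartialModel hT P
  obtain ⟨φ, hφ⟩ := huniv _ (isBraidCocycle_evenProduct hL)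
  choose wd hwd hprod using cs.exists_isReduced
  let word (w : W) : A × A := ((wd w).map (doubledOperator R t o)).prod (1, 0)
  let b (w : {w // Even (wd w).length}) : A := (word w).1
  have inl_b : ∀ w, LinearMap.inl R A A (b w) = word w := fun w ↦
    Prod.ext rfl ((prod_map_doubledOperator_inl o _).1 w.2).symm
  have hindep : LinearIndependent R b := by
    refine .of_comp (LinearMap.inl R A A) ?_
    simp only [Function.comp_def, inl_b]
    exact (linearIndependent_prod_map_doubledOperator hL φ hφ o hwd fun w ↦ (hprod w).symm).comp _
      Subtype.val_injective
  refine .of_basis (.mk hindep fun x _ ↦ ?_)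
  have hx := Submodule.mem_map_of_mem (f := LinearMap.fst R A A)
    (ht.inl_mem_span_of_isReduced o hgen hwd (fun w ↦ (hprod w).symm) x)
  rw [Submodule.map_span] at hx
  refine Submodule.span_le.mpr ?_ hx
  rintro _ ⟨_, ⟨w, rfl⟩, rfl⟩
  by_cases hw : Even (wd w).length
  · exact Submodule.subset_span ⟨⟨w, hw⟩, rfl⟩
  · rw [LinearMap.fst_apply, (prod_map_doubledOperator_inl o _).2 hw]
    exact zero_mem _

end Freeness

/-! ### Polygonal Fuchsian groups -/

section PolygonCocycle

theorem partialProd_last {G : Type*} [Monoid G] {n : ℕ} (c : Fin n → G) :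
    Fin.partialProd c (Fin.last n) = (List.ofFn c).prod := by
  rw [Fin.partialProd, List.take_of_length_le (by simp)]

/-- The product `c i * ⋯ * c (j - 1)` over the cyclic interval from `i` to `j`, for elements `c`
whose total product is `1`. -/
def polygonCocycle {G : Type*} [Group G] {n : ℕ} (c : Fin (n + 1) → G) (i j : Fin (n + 1)) : G :=
  (Fin.partialProd c i.castSucc)⁻¹ * Fin.partialProd c j.castSucc

theorem polygonCocycle_add_one {G : Type*} [Group G] {n : ℕ} {c : Fin (n + 1) → G}
    (hc : (List.ofFn c).prod = 1) (i : Fin (n + 1)) : polygonCocycle c i (i + 1) = c i := by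
  have hsucc : Fin.partialProd c (i + 1).castSucc = Fin.partialProd c i.succ := by
    rcases eq_or_ne i (Fin.last n) with rfl | hi
    · rw [Fin.last_add_one, Fin.castSucc_zero, Fin.partialProd_zero, Fin.succ_last,
        partialProd_last, hc]
    · congr 1
      ext
      rw [Fin.val_succ, Fin.val_castSucc, Fin.val_add_one_of_lt (Fin.lt_last_iff_ne_last.mpr hi)]
  rw [polygonCocycle, hsucc, Fin.partialProd_right_inv]

variable {A : Type*} [Monoid A] {n : ℕ}

variable {t t' : Fin (n + 1) → Fin (n + 1) → A}

theorem cocycle_ext (hself : ∀ i, t i i = 1) (hmul : ∀ i j k, t i j * t j k = t i k)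
    (hself' : ∀ i, t' i i = 1) (hmul' : ∀ i j k, t' i j * t' j k = t' i k)
    (h : ∀ e, t e (e + 1) = t' e (e + 1)) : t = t' := by
  have zero_left : ∀ j, t 0 j = t' 0 j := by
    intro j
    induction j using Fin.induction with
    | zero => rw [hself, hself']
    | succ j ih =>
      rw [← Fin.coeSucc_eq_succ, ← hmul 0 j.castSucc, ih, h, hmul']
  have zero_right : ∀ i, t i 0 = t' i 0 := fun i ↦
    left_inv_eq_right_inv (a := t 0 i) (by rw [hmul, hself])
      (by rw [zero_left, hmul', hself'])
  funext i j
  rw [← hmul i 0 j, zero_left, zero_right, hmul']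

theorem prod_ofFn_cocycle (hself : ∀ i, t i i = 1) (hmul : ∀ i j k, t i j * t j k = t i k) :
    (List.ofFn fun e ↦ t e (e + 1)).prod = 1 := by
  have partialProd_eq : ∀ i : Fin (n + 1),
      Fin.partialProd (fun e ↦ t e (e + 1)) i.castSucc = t 0 i := by
    intro i
    induction i using Fin.induction with
    | zero => simp [hself]
    | succ i ih =>
      rw [Fin.castSucc_succ, Fin.partialProd_succ, ih, hmul, Fin.coeSucc_eq_succ]
  rw [← partialProd_last, ← Fin.succ_last, Fin.partialProd_succ, partialProd_eq, hmul,
    Fin.last_add_one, hself]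

end PolygonCocycle

section PolygonPolynomials

theorem aeval_inv_reflect_mul_pow {R A : Type*} [CommSemiring R] [Semiring A] [Algebra R A]
    (x : Aˣ) {p : R[X]} {n : ℕ} (hp : p.natDegree ≤ n) :
    aeval (↑x⁻¹ : A) (p.reflect n) * (x : A) ^ n = aeval (x : A) p := by
  rw [aeval_eq_sum_range' (n := n + 1) (natDegree_reflect_le.trans_lt (by grind)),
    aeval_eq_sum_range' (Nat.lt_succ_of_le hp), Finset.sum_mul, ← Finset.sum_range_reflect]
  refine Finset.sum_congr rfl fun k hk ↦ ?_
  have hk : k ≤ n := Nat.lt_succ_iff.mp (Finset.mem_range.mp hk)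
  have hpow : x⁻¹ ^ (n - k) * x ^ n = x ^ k := by
    rw [inv_pow, inv_mul_eq_iff_eq_mul, ← pow_add, Nat.sub_add_cancel hk]
  rw [Nat.add_sub_cancel, coeff_reflect, revAt_le (Nat.sub_le n k), Nat.sub_sub_self hk,
    smul_mul_assoc]
  exact_mod_cast congr_arg (fun u : Aˣ ↦ p.coeff k • (u : A)) hpow

variable {R : Type*} [CommRing R] {N : ℕ} {m : Fin (N + 3) → ℕ} {p : Fin (N + 3) → R[X]}

/-- The braid relations imposing `p e (s_e s_{e + 1}) = 0` on the sides of a polygon. -/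
def polygonPolynomials (hm : ∀ j, 2 ≤ m j) (hdeg : ∀ e, (p e).natDegree ≤ m e)
    (htop : ∀ e, IsUnit ((p e).coeff (m e))) (h0 : ∀ e, IsUnit ((p e).coeff 0)) :
    BraidPolynomials (polygonMatrix m hm) R where
  poly i j := if j = i + 1 then p i else (p j).reflect (m j)
  natDegree_le {i j} hij hne := by
    rcases eq_add_one_of_polygonMatrix_ne_zero hm hij hne with rfl | rfl
    · simpa [polygonMatrix_add_one] using hdeg i
    · rw [(polygonMatrix m hm).symmetric, polygonMatrix_add_one, if_neg (fin_add_two_ne j).symm]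
      exact natDegree_reflect_le.trans (max_le le_rfl (hdeg j))
  reflect_eq {i j} hij hne := by
    rcases eq_add_one_of_polygonMatrix_ne_zero hm hij hne with rfl | rfl
    · simp [polygonMatrix_add_one, (fin_add_two_ne i).symm]
    · rw [(polygonMatrix m hm).symmetric]
      simp [polygonMatrix_add_one, (fin_add_two_ne j).symm]
  isUnit_coeff_zero {i j} hij hne := by
    rcases eq_add_one_of_polygonMatrix_ne_zero hm hij hne with rfl | rfl
    · simpa using h0 i
    · simpa [(fin_add_two_ne j).symm, coeff_reflect] using htop j

variable (hm : ∀ j, 2 ≤ m j) (hdeg : ∀ e, (p e).natDegree ≤ m e)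
  (htop : ∀ e, IsUnit ((p e).coeff (m e))) (h0 : ∀ e, IsUnit ((p e).coeff 0))

theorem polygonPolynomials_add_one (e : Fin (N + 3)) :
    (polygonPolynomials hm hdeg htop h0).poly e (e + 1) = p e :=
  if_pos rfl

theorem polygonPolynomials_swap (e : Fin (N + 3)) :
    (polygonPolynomials hm hdeg htop h0).poly (e + 1) e = (p e).reflect (m e) :=
  if_neg (fin_add_two_ne e).symm

theorem isBraidCocycle_polygonCocycle {A : Type*} [Semiring A] [Algebra R A]
    {c : Fin (N + 3) → Aˣ} (hprod : (List.ofFn c).prod = 1) (hc : ∀ e, aeval (c e : A) (p e) = 0) :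
    IsBraidCocycle (polygonPolynomials hm hdeg htop h0)
      fun i j ↦ ((polygonCocycle c i j : Aˣ) : A) where
  self i := by simp [polygonCocycle]
  mul i j k := by simp only [polygonCocycle, ← Units.val_mul, mul_assoc, mul_inv_cancel_left]
  braid {i j} hij hne := by
    rcases eq_add_one_of_polygonMatrix_ne_zero hm hij hne with rfl | rfl
    · rw [polygonCocycle_add_one hprod, polygonPolynomials_add_one, hc]
    · have hinv : polygonCocycle c (j + 1) j = (c j)⁻¹ := by
        rw [← polygonCocycle_add_one hprod j, polygonCocycle, polygonCocycle, mul_inv_rev, inv_inv]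
      have h := aeval_inv_reflect_mul_pow (c j) (hdeg j)
      rwa [hc, ← Units.val_pow_eq_pow_val, Units.mul_left_eq_zero, ← hinv,
        ← polygonPolynomials_swap hm hdeg htop h0] at h

end PolygonPolynomials

section PolygonAlgebra

theorem isUnit_of_aeval_eq_zero {R A : Type*} [CommRing R] [Ring A] [Algebra R A] {p : R[X]}
    (h0 : IsUnit (p.coeff 0)) {x : A} (hx : aeval x p = 0) : IsUnit x := by
  have hcomm : Commute x (aeval x p.divX) := by
    simpa using (Commute.all X p.divX).map (aeval x)
  rw [← X_mul_divX_add p, map_add, map_mul, aeval_X, aeval_C] at hx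
  have hunit : IsUnit (x * aeval x p.divX) := by
    rw [eq_neg_of_add_eq_zero_left hx]
    exact (h0.map _).neg
  exact (hcomm.isUnit_mul_iff.mp hunit).1

variable {R : Type*} [CommRing R] {r : ℕ}

/-- The relations `p j (c_j) = 0` and `c_1 ⋯ c_r = 1` on the free algebra on `c_1, …, c_r`. -/
def polygonRel (p : Fin r → R[X]) (a b : FreeAlgebra R (Fin r)) : Prop :=
  (∃ j, a = aeval (FreeAlgebra.ι R j) (p j) ∧ b = 0) ∨
    (a = (List.ofFn fun j ↦ FreeAlgebra.ι R j).prod ∧ b = 1)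

/-- The deformed group algebra of a polygonal Fuchsian group in which the generator `c_j` is a root
of `p j` rather than of `X ^ m_j - 1`. -/
abbrev PolygonAlgebra (p : Fin r → R[X]) : Type _ := RingQuot (polygonRel p)

namespace PolygonAlgebra

/-- The generator `c_j` of the algebra. -/
def gen (p : Fin r → R[X]) (j : Fin r) : PolygonAlgebra p :=
  RingQuot.mkAlgHom R (polygonRel p) (FreeAlgebra.ι R j)

variable (p : Fin r → R[X])

theorem aeval_gen (j : Fin r) : aeval (gen p j) (p j) = 0 := by
  rw [gen, aeval_algHom_apply, RingQuot.mkAlgHom_rel R (s := polygonRel p) (.inl ⟨j, rfl, rfl⟩),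
    map_zero]

theorem prod_ofFn_gen : (List.ofFn (gen p)).prod = 1 := by
  have h := RingQuot.mkAlgHom_rel R (s := polygonRel p) (.inr ⟨rfl, rfl⟩)
  rwa [map_one, map_list_prod, List.map_ofFn] at h

theorem adjoin_range_gen : Algebra.adjoin R (Set.range (gen p)) = ⊤ := by
  have hrange : Set.range (gen p) =
      RingQuot.mkAlgHom R (polygonRel p) '' Set.range (FreeAlgebra.ι R) := (Set.range_comp _ _)
  rw [hrange, ← AlgHom.map_adjoin, FreeAlgebra.adjoin_range_ι, Algebra.map_top,
    AlgHom.range_eq_top]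
  exact RingQuot.mkAlgHom_surjective _ _

variable {p}

theorem exists_algHom_gen_eq {B : Type*} [Semiring B] [Algebra R B] {x : Fin r → B}
    (hx : ∀ j, aeval (x j) (p j) = 0) (hprod : (List.ofFn x).prod = 1) :
    ∃ φ : PolygonAlgebra p →ₐ[R] B, ∀ j, φ (gen p j) = x j := by
  have hrel : ∀ ⦃a b⦄, polygonRel p a b → FreeAlgebra.lift R x a = FreeAlgebra.lift R x b := by
    rintro _ _ (⟨j, rfl, rfl⟩ | ⟨rfl, rfl⟩)
    · rw [← aeval_algHom_apply, FreeAlgebra.lift_ι_apply, hx, map_zero]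
    · simp [map_list_prod, List.map_ofFn, Function.comp_def, hprod]
  exact ⟨RingQuot.liftAlgHom R ⟨_, hrel⟩, fun j ↦ by simp [gen]⟩

theorem exists_units (h0 : ∀ j, IsUnit ((p j).coeff 0)) :
    ∃ c : Fin r → (PolygonAlgebra p)ˣ, (∀ j, ↑(c j) = gen p j) ∧ (List.ofFn c).prod = 1 := by
  choose c hc using fun j ↦ isUnit_of_aeval_eq_zero (h0 j) (aeval_gen p j)
  refine ⟨c, hc, Units.ext ?_⟩
  have h := map_list_prod (Units.coeHom (PolygonAlgebra p)) (List.ofFn c)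
  rw [List.map_ofFn, show ⇑(Units.coeHom _) ∘ c = gen p from funext hc, prod_ofFn_gen] at h
  exact h

section Flatness

variable {N : ℕ} {p : Fin (N + 3) → R[X]}

theorem adjoin_range_polygonCocycle {c : Fin (N + 3) → (PolygonAlgebra p)ˣ}
    (hc : ∀ j, ↑(c j) = gen p j) (hprod : (List.ofFn c).prod = 1) :
    Algebra.adjoin R (Set.range fun ij : Fin (N + 3) × Fin (N + 3) ↦
      (↑(polygonCocycle c ij.1 ij.2) : PolygonAlgebra p)) = ⊤ := by
  refine top_unique ((adjoin_range_gen p).ge.trans (Algebra.adjoin_mono ?_))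
  rintro _ ⟨j, rfl⟩
  exact ⟨(j, j + 1), by simp only [polygonCocycle_add_one hprod, hc]⟩

variable {m : Fin (N + 3) → ℕ} (hm : ∀ j, 2 ≤ m j) (hdeg : ∀ e, (p e).natDegree ≤ m e)
  (htop : ∀ e, IsUnit ((p e).coeff (m e))) (h0 : ∀ e, IsUnit ((p e).coeff 0))
include hm hdeg htop h0

theorem finite_of_sum_lt_two (h : ∑ j, (1 - 1 / (m j : ℚ)) < 2) :
    Module.Finite R (PolygonAlgebra p) := by
  obtain ⟨c, hc, hprod⟩ := exists_units h0
  obtain ⟨B, hB⟩ := exists_length_le_of_sum_lt_two hm (polygonMatrix m hm).toCoxeterSystem h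
  exact (isBraidCocycle_polygonCocycle hm hdeg htop h0 hprod fun e ↦
    (hc e).symm ▸ aeval_gen p e).finite_of_length_le (adjoin_range_polygonCocycle hc hprod) hB

theorem free_of_two_le_sum (h : 2 ≤ ∑ j, (1 - 1 / (m j : ℚ))) :
    Module.Free R (PolygonAlgebra p) := by
  obtain ⟨c, hc, hprod⟩ := exists_units h0
  have ht := isBraidCocycle_polygonCocycle hm hdeg htop h0 hprod fun e ↦
    (hc e).symm ▸ aeval_gen p e
  refine ht.free (noTripleDescent_of_two_le_sum hm (polygonMatrix m hm).toCoxeterSystem h)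
    (adjoin_range_polygonCocycle hc hprod) fun C hC ↦ ?_
  have hC_aeval : ∀ e, aeval (C e (e + 1)) (p e) = 0 := fun e ↦ by
    rw [← polygonPolynomials_add_one hm hdeg htop h0 e]
    refine hC.braid (by simp) ?_
    rw [polygonMatrix_add_one]
    exact (two_pos.trans_le (hm e)).ne'
  obtain ⟨φ, hφ⟩ := exists_algHom_gen_eq hC_aeval (prod_ofFn_cocycle hC.self hC.mul)
  refine ⟨φ, fun i j ↦ congr_fun₂ (cocycle_ext (t := fun i j ↦ φ ↑(polygonCocycle c i j)) (t' := C)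
    (fun i ↦ ?_) (fun i j k ↦ ?_) hC.self hC.mul fun e ↦ ?_) i j⟩
  · rw [ht.self, map_one]
  · rw [← map_mul, ht.mul]
  · rw [polygonCocycle_add_one hprod, hc, hφ]

end Flatness

section Specialization

variable {K : Type*} [CommRing K] (θ : R →+* K)

theorem nontrivial_of_eval₂_eq_zero [Nontrivial K] {x : Fin r → K}
    (hx : ∀ j, (p j).eval₂ θ (x j) = 0) (hprod : ∏ j, x j = 1) :
    Nontrivial (PolygonAlgebra p) := by
  let : Algebra R K := θ.toAlgebra
  obtain ⟨φ, -⟩ := exists_algHom_gen_eq (p := p) hx (by rw [List.prod_ofFn, hprod])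
  exact φ.toRingHom.domain_nontrivial

theorem map_norm_pow_eq [Nontrivial R] {A : Type*} [Ring A] [Algebra R A] [Module.Free R A]
    [Module.Finite R A] {p : R[X]} {x : A} (hx : aeval x p = 0) {n : ℕ} {a : K}
    (hp : p.map θ = X ^ n - C a) : θ (Algebra.norm R x) ^ n = a ^ Module.finrank R A := by
  let b := Module.Free.chooseBasis R A
  let Ψ : A →+* Matrix _ _ K := θ.mapMatrix.comp (Algebra.leftMulMatrix b).toRingHom
  have hΨ : (algebraMap K _).comp θ = Ψ.comp (algebraMap R _) := RingHom.ext fun _ ↦ by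
    rw [RingHom.comp_apply, RingHom.comp_apply, RingHom.comp_apply]
    simp [Matrix.algebraMap_eq_diagonal, Matrix.diagonal_map]
  have pow_eq : Ψ x ^ n = algebraMap K _ a := by
    have h := Polynomial.map_aeval_eq_aeval_map hΨ p x
    rw [hx, map_zero, hp] at h
    simpa [sub_eq_zero] using h.symm
  calc θ (Algebra.norm R x) ^ n = (Ψ x ^ n).det := by
        rw [Algebra.norm_eq_matrix_det b, RingHom.map_det, Matrix.det_pow]
        rfl
    _ = a ^ Module.finrank R A := by
        rw [pow_eq, Algebra.algebraMap_eq_smul_one, Matrix.det_smul, Matrix.det_one, mul_one,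
          Module.finrank_eq_card_chooseBasisIndex]

/- The numbers `θ (norm c_j)` multiply to `1`, while each is `s j` to the power of the rank, up to a
root of unity of order dividing `m j`. -/
theorem exists_prod_pow_eq_one [Nontrivial (PolygonAlgebra p)] [Module.Free R (PolygonAlgebra p)]
    [Module.Finite R (PolygonAlgebra p)] {m : Fin r → ℕ} (hm : ∀ j, m j ≠ 0) {s : Fin r → K}
    (hθ : ∀ j, (p j).map θ = X ^ m j - C (s j ^ m j)) :
    ∃ k, k ≠ 0 ∧ (∏ j, s j) ^ k = 1 := by
  have : Nontrivial R := (algebraMap R (PolygonAlgebra p)).domain_nontrivial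
  let n := Module.finrank R (PolygonAlgebra p)
  let ν : PolygonAlgebra p →* K := (θ : R →* K).comp (Algebra.norm R)
  have pow_eq : ∀ j, ν (gen p j) ^ m j = (s j ^ n) ^ m j := fun j ↦
    (map_norm_pow_eq θ (aeval_gen p j) (hθ j)).trans (pow_right_comm _ _ _)
  have prod_eq : ∏ j, ν (gen p j) = 1 := by
    have h := map_list_prod ν (List.ofFn (gen p))
    rwa [prod_ofFn_gen, map_one, List.map_ofFn, List.prod_ofFn, eq_comm] at h
  refine ⟨n * ∏ j, m j, mul_ne_zero ?_ (Finset.prod_ne_zero_iff.mpr fun j _ ↦ hm j), ?_⟩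
  · have := (Module.Free.chooseBasis R (PolygonAlgebra p)).index_nonempty
    exact (Module.finrank_eq_card_chooseBasisIndex R (PolygonAlgebra p)).trans_ne
      Fintype.card_ne_zero
  calc (∏ j, s j) ^ (n * ∏ j, m j) = ∏ j, (s j ^ n) ^ ∏ j, m j := by
        simp only [← pow_mul, Finset.prod_pow]
    _ = ∏ j, ν (gen p j) ^ ∏ j, m j := Finset.prod_congr rfl fun j _ ↦ by
        obtain ⟨q, hq⟩ := Finset.dvd_prod_of_mem m (Finset.mem_univ j)
        rw [hq, pow_mul, ← pow_eq, ← pow_mul]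
    _ = 1 := by rw [Finset.prod_pow, prod_eq, one_pow]

end Specialization

end PolygonAlgebra

end PolygonAlgebra

/-! ### The Hecke algebra over the Laurent polynomial ring -/

section HeckeAlgebra

variable {r : ℕ} {m : Fin r → ℕ}

theorem isUnit_qVar (j : Fin r) (k : Fin (m j)) : IsUnit (qVar j k : HeckeBase r m) := by
  refine .of_mul_eq_one (AddMonoidAlgebra.single (Finsupp.single ⟨j, k⟩ (-1)) 1) ?_
  rw [qVar, AddMonoidAlgebra.single_mul_single, ← Finsupp.single_add]
  simp [AddMonoidAlgebra.one_def]

/-- The root `e^{2πik/m_j} q_{jk}` of the relation satisfied by `c_j`; the index `k` is shifted by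
one because `Fin (m j)` starts at `0`. -/
def heckeRoot (j : Fin r) (k : Fin (m j)) : HeckeBase r m :=
  Complex.exp (2 * Real.pi * Complex.I * ((k : ℕ) + 1) / (m j)) • qVar j k

theorem isUnit_heckeRoot (j : Fin r) (k : Fin (m j)) : IsUnit (heckeRoot j k : HeckeBase r m) := by
  rw [heckeRoot, Algebra.smul_def]
  exact ((Complex.exp_ne_zero _).isUnit.map _).mul (isUnit_qVar j k)

variable (m) in
/-- The polynomial `∏ₖ (X - e^{2πik/m_j} q_{jk})` of which `c_j` is a root. -/
def heckePolynomial (j : Fin r) : (HeckeBase r m)[X] := ∏ k, (X - C (heckeRoot j k))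

theorem natDegree_heckePolynomial (j : Fin r) : (heckePolynomial m j).natDegree = m j := by
  simp [heckePolynomial, natDegree_prod_of_monic, monic_X_sub_C]

theorem monic_heckePolynomial (j : Fin r) : (heckePolynomial m j).Monic :=
  monic_prod_of_monic _ _ fun _ _ ↦ monic_X_sub_C _

theorem isUnit_coeff_heckePolynomial_top (j : Fin r) :
    IsUnit ((heckePolynomial m j).coeff (m j)) := by
  have h := (monic_heckePolynomial (m := m) j).coeff_natDegree
  rw [natDegree_heckePolynomial] at h
  exact h ▸ isUnit_one

theorem isUnit_coeff_heckePolynomial_zero (j : Fin r) :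
    IsUnit ((heckePolynomial m j).coeff 0) := by
  rw [heckePolynomial, coeff_zero_prod, IsUnit.prod_univ_iff]
  simp [isUnit_heckeRoot]

theorem heckeRel_eq_polygonRel : heckeRel r m = polygonRel (heckePolynomial m) := by
  have haeval : ∀ j, aeval (FreeAlgebra.ι (HeckeBase r m) j) (heckePolynomial m j) =
      (List.ofFn fun k : Fin (m j) ↦
        FreeAlgebra.ι (HeckeBase r m) j - algebraMap _ _ (heckeRoot j k)).prod := fun j ↦ by
    rw [heckePolynomial, ← List.prod_ofFn, map_list_prod, List.map_ofFn]
    simp [Function.comp_def]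
  ext a b
  simp only [heckeRel, polygonRel, haeval, heckeRoot]

theorem exists_ringHom_heckeRoot_eq (t : Fin r → ℂˣ) : ∃ θ : HeckeBase r m →+* ℂ, ∀ j k,
    θ (heckeRoot j k) = Complex.exp (2 * Real.pi * Complex.I * ((k : ℕ) + 1) / (m j)) * t j := by
  let f : ((Σ j : Fin r, Fin (m j)) →₀ ℤ) →+ Additive ℂˣ :=
    Finsupp.liftAddHom fun s ↦ zmultiplesHom (Additive ℂˣ) (Additive.ofMul (t s.1))
  let θ : HeckeBase r m →ₐ[ℂ] ℂ :=
    AddMonoidAlgebra.lift ℂ ℂ _ ((Units.coeHom ℂ).comp (AddMonoidHom.toMultiplicativeLeft f))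
  refine ⟨θ, fun j k ↦ ?_⟩
  have hq : θ (qVar j k) = t j := by simp [θ, qVar, f]
  rw [RingHom.coe_coe, heckeRoot, map_smul, hq, smul_eq_mul]

theorem exists_ringHom_map_heckePolynomial_eq (hm : ∀ j, m j ≠ 0) (t : Fin r → ℂˣ) :
    ∃ θ : HeckeBase r m →+* ℂ,
      ∀ j, (heckePolynomial m j).map θ = X ^ m j - C ((t j : ℂ) ^ m j) := by
  obtain ⟨θ, hθ⟩ := exists_ringHom_heckeRoot_eq (m := m) t
  refine ⟨θ, fun j ↦ ?_⟩
  have hζ := Complex.isPrimitiveRoot_exp (m j) (hm j)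
  rw [X_pow_sub_C_eq_prod hζ (Nat.pos_of_ne_zero (hm j))
    (α := Complex.exp (2 * Real.pi * Complex.I / m j) * t j)
    (by rw [mul_pow, hζ.pow_eq_one, one_mul]), heckePolynomial, Polynomial.map_prod,
    Finset.prod_range]
  refine Finset.prod_congr rfl fun k _ ↦ ?_
  rw [Polynomial.map_sub, map_X, map_C, hθ, ← mul_assoc, ← pow_succ, ← Complex.exp_nat_mul]
  congr 4
  push_cast
  ring

theorem nontrivial_polygonAlgebra_heckePolynomial (hm : ∀ j, m j ≠ 0) :
    Nontrivial (PolygonAlgebra (heckePolynomial m)) := by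
  obtain ⟨θ, hθ⟩ := exists_ringHom_map_heckePolynomial_eq hm fun _ ↦ 1
  refine PolygonAlgebra.nontrivial_of_eval₂_eq_zero θ (x := fun _ ↦ 1) (fun j ↦ ?_) (by simp)
  simp [← eval_map, hθ]

/- Specialize so that `c_1, …, c_r` become roots of `X ^ m_j - s_j ^ m_j` with `∏ s_j = 2`, which is
not a root of unity. -/
theorem not_free_polygonAlgebra_heckePolynomial [NeZero r] (hm : ∀ j, m j ≠ 0)
    [Module.Finite (HeckeBase r m) (PolygonAlgebra (heckePolynomial m))] :
    ¬ Module.Free (HeckeBase r m) (PolygonAlgebra (heckePolynomial m)) := by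
  intro _
  have := nontrivial_polygonAlgebra_heckePolynomial hm
  let t : Fin r → ℂˣ := Pi.mulSingle 0 (Units.mk0 2 two_ne_zero)
  have ht : ∏ j, (t j : ℂ) = 2 := by
    rw [← Units.coe_prod, Finset.prod_pi_mulSingle']
    simp
  obtain ⟨θ, hθ⟩ := exists_ringHom_map_heckePolynomial_eq hm t
  obtain ⟨k, hk, h⟩ := PolygonAlgebra.exists_prod_pow_eq_one θ hm hθ
  rw [ht] at h
  exact (one_lt_pow₀ one_lt_two hk).ne' (by exact_mod_cast h : (2 : ℕ) ^ k = 1)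

end HeckeAlgebra

end HeckeFuchsian

/-- **Etingof–Rains: algebraic flatness of Hecke algebras of polygonal Fuchsian groups.**
Let `r ≥ 3` and `m_j ≥ 2`.  The Hecke algebra `H` of the Fuchsian group `Γ(m₁,…,m_r)` —
the quotient of the free `R`-algebra on `c₁,…,c_r` (over the Laurent polynomial ring
`R = ℂ[q_{jk}^{±1}]`) by the two-sided ideal generated by the relations
`∏_{k=1}^{m_j}(c_j − e^{2πik/m_j} q_{jk}) = 0` and `c₁⋯c_r = 1` — is free as a left
`R`-module if and only if `Σ_j (1 − 1/m_j) ≥ 2`. -/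
theorem hecke_fuchsian_flat_iff (r : ℕ) (hr : 3 ≤ r) (m : Fin r → ℕ)
    (hm : ∀ j, 2 ≤ m j) :
    Module.Free (HeckeBase r m) (RingQuot (heckeRel r m)) ↔
      (2 : ℚ) ≤ ∑ j, (1 - 1 / (m j : ℚ)) := by
  open HeckeFuchsian in
  obtain ⟨N, rfl⟩ := Nat.exists_eq_add_of_le' hr
  rw [heckeRel_eq_polygonRel]
  have hdeg := fun j ↦ (natDegree_heckePolynomial (m := m) j).le
  have htop := isUnit_coeff_heckePolynomial_top (m := m)
  have h0 := isUnit_coeff_heckePolynomial_zero (m := m)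
  refine ⟨fun hfree ↦ not_lt.mp fun hlt ↦ ?_, PolygonAlgebra.free_of_two_le_sum hm hdeg htop h0⟩
  have := PolygonAlgebra.finite_of_sum_lt_two hm hdeg htop h0 hlt
  exact not_free_polygonAlgebra_heckePolynomial (fun j ↦ (two_pos.trans_le (hm j)).ne') hfree

end
end
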